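/- arXiv:1405.2999 — 3 statements merged into one kernel-verified Lean document; each statement's English description precedes it below -/
import Mathlib

section
/- Let n ≥ 2, M ≥ 1, and let A be a constant complex coefficient tensor satisfying the Legendre–Hadamard ellipticity condition, with associated system L_A. If P : ℝ^{n-1} → ℂ^{M×M} and Q : ℝ^{n-1} → ℂ^{M×M} are both Poisson kernels for L_A in ℝⁿ₊, then P = Q almost everywhere on ℝ^{n-1}. -/
open MeasureTheory Filter Metric Real
open scoped ENNReal NNReal Topology

noncomputable section

/-- The point `(x', t)` of `ℝⁿ`, where `x' ∈ ℝ^{n-1}` and `t ∈ ℝ` is the last coordinate. -/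
def toUp {n : ℕ} (x' : EuclideanSpace ℝ (Fin (n - 1))) (t : ℝ) :
    EuclideanSpace ℝ (Fin n) :=
  (WithLp.equiv 2 (Fin n → ℝ)).symm
    (fun i => if h : (i : ℕ) < n - 1 then x' ⟨i, h⟩ else t)

/-- The first `n-1` coordinates of a point of `ℝⁿ`. -/
def xinit {n : ℕ} (x : EuclideanSpace ℝ (Fin n)) : EuclideanSpace ℝ (Fin (n - 1)) :=
  (WithLp.equiv 2 (Fin (n - 1) → ℝ)).symm
    (fun i => x ⟨(i : ℕ), Nat.lt_of_lt_of_le i.isLt (Nat.sub_le n 1)⟩)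

/-- The last coordinate of a point of `ℝⁿ`. -/
def xlast {n : ℕ} (x : EuclideanSpace ℝ (Fin n)) : ℝ :=
  if h : 0 < n then x ⟨n - 1, by omega⟩ else 0

/-- The upper half space `ℝⁿ₊`. -/
def upperHalfSpace (n : ℕ) : Set (EuclideanSpace ℝ (Fin n)) := {x | 0 < xlast x}

/-- The embedding `Fin (n-1) → Fin n`. -/
def finUp {n : ℕ} (i : Fin (n - 1)) : Fin n :=
  ⟨(i : ℕ), Nat.lt_of_lt_of_le i.isLt (Nat.sub_le n 1)⟩

/-- The last index of `Fin n`. -/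
def lastIdx (n : ℕ) (h : 0 < n) : Fin n := ⟨n - 1, by omega⟩

/-- Partial derivative along the `i`-th coordinate direction. -/
def pd {n : ℕ} {F : Type*} [NormedAddCommGroup F] [NormedSpace ℝ F]
    (i : Fin n) (u : EuclideanSpace ℝ (Fin n) → F) (x : EuclideanSpace ℝ (Fin n)) : F :=
  fderiv ℝ u x (EuclideanSpace.single i 1)

/-- Iterated mixed partial derivative along the string of coordinate directions `d`. -/
def mpd {n : ℕ} {F : Type*} [NormedAddCommGroup F] [NormedSpace ℝ F]
    (k : ℕ) (d : Fin k → Fin n) (u : EuclideanSpace ℝ (Fin n) → F)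
    (x : EuclideanSpace ℝ (Fin n)) : F :=
  iteratedFDeriv ℝ k u x (fun i => EuclideanSpace.single (d i) 1)

/-- The nontangential approach filter for the cone `Γ_κ(x')` (points written as `(y', t)`). -/
def ntFilter {n : ℕ} (κ : ℝ) (x' : EuclideanSpace ℝ (Fin (n - 1))) :
    Filter ((EuclideanSpace ℝ (Fin (n - 1))) × ℝ) :=
  (nhds (x', (0 : ℝ))) ⊓ Filter.principal {q | 0 < q.2 ∧ dist x' q.1 < κ * q.2}

/-- The nontangential maximal function (aperture `κ`) of `u : ℝⁿ → F`,
as an `ℝ≥0∞`-valued function on `ℝ^{n-1}`. -/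
def ntMax {n : ℕ} {F : Type*} [NormedAddCommGroup F] (κ : ℝ)
    (u : EuclideanSpace ℝ (Fin n) → F) (x' : EuclideanSpace ℝ (Fin (n - 1))) : ℝ≥0∞ :=
  ⨆ (y' : EuclideanSpace ℝ (Fin (n - 1))) (t : ℝ) (_ : 0 < t ∧ dist x' y' < κ * t),
    (‖u (toUp y' t)‖₊ : ℝ≥0∞)

/-- The `L^p` norm (`p ∈ (0,∞]`) of an `ℝ≥0∞`-valued function on `ℝ^m`. -/
def lpNormE {m : ℕ} (g : EuclideanSpace ℝ (Fin m) → ℝ≥0∞) (p : ℝ≥0∞) : ℝ≥0∞ :=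
  if p = ∞ then essSup g volume
  else (∫⁻ x', (g x') ^ p.toReal) ^ (1 / p.toReal)

/-- The Hardy–Littlewood maximal function. -/
def hlMax {m : ℕ} {F : Type*} [NormedAddCommGroup F]
    (f : EuclideanSpace ℝ (Fin m) → F) (x' : EuclideanSpace ℝ (Fin m)) : ℝ≥0∞ :=
  ⨆ (r : ℝ) (_ : 0 < r),
    (volume (ball x' r))⁻¹ * ∫⁻ y' in ball x' r, (‖f y'‖₊ : ℝ≥0∞)

/-- The Legendre-Hadamard ellipticity condition for the coefficient tensor `A`,
where `A r s α β` stands for `a^{αβ}_{rs}`. -/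
def LegendreHadamard {n M : ℕ} (A : Fin n → Fin n → Fin M → Fin M → ℂ) : Prop :=
  ∃ κ₀ : ℝ, 0 < κ₀ ∧ ∀ (ξ : Fin n → ℝ) (η : Fin M → ℂ),
    κ₀ * (∑ r, ξ r ^ 2) * (∑ a, ‖η a‖ ^ 2) ≤
      (∑ r, ∑ s, ∑ a, ∑ b, A r s a b * ξ r * ξ s * (starRingEnd ℂ) (η a) * η b).re

/-- `g` is the weak (distributional) mixed partial derivative of `f` of order `k`
along the string of directions `d`. -/
def IsWeakDeriv {m : ℕ} {F : Type*} [NormedAddCommGroup F] [NormedSpace ℝ F]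
    (k : ℕ) (d : Fin k → Fin m) (f g : EuclideanSpace ℝ (Fin m) → F) : Prop :=
  ∀ φ : EuclideanSpace ℝ (Fin m) → ℝ, ContDiff ℝ (⊤ : ℕ∞) φ → HasCompactSupport φ →
    ∫ x', (mpd k d φ x') • f x' = ((-1 : ℝ) ^ k) • ∫ x', φ x' • g x'

/-- The surface area `ω_{n-1}` of the unit sphere `S^{n-1}` in `ℝⁿ`. -/
def sphereArea (n : ℕ) : ℝ :=
  (n : ℝ) * (volume (ball (0 : EuclideanSpace ℝ (Fin n)) (1 : ℝ))).toReal

/-- The parabolic dilation `F_t(x') = t^{1-n} F(x'/t)` of a matrix-valued kernel. -/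
def matDil {n M : ℕ} (P : EuclideanSpace ℝ (Fin (n - 1)) → Matrix (Fin M) (Fin M) ℂ)
    (t : ℝ) (x' : EuclideanSpace ℝ (Fin (n - 1))) : Matrix (Fin M) (Fin M) ℂ :=
  (t ^ ((1 : ℤ) - (n : ℤ))) • P (t⁻¹ • x')

/-- The convolution `(P_t * f)(x')` of a dilated matrix kernel with a `ℂ^M`-valued function. -/
def matConv {n M : ℕ} (P : EuclideanSpace ℝ (Fin (n - 1)) → Matrix (Fin M) (Fin M) ℂ)
    (f : EuclideanSpace ℝ (Fin (n - 1)) → EuclideanSpace ℂ (Fin M))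
    (t : ℝ) (x' : EuclideanSpace ℝ (Fin (n - 1))) : EuclideanSpace ℂ (Fin M) :=
  (WithLp.equiv 2 (Fin M → ℂ)).symm
    (fun γ => ∫ y', ∑ α, matDil P t (x' - y') γ α * f y' α)

/-- A Poisson kernel for the system determined by the coefficient tensor `A`
(`A r s α β` stands for `a^{αβ}_{rs}`) in the upper half space: decay,
normalization, and the fact that each column of the dilated kernel
`K(x',t) = t^{1-n} P(x'/t)` is a distributional null solution of `L_A` in `ℝⁿ₊`. -/
def IsPoissonKernelFor (n M : ℕ) (A : Fin n → Fin n → Fin M → Fin M → ℂ)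
    (P : EuclideanSpace ℝ (Fin (n - 1)) → Matrix (Fin M) (Fin M) ℂ) : Prop :=
  (∀ α β : Fin M, Measurable fun x' => P x' α β) ∧
  (∃ C : ℝ, 0 < C ∧ ∀ x' : EuclideanSpace ℝ (Fin (n - 1)), ∀ α β : Fin M,
      ‖P x' α β‖ ≤ C * (1 + ‖x'‖ ^ 2) ^ (-(n : ℝ) / 2)) ∧
  (∀ α β : Fin M,
      (∫ x' : EuclideanSpace ℝ (Fin (n - 1)), P x' α β) = if α = β then 1 else 0) ∧
  (∀ φ : EuclideanSpace ℝ (Fin n) → EuclideanSpace ℂ (Fin M),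
      ContDiff ℝ (⊤ : ℕ∞) φ → HasCompactSupport φ → tsupport φ ⊆ upperHalfSpace n →
      ∀ β : Fin M,
        (∫ x in upperHalfSpace n,
            ∑ γ, ∑ α, ∑ r, ∑ s,
              matDil P (xlast x) (xinit x) γ β * A r s α γ *
                pd r (pd s (fun y => φ y α)) x) = 0)

section OdePart
set_option linter.unusedSectionVars false
open scoped FourierTransform SchwartzMap ContDiff

variable {H : Type*} [NormedAddCommGroup H] [InnerProductSpace ℂ H] [CompleteSpace H]

lemma fourier_clm_comp (a : H →L[ℂ] H) (f : 𝓢(ℝ, H)) (x : ℝ) :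
    (𝓕 (SchwartzMap.postcompCLM a f)) x = a ((𝓕 f) x) := by
  rw [SchwartzMap.fourier_coe, SchwartzMap.fourier_coe, Real.fourier_eq, Real.fourier_eq,
    ← ContinuousLinearMap.integral_comp_comm]
  · congr 1
    ext v
    simp [Circle.smul_def]
  · exact (Real.fourierIntegral_convergent_iff (μ := volume) (f := f) x).2 f.integrable

lemma fourier_schwartz_deriv (f : 𝓢(ℝ, H)) (x : ℝ) :
    (𝓕 (SchwartzMap.derivCLM ℂ H f)) x = (2 * π * Complex.I * x) • (𝓕 f) x := by
  rw [SchwartzMap.fourier_coe, SchwartzMap.fourier_coe]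
  have : (⇑(SchwartzMap.derivCLM ℂ H f)) = deriv f := by
    ext x; exact SchwartzMap.derivCLM_apply ..
  have h2 := (SchwartzMap.derivCLM ℂ H f).integrable (μ := volume)
  rw [this] at h2 ⊢
  rw [Real.fourier_deriv f.integrable f.differentiable h2]

lemma schwartz_inner_integrable (f g : 𝓢(ℝ, H)) :
    Integrable (fun x => inner ℂ (f x) (g x)) := by
  have h1 : Integrable (fun x => ‖f x‖ * ‖g x‖) :=
    MemLp.integrable_mul (p := 2) (q := 2) (f.memLp 2 volume).norm (g.memLp 2 volume).norm
  refine h1.mono' ?_ (Eventually.of_forall fun x => norm_inner_le_norm _ _)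
  exact (f.continuous.inner g.continuous).aestronglyMeasurable

lemma garding (a b c : H →L[ℂ] H) (κ : ℝ)
    (hell : ∀ (τ : ℝ) (η : H), κ * (1 + 4 * π ^ 2 * τ ^ 2) * ‖η‖ ^ 2 ≤
      -(inner ℂ η (((2 * π * Complex.I * τ) * (2 * π * Complex.I * τ)) • a η +
        (2 * π * Complex.I * τ) • b η + c η)).re)
    (w : 𝓢(ℝ, H)) :
    κ * (∫ t, ‖w t‖ ^ 2) + κ * (∫ t, ‖deriv w t‖ ^ 2) ≤
      -∫ t, (inner ℂ (w t) (a (deriv (deriv w) t) + b (deriv w t) + c (w t))).re := by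
  set w1 := SchwartzMap.derivCLM ℂ H w with hw1
  set w2 := SchwartzMap.derivCLM ℂ H w1 with hw2
  have e1 : ⇑w1 = deriv w := by ext x; exact SchwartzMap.derivCLM_apply ..
  have e2 : ⇑w2 = deriv (deriv w) := by
    rw [← e1]; ext x; exact SchwartzMap.derivCLM_apply ..
  set F : 𝓢(ℝ, H) := SchwartzMap.postcompCLM a w2 + SchwartzMap.postcompCLM b w1 +
    SchwartzMap.postcompCLM c w with hF
  have hFt : ∀ t, F t = a (deriv (deriv w) t) + b (deriv w t) + c (w t) := by
    intro t
    rw [← e2, ← e1]; rfl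
  have hFF : ∀ τ : ℝ, (𝓕 F) τ = ((2 * π * Complex.I * τ) * (2 * π * Complex.I * τ)) • a ((𝓕 w) τ) +
        (2 * π * Complex.I * τ) • b ((𝓕 w) τ) + c ((𝓕 w) τ) := by
    intro τ
    have : 𝓕 F = 𝓕 (SchwartzMap.postcompCLM a w2) + 𝓕 (SchwartzMap.postcompCLM b w1) +
      𝓕 (SchwartzMap.postcompCLM c w) := by
        rw [hF, FourierTransform.fourier_add, FourierTransform.fourier_add]
    rw [this]
    change (𝓕 (SchwartzMap.postcompCLM a w2)) τ + (𝓕 (SchwartzMap.postcompCLM b w1)) τ +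
      (𝓕 (SchwartzMap.postcompCLM c w)) τ = _
    rw [fourier_clm_comp, fourier_clm_comp, fourier_clm_comp, hw2, fourier_schwartz_deriv, hw1,
      fourier_schwartz_deriv, smul_smul, map_smul, map_smul]
  have i1 : (∫ t, (inner ℂ (w t) (a (deriv (deriv w) t) + b (deriv w t) + c (w t))).re)
      = ∫ τ, (inner ℂ ((𝓕 w) τ) ((𝓕 F) τ)).re := by
    have h1 := SchwartzMap.integral_inner_fourier_fourier w F
    have h2 := integral_re (𝕜 := ℂ) (schwartz_inner_integrable w F)
    have h3 := integral_re (𝕜 := ℂ) (schwartz_inner_integrable (𝓕 w) (𝓕 F))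
    simp only [RCLike.re_eq_complex_re] at h2 h3
    simp_rw [← hFt]
    rw [h2, h3, h1]
  have i2 := SchwartzMap.integral_norm_sq_fourier w
  have i3 := SchwartzMap.integral_norm_sq_fourier w1
  have j1 : ∀ f : 𝓢(ℝ, H), Integrable (fun t => ‖f t‖ ^ 2) := fun f =>
    (f.memLp 2 volume).integrable_norm_pow (by norm_num)
  rw [i1, ← e1, ← i2, ← i3, ← integral_const_mul, ← integral_const_mul, ← integral_neg,
    ← integral_add ((j1 _).const_mul _) ((j1 _).const_mul _)]
  apply integral_mono (((j1 _).const_mul _).add ((j1 _).const_mul _))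
    (schwartz_inner_integrable (𝓕 w) (𝓕 F)).re.neg
  intro τ
  have := hell τ ((𝓕 w) τ)
  rw [← hFF] at this
  refine le_trans (le_of_eq ?_) this
  simp only [hw1, Pi.add_apply]
  rw [fourier_schwartz_deriv, norm_smul]
  simp
  rw [abs_of_pos Real.pi_pos]
  have := sq_abs τ
  linear_combination 4 * κ * ‖(𝓕 w) τ‖ ^ 2 * π ^ 2 * this

lemma energy_pointwise (a b c : H →L[ℂ] H) (κ : ℝ) (hκ : 0 < κ)
    (x x1 x2 : ℝ) (h h1 h2 : H) (hode : x ≠ 0 → a h2 + b h1 + c h = 0) :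
    -(inner ℂ (x • h) (a (x • h2 + (2 * x1) • h1 + x2 • h) + b (x • h1 + x1 • h) + c (x • h))).re ≤
      κ / 2 * ‖x • h1 + x1 • h‖ ^ 2 + κ / 2 * ‖x • h‖ ^ 2 +
        (3 * ‖a‖ + 2 * ‖a‖ ^ 2 / κ + ‖b‖ ^ 2 / (2 * κ)) * ((|x * x2| + x1 ^ 2) * ‖h‖ ^ 2) := by
  by_cases hx : x = 0
  · subst hx
    simp only [zero_smul, inner_zero_left, Complex.zero_re, neg_zero]
    positivity
  have ho := hode hx
  set w1 := x • h1 + x1 • h with hw1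
  have key : a (x • h2 + (2 * x1) • h1 + x2 • h) + b w1 + c (x • h)
      = (2 * x1) • a h1 + x2 • a h + x1 • b h := by
    have : x • (a h2 + b h1 + c h) = 0 := by rw [ho, smul_zero]
    rw [hw1]
    simp only [map_add, ContinuousLinearMap.map_smul_of_tower, smul_add] at this ⊢
    refine eq_of_sub_eq_zero (Eq.trans ?_ this)
    module
  rw [key]
  have e : inner ℂ (x • h) ((2 * x1) • a h1 + x2 • a h + x1 • b h) =
      inner ℂ ((2 * x1) • h) (a w1) - inner ℂ ((2 * x1) • h) (a (x1 • h)) +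
       inner ℂ ((x * x2) • h) (a h) + inner ℂ (x • h) (b (x1 • h)) := by
    rw [hw1]
    simp only [map_add, ContinuousLinearMap.map_smul_of_tower, inner_add_right,
      inner_smul_left_eq_smul, inner_smul_right_eq_smul, Complex.real_smul]
    push_cast
    ring
  rw [e]
  have n1 := (Complex.abs_re_le_norm _).trans
    ((norm_inner_le_norm (𝕜 := ℂ) ((2 * x1) • h) (a w1)).trans
      (mul_le_mul_of_nonneg_left (a.le_opNorm w1) (norm_nonneg _)))
  have n2 := (Complex.abs_re_le_norm _).trans
    ((norm_inner_le_norm (𝕜 := ℂ) ((2 * x1) • h) (a (x1 • h))).trans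
      (mul_le_mul_of_nonneg_left (a.le_opNorm _) (norm_nonneg _)))
  have n3 := (Complex.abs_re_le_norm _).trans
    ((norm_inner_le_norm (𝕜 := ℂ) ((x * x2) • h) (a h)).trans
      (mul_le_mul_of_nonneg_left (a.le_opNorm _) (norm_nonneg _)))
  have n4 := (Complex.abs_re_le_norm _).trans
    ((norm_inner_le_norm (𝕜 := ℂ) (x • h) (b (x1 • h))).trans
      (mul_le_mul_of_nonneg_left (b.le_opNorm _) (norm_nonneg _)))
  simp only [Complex.add_re, Complex.sub_re]
  rw [norm_smul (2 * x1), norm_mul] at n1 n2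
  rw [norm_smul x1] at n2 n4
  rw [norm_smul (x * x2)] at n3
  simp only [Real.norm_eq_abs, abs_two] at n1 n2 n3 n4
  have sq : |x1| ^ 2 = x1 ^ 2 := sq_abs x1
  have m1 : 2 * |x1| * ‖h‖ * (‖a‖ * ‖w1‖) ≤ κ / 2 * ‖w1‖ ^ 2 + 2 * ‖a‖ ^ 2 / κ * (x1 ^ 2 * ‖h‖ ^ 2) := by
    rw [← sq]
    have : κ / 2 * ‖w1‖ ^ 2 + 2 * ‖a‖ ^ 2 / κ * (|x1| ^ 2 * ‖h‖ ^ 2) - 2 * |x1| * ‖h‖ * (‖a‖ * ‖w1‖)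
      = (κ * ‖w1‖ - 2 * ‖a‖ * |x1| * ‖h‖) ^ 2 / (2 * κ) := by
      field_simp
      ring
    have : 0 ≤ (κ * ‖w1‖ - 2 * ‖a‖ * |x1| * ‖h‖) ^ 2 / (2 * κ) := by positivity
    linarith
  have m4 : ‖x • h‖ * (‖b‖ * (|x1| * ‖h‖)) ≤ κ / 2 * ‖x • h‖ ^ 2 + ‖b‖ ^ 2 / (2 * κ) * (x1 ^ 2 * ‖h‖ ^ 2) := by
    rw [← sq]
    have : κ / 2 * ‖x • h‖ ^ 2 + ‖b‖ ^ 2 / (2 * κ) * (|x1| ^ 2 * ‖h‖ ^ 2) - ‖x • h‖ * (‖b‖ * (|x1| * ‖h‖))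
      = (κ * ‖x • h‖ - ‖b‖ * |x1| * ‖h‖) ^ 2 / (2 * κ) := by
      field_simp
      ring
    have : 0 ≤ (κ * ‖x • h‖ - ‖b‖ * |x1| * ‖h‖) ^ 2 / (2 * κ) := by positivity
    linarith
  have m2 : 2 * |x1| * ‖h‖ * (‖a‖ * (|x1| * ‖h‖)) = 2 * ‖a‖ * (x1 ^ 2 * ‖h‖ ^ 2) := by
    rw [← sq]; ring
  have q1 : 0 ≤ (2 * ‖a‖ ^ 2 / κ + ‖b‖ ^ 2 / (2 * κ)) * (|x * x2| * ‖h‖ ^ 2) := by positivity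
  have q2 : 0 ≤ ‖a‖ * (|x * x2| * ‖h‖ ^ 2) := by positivity
  have q3 : 0 ≤ ‖a‖ * (x1 ^ 2 * ‖h‖ ^ 2) := by positivity
  have p1 := neg_le_of_abs_le n1
  have p2 := le_of_abs_le n2
  have p3 := neg_le_of_abs_le n3
  have p4 := neg_le_of_abs_le n4
  linarith

lemma energy (a b c : H →L[ℂ] H) (κ : ℝ) (hκ : 0 < κ)
    (hell : ∀ (τ : ℝ) (η : H), κ * (1 + 4 * π ^ 2 * τ ^ 2) * ‖η‖ ^ 2 ≤
      -(inner ℂ η (((2 * π * Complex.I * τ) * (2 * π * Complex.I * τ)) • a η +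
        (2 * π * Complex.I * τ) • b η + c η)).re)
    (h : ℝ → H) (hh : ContDiff ℝ ∞ h) (χ : ℝ → ℝ) (hχ : ContDiff ℝ ∞ χ)
    (hχc : HasCompactSupport χ)
    (hode : ∀ t, χ t ≠ 0 → a (deriv (deriv h) t) + b (deriv h t) + c (h t) = 0) :
    κ / 2 * (∫ t, χ t ^ 2 * ‖h t‖ ^ 2) ≤
      (3 * ‖a‖ + 2 * ‖a‖ ^ 2 / κ + ‖b‖ ^ 2 / (2 * κ)) *
        ∫ t, (|χ t * deriv (deriv χ) t| + deriv χ t ^ 2) * ‖h t‖ ^ 2 := by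
  have hw : ContDiff ℝ ∞ (fun t => χ t • h t) := hχ.smul hh
  have hwc : HasCompactSupport (fun t => χ t • h t) := hχc.smul_right
  set w : 𝓢(ℝ, H) := hwc.toSchwartzMap hw with hwdef
  have ew : ⇑w = fun t => χ t • h t := rfl
  have hχ1 : ContDiff ℝ ∞ (deriv χ) := ((contDiff_infty_iff_deriv).1 hχ).2
  have hχ2 : ContDiff ℝ ∞ (deriv (deriv χ)) := ((contDiff_infty_iff_deriv).1 hχ1).2
  have hh1 : ContDiff ℝ ∞ (deriv h) := ((contDiff_infty_iff_deriv).1 hh).2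
  have dχ : ∀ t, HasDerivAt χ (deriv χ t) t := fun t =>
    (hχ.differentiable (by simp) t).hasDerivAt
  have dχ1 : ∀ t, HasDerivAt (deriv χ) (deriv (deriv χ) t) t := fun t =>
    (hχ1.differentiable (by simp) t).hasDerivAt
  have dh : ∀ t, HasDerivAt h (deriv h t) t := fun t =>
    (hh.differentiable (by simp) t).hasDerivAt
  have dh1 : ∀ t, HasDerivAt (deriv h) (deriv (deriv h) t) t := fun t =>
    (hh1.differentiable (by simp) t).hasDerivAt
  have ew1 : deriv w = fun t => χ t • deriv h t + deriv χ t • h t := by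
    ext t
    rw [ew]
    exact ((dχ t).smul (dh t)).deriv
  have ew2 : deriv (deriv w) = fun t => χ t • deriv (deriv h) t + (2 * deriv χ t) • deriv h t +
      deriv (deriv χ) t • h t := by
    ext t
    rw [ew1]
    refine (((dχ t).smul (dh1 t)).add ((dχ1 t).smul (dh t))).deriv.trans ?_
    rw [two_mul, add_smul]
    abel
  have G := garding a b c κ hell w
  set C := (3 * ‖a‖ + 2 * ‖a‖ ^ 2 / κ + ‖b‖ ^ 2 / (2 * κ)) with hC
  set w1 := SchwartzMap.derivCLM ℂ H w with hw1
  set w2 := SchwartzMap.derivCLM ℂ H w1 with hw2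
  have e1 : ⇑w1 = deriv w := by ext x; exact SchwartzMap.derivCLM_apply ..
  have e2 : ⇑w2 = deriv (deriv w) := by
    rw [← e1]; ext x; exact SchwartzMap.derivCLM_apply ..
  have j1 : ∀ f : 𝓢(ℝ, H), Integrable (fun t => ‖f t‖ ^ 2) := fun f =>
    (f.memLp 2 volume).integrable_norm_pow (by norm_num)
  have jL : Integrable (fun t => (inner ℂ (w t) (a (deriv (deriv w) t) + b (deriv w t) + c (w t))).re) := by
    rw [← e2, ← e1]
    exact (schwartz_inner_integrable w (SchwartzMap.postcompCLM a w2 + SchwartzMap.postcompCLM b w1 +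
    SchwartzMap.postcompCLM c w)).re
  have jR : Integrable (fun t => (|χ t * deriv (deriv χ) t| + deriv χ t ^ 2) * ‖h t‖ ^ 2) := by
    apply Continuous.integrable_of_hasCompactSupport
    · have := hχ.continuous
      have := hχ1.continuous
      have := hχ2.continuous
      have := hh.continuous
      fun_prop
    · apply HasCompactSupport.mul_right
      apply HasCompactSupport.add
      · exact (hχc.mul_right).abs
      · simp_rw [pow_two]
        exact (hχc.deriv).mul_right
  have I : -∫ t, (inner ℂ (w t) (a (deriv (deriv w) t) + b (deriv w t) + c (w t))).re ≤
     κ / 2 * (∫ t, ‖deriv w t‖ ^ 2) + κ / 2 * (∫ t, ‖w t‖ ^ 2) +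
       C * ∫ t, (|χ t * deriv (deriv χ) t| + deriv χ t ^ 2) * ‖h t‖ ^ 2 := by
    have k1 : Integrable (fun t => κ / 2 * ‖deriv w t‖ ^ 2) := by
      rw [← e1]; exact (j1 w1).const_mul _
    have k2 : Integrable (fun t => κ / 2 * ‖w t‖ ^ 2) := (j1 w).const_mul _
    have k12 : Integrable (fun t => κ / 2 * ‖deriv w t‖ ^ 2 + κ / 2 * ‖w t‖ ^ 2) := k1.add k2
    rw [← integral_const_mul, ← integral_const_mul, ← integral_const_mul, ← integral_neg,
      ← integral_add k1 k2, ← integral_add k12 (jR.const_mul _)]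
    apply integral_mono jL.neg (k12.add (jR.const_mul _))
    intro t
    have := energy_pointwise a b c κ hκ (χ t) (deriv χ t) (deriv (deriv χ) t) (h t) (deriv h t)
      (deriv (deriv h) t) (hode t)
    simp only [ew2, Pi.add_apply, Pi.neg_apply]
    simp only [ew1]
    exact this
  have J0 : 0 ≤ ∫ t, ‖deriv w t‖ ^ 2 := integral_nonneg fun t => by positivity
  have J1 : (∫ t, χ t ^ 2 * ‖h t‖ ^ 2) = ∫ t, ‖w t‖ ^ 2 := by
    congr 1; ext t
    rw [ew, norm_smul, mul_pow, Real.norm_eq_abs, sq_abs]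
  rw [J1]
  nlinarith

end OdePart
section CutoffPart
open scoped ContDiff

lemma step_fun : ∃ (s : ℝ → ℝ) (B : ℝ), 0 < B ∧ ContDiff ℝ ∞ s ∧ (∀ x, 0 ≤ s x ∧ s x ≤ 1) ∧
    (∀ x, x < 1 → s x = 0) ∧ (∀ x, 2 ≤ x → s x = 1) ∧
    (∀ x, |deriv s x| ≤ B * (Set.Icc (1 : ℝ) 2).indicator 1 x) ∧
    (∀ x, |deriv (deriv s) x| ≤ B * (Set.Icc (1 : ℝ) 2).indicator 1 x) := by
  set s : ℝ → ℝ := fun x => Real.smoothTransition (x - 1) with hs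
  have h0 : ∀ x, x < 1 → s x = 0 := fun x hx => Real.smoothTransition.zero_of_nonpos (by linarith)
  have h1 : ∀ x, 2 ≤ x → s x = 1 := fun x hx => Real.smoothTransition.one_of_one_le (by linarith)
  have hsm : ContDiff ℝ ∞ s := Real.smoothTransition.contDiff.comp (contDiff_id.sub contDiff_const)
  have hs1 : ContDiff ℝ ∞ (deriv s) := ((contDiff_infty_iff_deriv).1 hsm).2
  have hs2 : ContDiff ℝ ∞ (deriv (deriv s)) := ((contDiff_infty_iff_deriv).1 hs1).2
  have loc : ∀ x, x ∉ Set.Icc (1 : ℝ) 2 → ∃ c : ℝ, s =ᶠ[𝓝 x] fun _ => c := by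
    intro x hx
    simp only [Set.mem_Icc, not_and_or, not_le] at hx
    rcases hx with hx | hx
    · exact ⟨0, by filter_upwards [Iio_mem_nhds hx] with y hy using h0 y hy⟩
    · exact ⟨1, by filter_upwards [Ioi_mem_nhds hx] with y hy using h1 y (le_of_lt hy)⟩
  have d1 : ∀ x, x ∉ Set.Icc (1 : ℝ) 2 → deriv s x = 0 := by
    intro x hx
    obtain ⟨c, hc⟩ := loc x hx
    rw [hc.deriv_eq]; simp
  have d2 : ∀ x, x ∉ Set.Icc (1 : ℝ) 2 → deriv (deriv s) x = 0 := by
    intro x hx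
    obtain ⟨c, hc⟩ := loc x hx
    rw [hc.deriv.deriv_eq]; simp
  obtain ⟨B1, hB1⟩ := (isCompact_Icc (a := (1 : ℝ)) (b := 2)).exists_bound_of_continuousOn
    hs1.continuous.continuousOn
  obtain ⟨B2, hB2⟩ := (isCompact_Icc (a := (1 : ℝ)) (b := 2)).exists_bound_of_continuousOn
    hs2.continuous.continuousOn
  refine ⟨s, |B1| + |B2| + 1, by positivity, hsm, fun x => ⟨Real.smoothTransition.nonneg _,
    Real.smoothTransition.le_one _⟩, h0, h1, fun x => ?_, fun x => ?_⟩
  · by_cases hx : x ∈ Set.Icc (1 : ℝ) 2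
    · have := hB1 x hx
      rw [Real.norm_eq_abs] at this
      rw [Set.indicator_of_mem hx, Pi.one_apply]
      have := le_abs_self B1
      have := abs_nonneg B2
      linarith
    · rw [d1 x hx, Set.indicator_of_notMem hx]; simp
  · by_cases hx : x ∈ Set.Icc (1 : ℝ) 2
    · have := hB2 x hx
      rw [Real.norm_eq_abs] at this
      rw [Set.indicator_of_mem hx, Pi.one_apply]
      have := le_abs_self B2
      have := abs_nonneg B1
      linarith
    · rw [d2 x hx, Set.indicator_of_notMem hx]; simp

lemma cutoff_alg (B u v i j s s1 s2 r r1 r2 : ℝ) (hB : 0 < B) (hu : 0 < u) (hv : 0 < v)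
    (hi : i = 0 ∨ i = 1) (hj : j = 0 ∨ j = 1) (hs : 0 ≤ s ∧ s ≤ 1) (hr : 0 ≤ r ∧ r ≤ 1)
    (hs1 : |s1| ≤ B * i) (hs2 : |s2| ≤ B * i) (hr1 : |r1| ≤ B * j) (hr2 : |r2| ≤ B * j) :
    |s * (1 - r) * (u ^ 2 * s2 * (1 - r) - 2 * (u * s1) * (v * r1) - s * (v ^ 2 * r2))| +
      (u * s1 * (1 - r) - s * (v * r1)) ^ 2 ≤ (B + 3 * B ^ 2) * (u ^ 2 * i + v ^ 2 * j) := by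
  have hi0 : 0 ≤ i := by rcases hi with h | h <;> simp [h]
  have hj0 : 0 ≤ j := by rcases hj with h | h <;> simp [h]
  have hii : i * i = i := by rcases hi with h | h <;> simp [h]
  have hjj : j * j = j := by rcases hj with h | h <;> simp [h]
  have q : 0 ≤ 1 - r ∧ 1 - r ≤ 1 := ⟨by linarith [hr.2], by linarith [hr.1]⟩
  have a1 : |u * s1 * (1 - r) - s * (v * r1)| ≤ B * (u * i + v * j) := by
    refine (abs_sub _ _).trans ?_
    rw [abs_mul, abs_mul, abs_mul, abs_mul, abs_of_pos hu, abs_of_pos hv, abs_of_nonneg q.1,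
      abs_of_nonneg hs.1]
    have e1 : u * |s1| * (1 - r) ≤ u * (B * i) * 1 := by gcongr; exacts [q.1, q.2]
    have e2 : s * (v * |r1|) ≤ 1 * (v * (B * j)) := by gcongr; exact hs.2
    linarith
  have a2 : (u * s1 * (1 - r) - s * (v * r1)) ^ 2 ≤ 2 * B ^ 2 * (u ^ 2 * i + v ^ 2 * j) := by
    rw [← sq_abs]
    have : |u * s1 * (1 - r) - s * (v * r1)| ^ 2 ≤ (B * (u * i + v * j)) ^ 2 := by gcongr
    have e : 2 * B ^ 2 * (u ^ 2 * i + v ^ 2 * j) - (B * (u * i + v * j)) ^ 2 =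
        (B * (u * i - v * j)) ^ 2 := by
      linear_combination (-2 * B ^ 2 * u ^ 2) * hii - 2 * B ^ 2 * v ^ 2 * hjj
    nlinarith [sq_nonneg (B * (u * i - v * j))]
  have a3 : |u ^ 2 * s2 * (1 - r) - 2 * (u * s1) * (v * r1) - s * (v ^ 2 * r2)| ≤
      B * u ^ 2 * i + 2 * B ^ 2 * ((u * i) * (v * j)) + B * v ^ 2 * j := by
    refine (abs_sub _ _).trans ?_
    refine (add_le_add_left (abs_sub _ _) _).trans ?_
    simp only [abs_mul, abs_of_pos hu, abs_of_pos hv, abs_of_nonneg q.1,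
      abs_of_nonneg hs.1, abs_pow, abs_two]
    have e1 : u ^ 2 * |s2| * (1 - r) ≤ u ^ 2 * (B * i) * 1 := by gcongr; exacts [q.1, q.2]
    have e2 : s * (v ^ 2 * |r2|) ≤ 1 * (v ^ 2 * (B * j)) := by gcongr; exact hs.2
    have e3 : 2 * (u * |s1|) * (v * |r1|) ≤ 2 * (u * (B * i)) * (v * (B * j)) := by gcongr
    linarith
  have a4 : |s * (1 - r) * (u ^ 2 * s2 * (1 - r) - 2 * (u * s1) * (v * r1) - s * (v ^ 2 * r2))| ≤
      B * u ^ 2 * i + 2 * B ^ 2 * ((u * i) * (v * j)) + B * v ^ 2 * j := by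
    rw [abs_mul]
    have : |s * (1 - r)| ≤ 1 := by
      rw [abs_mul, abs_of_nonneg q.1, abs_of_nonneg hs.1]
      exact mul_le_one₀ hs.2 q.1 q.2
    refine le_trans (mul_le_mul_of_nonneg_right this (abs_nonneg _)) ?_
    rw [one_mul]; exact a3
  have a5 : 2 * ((u * i) * (v * j)) ≤ u ^ 2 * i + v ^ 2 * j := by
    have e : u ^ 2 * i + v ^ 2 * j - 2 * ((u * i) * (v * j)) = (u * i - v * j) ^ 2 := by
      linear_combination (- u ^ 2) * hii - v ^ 2 * hjj
    nlinarith [sq_nonneg (u * i - v * j)]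
  have a6 := mul_le_mul_of_nonneg_left a5 (sq_nonneg B)
  nlinarith

lemma cutoff_exists : ∃ C : ℝ, 0 < C ∧ ∀ δ T : ℝ, 0 < δ → 0 < T → ∃ χ : ℝ → ℝ,
    ContDiff ℝ ∞ χ ∧ HasCompactSupport χ ∧ (∀ t, χ t ≠ 0 → δ ≤ t) ∧
    (∀ t ∈ Set.Icc (2 * δ) T, χ t = 1 ∨ t = T) ∧
    ∀ t, |χ t * deriv (deriv χ) t| + deriv χ t ^ 2 ≤
      C * (δ⁻¹ ^ 2 * (Set.Icc δ (2 * δ)).indicator 1 t +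
        T⁻¹ ^ 2 * (Set.Icc T (2 * T)).indicator 1 t) := by
  obtain ⟨s, B, hB, hsm, h01, h0, h1, hd1, hd2⟩ := step_fun
  refine ⟨B + 3 * B ^ 2, by positivity, fun δ T hδ hT => ?_⟩
  have hs1 : ContDiff ℝ ∞ (deriv s) := ((contDiff_infty_iff_deriv).1 hsm).2
  have ds : ∀ t, HasDerivAt s (deriv s t) t := fun t =>
    (hsm.differentiable (by simp) t).hasDerivAt
  have ds1 : ∀ t, HasDerivAt (deriv s) (deriv (deriv s) t) t := fun t =>
    (hs1.differentiable (by simp) t).hasDerivAt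
  have sc : ∀ (f f' : ℝ → ℝ) (_ : ∀ t, HasDerivAt f (f' t) t) (u t : ℝ),
      HasDerivAt (fun t => f (u * t)) (u * f' (u * t)) t := by
    intro f f' hf u t
    have := (hf (u * t)).comp t ((hasDerivAt_id t).const_mul u)
    simpa [mul_comm, Function.comp_def] using this
  set u := δ⁻¹ with hu
  set v := T⁻¹ with hv
  have hu0 : 0 < u := inv_pos.2 hδ
  have hv0 : 0 < v := inv_pos.2 hT
  have ind : ∀ (e : ℝ), 0 < e → ∀ t, (Set.Icc (1 : ℝ) 2).indicator (1 : ℝ → ℝ) (e⁻¹ * t) =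
      (Set.Icc e (2 * e)).indicator 1 t := by
    intro e he t
    have : e⁻¹ * t ∈ Set.Icc (1 : ℝ) 2 ↔ t ∈ Set.Icc e (2 * e) := by
      rw [Set.mem_Icc, Set.mem_Icc, inv_mul_eq_div, le_div_iff₀ he, div_le_iff₀ he, one_mul]
    by_cases h : t ∈ Set.Icc e (2 * e)
    · rw [Set.indicator_of_mem h, Set.indicator_of_mem (this.2 h)]; rfl
    · rw [Set.indicator_of_notMem h, Set.indicator_of_notMem (fun h' => h (this.1 h'))]
  set χ : ℝ → ℝ := fun t => s (u * t) * (1 - s (v * t)) with hχ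
  have e1 : deriv χ = fun t => u * deriv s (u * t) * (1 - s (v * t)) -
      s (u * t) * (v * deriv s (v * t)) := by
    ext t
    refine ((sc s _ ds u t).mul ((hasDerivAt_const t 1).sub (sc s _ ds v t))).deriv.trans ?_
    simp only [Pi.sub_apply]
    ring
  have e2 : deriv (deriv χ) = fun t => u ^ 2 * deriv (deriv s) (u * t) * (1 - s (v * t)) -
      2 * (u * deriv s (u * t)) * (v * deriv s (v * t)) -
      s (u * t) * (v ^ 2 * deriv (deriv s) (v * t)) := by
    ext t
    rw [e1]
    refine ((((sc _ _ ds1 u t).const_mul u).mul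
      ((hasDerivAt_const t 1).sub (sc s _ ds v t))).sub
      ((sc s _ ds u t).mul ((sc _ _ ds1 v t).const_mul v))).deriv.trans ?_
    simp only [Pi.sub_apply]
    ring
  refine ⟨χ, ?_, ?_, ?_, ?_, ?_⟩
  · have l : ∀ r : ℝ, ContDiff ℝ ∞ (fun t : ℝ => r * t) := fun r => contDiff_const.mul contDiff_id
    exact (hsm.comp (l u)).mul (contDiff_const.sub (hsm.comp (l v)))
  · apply HasCompactSupport.of_support_subset_isCompact (isCompact_Icc (a := δ) (b := 2 * T))
    intro t ht
    rw [Function.mem_support] at ht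
    constructor
    · by_contra hlt
      push Not at hlt
      apply ht
      have : u * t < 1 := by rw [hu, inv_mul_eq_div, div_lt_one hδ]; exact hlt
      simp [hχ, h0 _ this]
    · by_contra hlt
      push Not at hlt
      apply ht
      have : 2 ≤ v * t := by rw [hv, inv_mul_eq_div, le_div_iff₀ hT]; exact hlt.le
      simp [hχ, h1 _ this]
  · intro t ht
    by_contra hlt
    push Not at hlt
    apply ht
    have : u * t < 1 := by rw [hu, inv_mul_eq_div, div_lt_one hδ]; exact hlt
    simp [hχ, h0 _ this]
  · intro t ht
    rcases eq_or_lt_of_le ht.2 with h | h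
    · exact Or.inr h
    left
    have a1 : 2 ≤ u * t := by rw [hu, inv_mul_eq_div, le_div_iff₀ hδ]; exact ht.1
    have a2 : v * t < 1 := by rw [hv, inv_mul_eq_div, div_lt_one hT]; exact h
    simp [hχ, h0 _ a2, h1 _ a1]
  · intro t
    rw [e2, e1]
    have i01 : ∀ (S : Set ℝ) (t : ℝ), S.indicator (1 : ℝ → ℝ) t = 0 ∨ S.indicator (1 : ℝ → ℝ) t = 1 := by
      intro S t
      by_cases h : t ∈ S
      · right; rw [Set.indicator_of_mem h]; rfl
      · left; rw [Set.indicator_of_notMem h]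
    refine cutoff_alg B u v _ _ (s (u * t)) _ _ (s (v * t)) _ _ hB hu0 hv0 (i01 _ _) (i01 _ _)
      (h01 _) (h01 _) ?_ ?_ ?_ ?_
    · rw [← ind δ hδ]; exact hd1 _
    · rw [← ind δ hδ]; exact hd2 _
    · rw [← ind T hT]; exact hd1 _
    · rw [← ind T hT]; exact hd2 _

end CutoffPart
section OdeUnique
open scoped ContDiff Convolution

variable {H : Type*} [NormedAddCommGroup H] [InnerProductSpace ℂ H] [CompleteSpace H]

lemma mollify_ode (a b c : H →L[ℂ] H) (g : ℝ → H) (hg : Continuous g)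
    (hweak : ∀ ψ : ℝ → ℝ, ContDiff ℝ ∞ ψ → HasCompactSupport ψ → tsupport ψ ⊆ Set.Ioi 0 →
      ∫ t, (deriv (deriv ψ) t • a (g t) - deriv ψ t • b (g t) + ψ t • c (g t)) = 0)
    (ρ : ℝ → ℝ) (hρ : ContDiff ℝ ∞ ρ) (hρc : HasCompactSupport ρ) (t : ℝ)
    (hsup : tsupport ρ ⊆ Set.Iio t) :
    a (deriv (deriv (ρ ⋆[ContinuousLinearMap.lsmul ℝ ℝ, volume] g)) t) +
      b (deriv (ρ ⋆[ContinuousLinearMap.lsmul ℝ ℝ, volume] g) t) +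
      c ((ρ ⋆[ContinuousLinearMap.lsmul ℝ ℝ, volume] g) t) = 0 := by
  have hρ1 : ContDiff ℝ ∞ (deriv ρ) := ((contDiff_infty_iff_deriv).1 hρ).2
  have hρ2 : ContDiff ℝ ∞ (deriv (deriv ρ)) := ((contDiff_infty_iff_deriv).1 hρ1).2
  have dρ : ∀ t, HasDerivAt ρ (deriv ρ t) t := fun t =>
    (hρ.differentiable (by simp) t).hasDerivAt
  have dρ1 : ∀ t, HasDerivAt (deriv ρ) (deriv (deriv ρ) t) t := fun t =>
    (hρ1.differentiable (by simp) t).hasDerivAt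
  have e1 : deriv (ρ ⋆[ContinuousLinearMap.lsmul ℝ ℝ, volume] g) =
      (deriv ρ) ⋆[ContinuousLinearMap.lsmul ℝ ℝ, volume] g := by
    ext x
    exact (hρc.hasDerivAt_convolution_left _ (hρ.of_le (by simp)) hg.locallyIntegrable x).deriv
  have e2 : deriv (deriv (ρ ⋆[ContinuousLinearMap.lsmul ℝ ℝ, volume] g)) =
      (deriv (deriv ρ)) ⋆[ContinuousLinearMap.lsmul ℝ ℝ, volume] g := by
    rw [e1]
    ext x
    exact (hρc.deriv.hasDerivAt_convolution_left _ (hρ1.of_le (by simp)) hg.locallyIntegrable x).deriv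
  rw [e2, e1]
  have int : ∀ σ : ℝ → ℝ, ContDiff ℝ ∞ σ → HasCompactSupport σ →
      Integrable (fun s => σ (t - s) • g s) := by
    intro σ hσ hσc
    apply Continuous.integrable_of_hasCompactSupport
    · exact (hσ.continuous.comp (continuous_const.sub continuous_id)).smul hg
    · have h1 : HasCompactSupport (fun s => σ (t - s)) :=
        hσc.comp_homeomorph (Homeomorph.subLeft t)
      exact HasCompactSupport.smul_right (f := fun s => σ (t - s)) (f' := g) h1
  have cv : ∀ (a : H →L[ℂ] H) (σ : ℝ → ℝ), ContDiff ℝ ∞ σ → HasCompactSupport σ →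
      a ((σ ⋆[ContinuousLinearMap.lsmul ℝ ℝ, volume] g) t) = ∫ s, σ (t - s) • a (g s) := by
    intro a σ hσ hσc
    rw [convolution_lsmul_swap, ← ContinuousLinearMap.integral_comp_comm _ (int σ hσ hσc)]
    simp only [ContinuousLinearMap.map_smul_of_tower]
  have cvi : ∀ (a : H →L[ℂ] H) (σ : ℝ → ℝ), ContDiff ℝ ∞ σ → HasCompactSupport σ →
      Integrable (fun s => σ (t - s) • a (g s)) := by
    intro a σ hσ hσc
    have := a.integrable_comp (int σ hσ hσc)
    simpa only [ContinuousLinearMap.map_smul_of_tower] using this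
  have i0 := cvi c ρ hρ hρc
  have i1 := cvi b _ hρ1 hρc.deriv
  have i2 := cvi a _ hρ2 hρc.deriv.deriv
  rw [cv a _ hρ2 hρc.deriv.deriv, cv b _ hρ1 hρc.deriv, cv c _ hρ hρc,
    ← integral_add i2 i1, ← integral_add (by exact i2.add i1) i0]
  set ψ : ℝ → ℝ := fun s => ρ (t - s) with hψ
  have sub1 : ∀ s : ℝ, HasDerivAt (fun s : ℝ => t - s) (-1) s := fun s => by
    simpa using (hasDerivAt_id s).const_sub t
  have f1 : deriv ψ = fun s => - deriv ρ (t - s) := by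
    ext s
    refine ((dρ (t - s)).comp s (sub1 s)).deriv.trans (by ring)
  have f2 : deriv (deriv ψ) = fun s => deriv (deriv ρ) (t - s) := by
    rw [f1]
    ext s
    refine ((dρ1 (t - s)).comp s (sub1 s)).neg.deriv.trans (by ring)
  have hψs : tsupport ψ ⊆ Set.Ioi 0 := by
    intro s hs
    have : tsupport ψ = (Homeomorph.subLeft t) ⁻¹' tsupport ρ :=
      tsupport_comp_eq_preimage ρ (Homeomorph.subLeft t)
    rw [this] at hs
    have := hsup hs
    simp at this
    simpa using this
  have := hweak ψ (hρ.comp (contDiff_const.sub contDiff_id))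
    (hρc.comp_homeomorph (Homeomorph.subLeft t)) hψs
  rw [f2, f1] at this
  simpa only [neg_smul, sub_neg_eq_add] using this

lemma ode_estimate (a b c : H →L[ℂ] H) (κ : ℝ) (hκ : 0 < κ)
    (hell : ∀ (τ : ℝ) (η : H), κ * (1 + 4 * π ^ 2 * τ ^ 2) * ‖η‖ ^ 2 ≤
      -(inner ℂ η (((2 * π * Complex.I * τ) * (2 * π * Complex.I * τ)) • a η +
        (2 * π * Complex.I * τ) • b η + c η)).re)
    (g : ℝ → H) (hg : Continuous g) (D : ℝ) (hD : 0 ≤ D) (hb : ∀ t, ‖g t‖ ≤ D)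
    (hs : ∀ t, 0 ≤ t → ‖g t‖ ≤ D * t ^ (3 / 4 : ℝ))
    (hweak : ∀ ψ : ℝ → ℝ, ContDiff ℝ ∞ ψ → HasCompactSupport ψ → tsupport ψ ⊆ Set.Ioi 0 →
      ∫ t, (deriv (deriv ψ) t • a (g t) - deriv ψ t • b (g t) + ψ t • c (g t)) = 0) :
    ∃ K : ℝ, ∀ (δ : ℝ) (φ : ContDiffBump (0 : ℝ)), 0 < δ → φ.rOut = δ / 2 → ∀ p q, p < q → 2 * δ ≤ p →
      q < δ⁻¹ →
      ∫ t in p..q, ‖((φ.normed volume) ⋆[ContinuousLinearMap.lsmul ℝ ℝ, volume] g) t‖ ^ 2 ≤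
        K * (δ ^ (1 / 2 : ℝ) + δ) := by
  obtain ⟨C, hC, hcut⟩ := cutoff_exists
  set C1 := (3 * ‖a‖ + 2 * ‖a‖ ^ 2 / κ + ‖b‖ ^ 2 / (2 * κ)) with hC1
  have hC10 : 0 ≤ C1 := by positivity
  refine ⟨2 / κ * (C1 * C * D ^ 2 * 9), fun δ φ hδ hφ p q hpq hp hq => ?_⟩
  set T := δ⁻¹ with hT
  have hT0 : 0 < T := inv_pos.2 hδ
  obtain ⟨χ, hχ, hχc, hχ0, hχ1, hχd⟩ := hcut δ T hδ hT0
  set ρ := φ.normed volume with hρdef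
  have hρ : ContDiff ℝ ∞ ρ := φ.contDiff_normed
  have hρc : HasCompactSupport ρ := φ.hasCompactSupport_normed
  set h := ρ ⋆[ContinuousLinearMap.lsmul ℝ ℝ, volume] g with hh
  have hhs : ContDiff ℝ ∞ h := hρc.contDiff_convolution_left _ hρ hg.locallyIntegrable
  have hts : tsupport ρ = Metric.closedBall 0 (δ / 2) := by rw [hρdef, φ.tsupport_normed_eq, hφ]
  have hss : Function.support ρ = Metric.ball 0 (δ / 2) := by rw [hρdef, φ.support_normed_eq, hφ]
  have hode : ∀ t, χ t ≠ 0 → a (deriv (deriv h) t) + b (deriv h t) + c (h t) = 0 := by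
    intro t ht
    refine mollify_ode a b c g hg hweak ρ hρ hρc t ?_
    rw [hts, Real.closedBall_eq_Icc]
    intro s hs
    have := hχ0 t ht
    simp only [Set.mem_Icc, Set.mem_Iio] at hs ⊢
    linarith
  have E := energy a b c κ hκ hell h hhs χ hχ hχc hode
  have bd : ∀ t ε, 0 ≤ ε → (∀ x ∈ ball t (δ / 2), ‖g x‖ ≤ ε) → ‖h t‖ ≤ ε := by
    intro t ε hε hx
    have := dist_convolution_le (μ := volume) (g := g) (z₀ := 0) (x₀ := t) hε hss.le φ.nonneg_normed
      φ.integral_normed hg.aestronglyMeasurable (fun x hx' => by simpa using hx x hx')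
    simpa using this
  have bd1 : ∀ t, ‖h t‖ ^ 2 ≤ D ^ 2 := fun t => by
    have := bd t D hD (fun x _ => hb x)
    gcongr
  have bd2 : ∀ t ∈ Set.Icc δ (2 * δ), ‖h t‖ ^ 2 ≤ D ^ 2 * 9 * δ ^ (3 / 2 : ℝ) := by
    intro t ht
    have : ‖h t‖ ≤ D * (3 * δ) ^ (3 / 4 : ℝ) := by
      apply bd t _ (by positivity)
      intro x hx
      rw [Real.ball_eq_Ioo] at hx
      have h0 : 0 ≤ x := by linarith [hx.1, ht.1]
      refine (hs x h0).trans ?_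
      gcongr
      linarith [hx.2, ht.2]
    calc ‖h t‖ ^ 2 ≤ (D * (3 * δ) ^ (3 / 4 : ℝ)) ^ 2 := by gcongr
      _ = D ^ 2 * (3 * δ) ^ (3 / 2 : ℝ) := by
        rw [mul_pow, ← Real.rpow_natCast ((3 * δ) ^ (3 / 4 : ℝ)), ← Real.rpow_mul (by positivity)]
        norm_num
      _ = D ^ 2 * (3 ^ (3 / 2 : ℝ) * δ ^ (3 / 2 : ℝ)) := by
        rw [Real.mul_rpow (by norm_num) hδ.le]
      _ ≤ D ^ 2 * (3 ^ (2 : ℝ) * δ ^ (3 / 2 : ℝ)) := by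
        gcongr <;> norm_num
      _ = _ := by norm_num; ring
  -- bound of the right side
  set F : ℝ → ℝ := fun t => (Set.Icc δ (2 * δ)).indicator (fun _ => δ⁻¹ ^ 2 * (C * (D ^ 2 * 9 * δ ^ (3 / 2 : ℝ)))) t
     + (Set.Icc T (2 * T)).indicator (fun _ => T⁻¹ ^ 2 * (C * D ^ 2)) t with hF
  have hFi1 : Integrable ((Set.Icc δ (2 * δ)).indicator (fun _ : ℝ => δ⁻¹ ^ 2 * (C * (D ^ 2 * 9 * δ ^ (3 / 2 : ℝ))))) := by
    rw [integrable_indicator_iff measurableSet_Icc]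
    exact integrableOn_const (by simp)
  have hFi2 : Integrable ((Set.Icc T (2 * T)).indicator (fun _ : ℝ => T⁻¹ ^ 2 * (C * D ^ 2))) := by
    rw [integrable_indicator_iff measurableSet_Icc]
    exact integrableOn_const (by simp)
  have R : ∫ t, (|χ t * deriv (deriv χ) t| + deriv χ t ^ 2) * ‖h t‖ ^ 2 ≤ ∫ t, F t := by
    apply integral_mono_of_nonneg
    · exact Eventually.of_forall fun t => by positivity
    · exact hFi1.add hFi2
    · refine Eventually.of_forall fun t => ?_
      refine (mul_le_mul_of_nonneg_right (hχd t) (by positivity)).trans ?_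
      have key1 : (Set.Icc δ (2 * δ)).indicator (1 : ℝ → ℝ) t * ‖h t‖ ^ 2 ≤
          (Set.Icc δ (2 * δ)).indicator (fun _ => D ^ 2 * 9 * δ ^ (3 / 2 : ℝ)) t := by
        by_cases ht : t ∈ Set.Icc δ (2 * δ)
        · rw [Set.indicator_of_mem ht, Set.indicator_of_mem ht, Pi.one_apply, one_mul]
          exact bd2 t ht
        · rw [Set.indicator_of_notMem ht, Set.indicator_of_notMem ht, zero_mul]
      have key2 : (Set.Icc T (2 * T)).indicator (1 : ℝ → ℝ) t * ‖h t‖ ^ 2 ≤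
          (Set.Icc T (2 * T)).indicator (fun _ => D ^ 2) t := by
        by_cases ht : t ∈ Set.Icc T (2 * T)
        · rw [Set.indicator_of_mem ht, Set.indicator_of_mem ht, Pi.one_apply, one_mul]
          exact bd1 t
        · rw [Set.indicator_of_notMem ht, Set.indicator_of_notMem ht, zero_mul]
      have m : ∀ (S : Set ℝ) (r r' x : ℝ), S.indicator (fun _ => r * (r' * x)) t = r * r' * S.indicator (fun _ => x) t := by
        intro S r r' x
        by_cases ht : t ∈ S
        · rw [Set.indicator_of_mem ht, Set.indicator_of_mem ht]; ring
        · rw [Set.indicator_of_notMem ht, Set.indicator_of_notMem ht]; ring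
      simp only [hF]
      rw [m, m]
      have := mul_le_mul_of_nonneg_left key1 (show 0 ≤ δ⁻¹ ^ 2 * C by positivity)
      have := mul_le_mul_of_nonneg_left key2 (show 0 ≤ T⁻¹ ^ 2 * C by positivity)
      linarith
  have IF : ∫ t, F t ≤ C * D ^ 2 * 9 * (δ ^ (1 / 2 : ℝ) + δ) := by
    rw [hF, integral_add hFi1 hFi2, integral_indicator_const _ measurableSet_Icc,
      integral_indicator_const _ measurableSet_Icc]
    simp only [Real.volume_real_Icc_of_le (show δ ≤ 2 * δ by linarith),
      Real.volume_real_Icc_of_le (show T ≤ 2 * T by linarith), smul_eq_mul]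
    have e1 : δ ^ (3 / 2 : ℝ) = δ * δ ^ (1 / 2 : ℝ) := by
      rw [← Real.rpow_one_add' hδ.le (by norm_num)]; norm_num
    rw [e1, hT]
    have : (2 * δ - δ) * (δ⁻¹ ^ 2 * (C * (D ^ 2 * 9 * (δ * δ ^ (1 / 2 : ℝ))))) = C * D ^ 2 * 9 * δ ^ (1 / 2 : ℝ) := by
      field_simp; ring
    rw [this]
    have : (2 * δ⁻¹ - δ⁻¹) * (δ⁻¹⁻¹ ^ 2 * (C * D ^ 2)) = C * D ^ 2 * δ := by
      field_simp; ring
    rw [this]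
    have : 0 ≤ C * D ^ 2 * δ := by positivity
    linarith
  have L : ∫ t in p..q, ‖h t‖ ^ 2 ≤ ∫ t, χ t ^ 2 * ‖h t‖ ^ 2 := by
    have hint : Integrable (fun t => χ t ^ 2 * ‖h t‖ ^ 2) := by
      apply Continuous.integrable_of_hasCompactSupport
      · have := hχ.continuous
        have := hhs.continuous
        fun_prop
      · simp_rw [pow_two (χ _)]
        exact (hχc.mul_right).mul_right
    rw [intervalIntegral.integral_of_le hpq.le]
    refine le_trans (le_of_eq ?_) (setIntegral_le_integral (s := Set.Ioc p q) hint
      (Eventually.of_forall fun t => by positivity))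
    apply setIntegral_congr_fun measurableSet_Ioc
    intro t ht
    have := hχ1 t ⟨by linarith [ht.1], by linarith [ht.2]⟩
    have hne : t ≠ T := by
      have := ht.2
      exact ne_of_lt (lt_of_le_of_lt this hq)
    rcases this with h1 | h1
    · simp [h1]
    · exact absurd h1 hne
  have fin := (mul_le_mul_of_nonneg_left (R.trans IF) hC10)
  have E2 := (mul_le_mul_of_nonneg_left L (show 0 ≤ κ / 2 by positivity)).trans (E.trans fin)
  have : ∫ t in p..q, ‖h t‖ ^ 2 = 2 / κ * (κ / 2 * ∫ t in p..q, ‖h t‖ ^ 2) := by field_simp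
  rw [this]
  refine (mul_le_mul_of_nonneg_left E2 (show 0 ≤ 2 / κ by positivity)).trans (le_of_eq ?_)
  ring

lemma ode_unique (a b c : H →L[ℂ] H) (κ : ℝ) (hκ : 0 < κ)
    (hell : ∀ (τ : ℝ) (η : H), κ * (1 + 4 * π ^ 2 * τ ^ 2) * ‖η‖ ^ 2 ≤
      -(inner ℂ η (((2 * π * Complex.I * τ) * (2 * π * Complex.I * τ)) • a η +
        (2 * π * Complex.I * τ) • b η + c η)).re)
    (g : ℝ → H) (hg : Continuous g) (D : ℝ) (hD : 0 ≤ D) (hb : ∀ t, ‖g t‖ ≤ D)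
    (hs : ∀ t, 0 ≤ t → ‖g t‖ ≤ D * t ^ (3 / 4 : ℝ))
    (hweak : ∀ ψ : ℝ → ℝ, ContDiff ℝ ∞ ψ → HasCompactSupport ψ → tsupport ψ ⊆ Set.Ioi 0 →
      ∫ t, (deriv (deriv ψ) t • a (g t) - deriv ψ t • b (g t) + ψ t • c (g t)) = 0) :
    ∀ t, 0 < t → g t = 0 := by
  obtain ⟨K, hK⟩ := ode_estimate a b c κ hκ hell g hg D hD hb hs hweak
  intro t0 ht0
  by_contra hne
  set δ : ℕ → ℝ := fun k => 1 / ((k : ℝ) + 1) with hδ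
  have hδ0 : ∀ k, 0 < δ k := fun k => by positivity
  have hδt : Tendsto δ atTop (𝓝 0) := tendsto_one_div_add_atTop_nhds_zero_nat
  let φ : ℕ → ContDiffBump (0 : ℝ) := fun k =>
    ⟨δ k / 4, δ k / 2, by have := hδ0 k; positivity, by have := hδ0 k; linarith⟩
  have hφ : ∀ k, (φ k).rOut = δ k / 2 := fun k => rfl
  have hφt : Tendsto (fun k => (φ k).rOut) atTop (𝓝 0) := by
    simp only [hφ]
    simpa using hδt.div_const 2
  set h : ℕ → ℝ → H := fun k => ((φ k).normed volume) ⋆[ContinuousLinearMap.lsmul ℝ ℝ, volume] g with hh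
  have hc : ∀ k, Continuous (h k) := fun k =>
    ((φ k).hasCompactSupport_normed.contDiff_convolution_left (n := 0) _ ((φ k).contDiff_normed)
      hg.locallyIntegrable).continuous
  have bd : ∀ k t, ‖h k t‖ ≤ D := by
    intro k t
    have := dist_convolution_le (μ := volume) (g := g) (z₀ := 0) (x₀ := t) hD
      (φ k).support_normed_eq.le (φ k).nonneg_normed
      (φ k).integral_normed hg.aestronglyMeasurable (fun x hx' => by simpa using hb x)
    simpa using this
  have lim : Tendsto (fun k => ∫ t in (t0 / 2)..(2 * t0), ‖h k t‖ ^ 2) atTop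
      (𝓝 (∫ t in (t0 / 2)..(2 * t0), ‖g t‖ ^ 2)) := by
    apply intervalIntegral.tendsto_integral_filter_of_dominated_convergence (fun _ => D ^ 2)
    · exact Eventually.of_forall fun k => ((hc k).norm.pow 2).aestronglyMeasurable
    · refine Eventually.of_forall fun k => Eventually.of_forall fun t _ => ?_
      rw [Real.norm_of_nonneg (by positivity)]
      have := bd k t
      gcongr
    · exact intervalIntegrable_const
    · refine Eventually.of_forall fun t _ => ?_
      exact (ContDiffBump.convolution_tendsto_right_of_continuous hφt hg t).norm.pow 2
  have lim0 : Tendsto (fun k => K * ((δ k) ^ (1 / 2 : ℝ) + δ k)) atTop (𝓝 0) := by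
    have h1 : Tendsto (fun k => (δ k) ^ (1 / 2 : ℝ)) atTop (𝓝 ((0 : ℝ) ^ (1 / 2 : ℝ))) :=
      hδt.rpow_const (Or.inr (by norm_num))
    rw [Real.zero_rpow (by norm_num)] at h1
    simpa using (h1.add hδt).const_mul K
  have le : ∫ t in (t0 / 2)..(2 * t0), ‖g t‖ ^ 2 ≤ 0 := by
    apply le_of_tendsto_of_tendsto lim lim0
    have ev1 : ∀ᶠ k in atTop, δ k < t0 / 4 := hδt.eventually_lt_const (by positivity)
    have ev2 : ∀ᶠ k in atTop, δ k < (2 * t0)⁻¹ := hδt.eventually_lt_const (by positivity)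
    filter_upwards [ev1, ev2] with k h1 h2
    refine hK (δ k) (φ k) (hδ0 k) (hφ k) _ _ (by linarith) (by linarith) ?_
    exact (lt_inv_comm₀ (hδ0 k) (by positivity)).1 h2
  have pos : 0 < ∫ t in (t0 / 2)..(2 * t0), ‖g t‖ ^ 2 := by
    apply intervalIntegral.integral_pos (by linarith) (hg.norm.pow 2).continuousOn
      (fun t _ => sq_nonneg _)
    exact ⟨t0, ⟨by linarith, by linarith⟩, pow_pos (norm_pos_iff.2 hne) 2⟩
  linarith

end OdeUnique
section ToUp
variable {m : ℕ}

lemma xlast_toUp (x' : EuclideanSpace ℝ (Fin (m + 1 - 1))) (t : ℝ) :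
    xlast (toUp (n := m + 1) x' t) = t := by
  simp [xlast, toUp]

lemma xinit_toUp (x' : EuclideanSpace ℝ (Fin (m + 1 - 1))) (t : ℝ) :
    xinit (toUp (n := m + 1) x' t) = x' := by
  ext i
  simp [xinit, toUp]

lemma toUp_mp : MeasurePreserving
    (fun p : EuclideanSpace ℝ (Fin (m + 1 - 1)) × ℝ => toUp (n := m + 1) p.1 p.2) := by
  have h1 := (EuclideanSpace.volume_preserving_symm_measurableEquiv_toLp (Fin m))
  have h2 : MeasurePreserving (fun p : EuclideanSpace ℝ (Fin m) × ℝ =>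
      (p.2, (MeasurableEquiv.toLp 2 (Fin m → ℝ)).symm p.1)) :=
    ((MeasurePreserving.id (volume : Measure ℝ)).prod h1).comp
      (Measure.measurePreserving_swap (μ := (volume : Measure (EuclideanSpace ℝ (Fin m))))
        (ν := (volume : Measure ℝ)))
  have h3 := (volume_preserving_piFinSuccAbove (fun _ => ℝ) (Fin.last m)).symm
  have h4 := PiLp.volume_preserving_toLp (Fin (m + 1))
  have h5 := h4.comp (h3.comp h2)
  have key : (fun p : EuclideanSpace ℝ (Fin m) × ℝ => toUp (n := m + 1) p.1 p.2) =
      (WithLp.toLp 2 ∘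
      ⇑(MeasurableEquiv.piFinSuccAbove (fun x => ℝ) (Fin.last m)).symm ∘ fun p =>
        (p.2, (MeasurableEquiv.toLp 2 (Fin m → ℝ)).symm p.1)) := by
    funext p
    ext i
    induction i using Fin.lastCases with
    | last => simp [toUp, MeasurableEquiv.piFinSuccAbove, Fin.insertNthEquiv]
    | cast i =>
      simp [toUp, MeasurableEquiv.piFinSuccAbove, Fin.insertNthEquiv]
  rw [← key] at h5
  exact h5

lemma toUp_emb : MeasurableEmbedding
    (fun p : EuclideanSpace ℝ (Fin (m + 1 - 1)) × ℝ => toUp (n := m + 1) p.1 p.2) := by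
  apply Continuous.measurableEmbedding
  · unfold toUp
    refine (PiLp.continuous_toLp 2 _).comp (continuous_pi fun i => ?_)
    by_cases h : (i : ℕ) < m + 1 - 1
    · simp only [h, dite_true]
      fun_prop
    · simp only [h, dite_false]
      fun_prop
  · intro p q h
    have h1 := congrArg xlast h
    have h2 := congrArg xinit h
    simp only [xlast_toUp, xinit_toUp] at h1 h2
    exact Prod.ext h2 h1

lemma integral_upper (F : EuclideanSpace ℝ (Fin (m + 1)) → ℂ) :
    ∫ x in upperHalfSpace (m + 1), F x =
      ∫ p in (Set.univ ×ˢ Set.Ioi (0 : ℝ) : Set (EuclideanSpace ℝ (Fin (m + 1 - 1)) × ℝ)),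
        F (toUp p.1 p.2) := by
  rw [← toUp_mp.setIntegral_preimage_emb toUp_emb]
  congr 2
  ext p
  simp [upperHalfSpace, xlast_toUp]

end ToUp

section PdLemmas
variable {n : ℕ}

lemma pd_mul (i : Fin n) (u v : EuclideanSpace ℝ (Fin n) → ℂ) (hu : Differentiable ℝ u)
    (hv : Differentiable ℝ v) :
    pd i (fun x => u x * v x) = fun x => pd i u x * v x + u x * pd i v x := by
  funext x
  unfold pd
  rw [fderiv_fun_mul (hu x) (hv x)]
  simp
  ring

lemma pd_add (i : Fin n) (u v : EuclideanSpace ℝ (Fin n) → ℂ) (hu : Differentiable ℝ u)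
    (hv : Differentiable ℝ v) :
    pd i (fun x => u x + v x) = fun x => pd i u x + pd i v x := by
  funext x
  unfold pd
  rw [fderiv_fun_add (hu x) (hv x)]
  simp

lemma pd_scale (i : Fin n) (u : EuclideanSpace ℝ (Fin n) → ℂ) (ε : ℝ) :
    pd i (fun x => u (ε • x)) = fun x => (ε : ℂ) * pd i u (ε • x) := by
  funext x
  unfold pd
  rw [fderiv_comp_smul]
  simp

lemma pd_const_mul (i : Fin n) (u : EuclideanSpace ℝ (Fin n) → ℂ) (hu : Differentiable ℝ u)
    (c : ℂ) :
    pd i (fun x => c * u x) = fun x => c * pd i u x := by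
  funext x
  unfold pd
  rw [fderiv_const_mul (hu x)]
  simp

lemma pd_contDiff (i : Fin n) (u : EuclideanSpace ℝ (Fin n) → ℂ) (hu : ContDiff ℝ (⊤ : ℕ∞) u) :
    ContDiff ℝ (⊤ : ℕ∞) (pd i u) := by
  unfold pd
  exact (hu.fderiv_right (by simp)).clm_apply contDiff_const

lemma pd_compact (i : Fin n) (u : EuclideanSpace ℝ (Fin n) → ℂ) (hu : HasCompactSupport u) :
    HasCompactSupport (pd i u) := by
  unfold pd
  exact hu.fderiv_apply (𝕜 := ℝ) _

lemma pd_zero (i : Fin n) : pd i (fun _ : EuclideanSpace ℝ (Fin n) => (0 : ℂ)) = fun _ => 0 := by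
  funext x
  simp [pd]

/-- Plane wave times a function of the height. -/
def wv (L : EuclideanSpace ℝ (Fin n) →L[ℝ] ℂ) (e : EuclideanSpace ℝ (Fin n) →L[ℝ] ℝ)
    (θ : ℝ → ℂ) (x : EuclideanSpace ℝ (Fin n)) : ℂ := Complex.exp (L x) * θ (e x)

lemma wv_contDiff (L : EuclideanSpace ℝ (Fin n) →L[ℝ] ℂ) (e : EuclideanSpace ℝ (Fin n) →L[ℝ] ℝ)
    (θ : ℝ → ℂ) (hθ : ContDiff ℝ (⊤ : ℕ∞) θ) : ContDiff ℝ (⊤ : ℕ∞) (wv L e θ) := by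
  unfold wv
  exact (L.contDiff.cexp).mul (hθ.comp e.contDiff)

lemma pd_wv (L : EuclideanSpace ℝ (Fin n) →L[ℝ] ℂ) (e : EuclideanSpace ℝ (Fin n) →L[ℝ] ℝ)
    (θ : ℝ → ℂ) (hθ : ContDiff ℝ (⊤ : ℕ∞) θ) (i : Fin n) :
    pd i (wv L e θ) = wv L e (fun t => (e (EuclideanSpace.single i 1) : ℂ) * deriv θ t +
      L (EuclideanSpace.single i 1) * θ t) := by
  funext x
  unfold pd wv
  have h1 : HasFDerivAt (fun x => Complex.exp (L x)) (Complex.exp (L x) • (L : _ →L[ℝ] ℂ)) x :=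
    L.hasFDerivAt.cexp
  have hd : HasDerivAt θ (deriv θ (e x)) (e x) := (hθ.differentiable (by simp) _).hasDerivAt
  have h2 := hd.hasFDerivAt.comp x e.hasFDerivAt
  have h3 := h1.mul h2
  have h4 := h3.fderiv
  simp only [Function.comp_def] at h4
  erw [h4]
  simp
  ring

end PdLemmas
section WaveTest
variable {n : ℕ}

/-- The height derivative corresponding to `pd i` on waves. -/
def dv (L : EuclideanSpace ℝ (Fin n) →L[ℝ] ℂ) (e : EuclideanSpace ℝ (Fin n) →L[ℝ] ℝ)
    (i : Fin n) (θ : ℝ → ℂ) : ℝ → ℂ := fun t =>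
  (e (EuclideanSpace.single i 1) : ℂ) * deriv θ t + L (EuclideanSpace.single i 1) * θ t

lemma deriv_smooth_c (θ : ℝ → ℂ) (hθ : ContDiff ℝ (⊤ : ℕ∞) θ) :
    ContDiff ℝ (⊤ : ℕ∞) (deriv θ) := by
  exact ((contDiff_infty_iff_deriv (𝕜 := ℝ)).1 hθ).2

lemma dv_contDiff (L : EuclideanSpace ℝ (Fin n) →L[ℝ] ℂ) (e : EuclideanSpace ℝ (Fin n) →L[ℝ] ℝ)
    (i : Fin n) (θ : ℝ → ℂ) (hθ : ContDiff ℝ (⊤ : ℕ∞) θ) :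
    ContDiff ℝ (⊤ : ℕ∞) (dv L e i θ) := by
  have := deriv_smooth_c θ hθ
  unfold dv
  fun_prop

lemma dv_tsupport (L : EuclideanSpace ℝ (Fin n) →L[ℝ] ℂ) (e : EuclideanSpace ℝ (Fin n) →L[ℝ] ℝ)
    (i : Fin n) (θ : ℝ → ℂ) : tsupport (dv L e i θ) ⊆ tsupport θ := by
  apply closure_minimal _ (isClosed_tsupport θ)
  intro t ht
  by_contra h
  apply ht
  have h1 : deriv θ t = 0 := by
    by_contra h'
    exact h (support_deriv_subset h')
  simp [dv, h1, image_eq_zero_of_notMem_tsupport h]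

lemma wv_bound (L : EuclideanSpace ℝ (Fin n) →L[ℝ] ℂ) (e : EuclideanSpace ℝ (Fin n) →L[ℝ] ℝ)
    (hL : ∀ x, (L x).re = 0) (S : Set ℝ)
    (θ : ℝ → ℂ) (hθ : ContDiff ℝ (⊤ : ℕ∞) θ) (hθc : IsCompact S) (hS : tsupport θ ⊆ S) :
    ∃ C : ℝ, 0 ≤ C ∧ ∀ x, ‖wv L e θ x‖ ≤ C * S.indicator 1 (e x) := by
  have hc : HasCompactSupport θ := hθc.of_isClosed_subset (isClosed_tsupport _) hS
  obtain ⟨C, hC⟩ := hc.exists_bound_of_continuous hθ.continuous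
  refine ⟨C, (norm_nonneg _).trans (hC 0), fun x => ?_⟩
  unfold wv
  rw [norm_mul, Complex.norm_exp, hL x, Real.exp_zero, one_mul]
  by_cases h : e x ∈ S
  · simpa [h] using hC _
  · have : θ (e x) = 0 := image_eq_zero_of_notMem_tsupport fun h' => h (hS h')
    simp [h, this]

lemma wave_test (L : EuclideanSpace ℝ (Fin n) →L[ℝ] ℂ) (e : EuclideanSpace ℝ (Fin n) →L[ℝ] ℝ)
    (hL : ∀ x, (L x).re = 0)
    (θ : ℝ → ℂ) (hθ : ContDiff ℝ (⊤ : ℕ∞) θ) (hθc : HasCompactSupport θ) :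
    ∃ (f : ℕ → EuclideanSpace ℝ (Fin n) → ℂ) (B : Fin n → Fin n → ℝ),
      (∀ N, ContDiff ℝ (⊤ : ℕ∞) (f N)) ∧ (∀ N, HasCompactSupport (f N)) ∧
      (∀ N, tsupport (f N) ⊆ e ⁻¹' tsupport θ) ∧
      (∀ N r s x, ‖pd r (pd s (f N)) x‖ ≤ B r s * (tsupport θ).indicator 1 (e x)) ∧
      (∀ r s x, Tendsto (fun N => pd r (pd s (f N)) x) atTop
        (𝓝 (wv L e (dv L e r (dv L e s θ)) x))) := by
  let η : ContDiffBump (0 : EuclideanSpace ℝ (Fin n)) := ⟨1, 2, by norm_num, by norm_num⟩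
  set u : EuclideanSpace ℝ (Fin n) → ℂ := fun x => ((η x : ℝ) : ℂ) with hu
  have us : ContDiff ℝ (⊤ : ℕ∞) u := Complex.ofRealCLM.contDiff.comp η.contDiff
  have uc : HasCompactSupport u := η.hasCompactSupport.comp_left (g := fun r : ℝ => (r : ℂ)) (by simp)
  have u0 : u 0 = 1 := by
    simp only [hu]
    rw [η.one_of_mem_closedBall (by simp [η])]
    simp
  set ε : ℕ → ℝ := fun N => 1 / ((N : ℝ) + 1) with hε
  have hε0 : ∀ N, 0 < ε N := fun N => by positivity
  have hε1 : ∀ N, ε N ≤ 1 := fun N => by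
    rw [hε]
    simp only
    rw [div_le_one (by positivity)]
    have : (0 : ℝ) ≤ N := Nat.cast_nonneg N
    linarith
  have hεt : Tendsto ε atTop (𝓝 0) := tendsto_one_div_add_atTop_nhds_zero_nat
  have hεn : ∀ N, ‖(ε N : ℂ)‖ ≤ 1 := fun N => by
    rw [Complex.norm_real, Real.norm_of_nonneg (hε0 N).le]; exact hε1 N
  set v := wv L e θ with hv
  have vs : ContDiff ℝ (⊤ : ℕ∞) v := wv_contDiff L e θ hθ
  have vsi : ∀ i, ContDiff ℝ (⊤ : ℕ∞) (pd i v) := fun i => pd_contDiff i v vs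
  have df : ∀ {w : EuclideanSpace ℝ (Fin n) → ℂ}, ContDiff ℝ (⊤ : ℕ∞) w → Differentiable ℝ w :=
    fun hw => hw.differentiable (by simp)
  have sc : ∀ (ε : ℝ) {w : EuclideanSpace ℝ (Fin n) → ℂ}, ContDiff ℝ (⊤ : ℕ∞) w →
      ContDiff ℝ (⊤ : ℕ∞) (fun x => w (ε • x)) := fun ε w hw =>
    hw.comp (contDiff_const_smul ε)
  have usi : ∀ i, ContDiff ℝ (⊤ : ℕ∞) (pd i u) := fun i => pd_contDiff i u us
  have formula : ∀ (ε : ℝ) r s x, pd r (pd s (fun x => u (ε • x) * v x)) x =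
      (ε : ℂ) * ((ε : ℂ) * pd r (pd s u) (ε • x)) * v x + (ε : ℂ) * pd s u (ε • x) * pd r v x +
      ((ε : ℂ) * pd r u (ε • x) * pd s v x + u (ε • x) * pd r (pd s v) x) := by
    intro ε r s x
    have a1 := df (sc ε us)
    have a2 := df (sc ε (usi s))
    have a3 : Differentiable ℝ (fun x => (ε : ℂ) * pd s u (ε • x)) := a2.const_mul _
    have a4 : Differentiable ℝ (fun x => (ε : ℂ) * pd s u (ε • x) * v x) := a3.mul (df vs)
    have a5 : Differentiable ℝ (fun x => u (ε • x) * pd s v x) := a1.mul (df (vsi s))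
    have q1 : pd s (fun x => u (ε • x) * v x) =
        fun x => (ε : ℂ) * pd s u (ε • x) * v x + u (ε • x) * pd s v x := by
      rw [pd_mul s _ _ a1 (df vs), pd_scale]
    rw [q1, pd_add r _ _ a4 a5, pd_mul r _ _ a3 (df vs), pd_mul r _ _ a1 (df (vsi s)),
      pd_const_mul r _ a2, pd_scale, pd_scale]
  have pv : ∀ i, pd i v = wv L e (dv L e i θ) := fun i => pd_wv L e θ hθ i
  have pv2 : ∀ r s, pd r (pd s v) = wv L e (dv L e r (dv L e s θ)) := fun r s => by
    rw [pv]; exact pd_wv L e _ (dv_contDiff L e s θ hθ) r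
  set S := tsupport θ with hS
  have hSc : IsCompact S := hθc
  obtain ⟨c0, c00, hc0⟩ := wv_bound L e hL S θ hθ hSc subset_rfl
  have b1 := fun i => wv_bound L e hL S _ (dv_contDiff L e i θ hθ) hSc (dv_tsupport L e i θ)
  have b2 := fun r s => wv_bound L e hL S _ (dv_contDiff L e r _ (dv_contDiff L e s θ hθ)) hSc
    ((dv_tsupport L e r _).trans (dv_tsupport L e s θ))
  choose c1 c10 hc1 using b1
  choose c2 c20 hc2 using b2
  obtain ⟨d0, hd0⟩ := uc.exists_bound_of_continuous us.continuous
  have b3 := fun i => (pd_compact i u uc).exists_bound_of_continuous (usi i).continuous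
  have b4 := fun r s => (pd_compact r _ (pd_compact s u uc)).exists_bound_of_continuous
    (pd_contDiff r _ (usi s)).continuous
  choose d1 hd1 using b3
  choose d2 hd2 using b4
  refine ⟨fun N x => u (ε N • x) * v x, fun r s => d2 r s * c0 + d1 s * c1 r +
    (d1 r * c1 s + d0 * c2 r s), ?_, ?_, ?_, ?_, ?_⟩
  · exact fun N => (sc _ us).mul vs
  · intro N
    have : HasCompactSupport (fun x => u (ε N • x)) :=
      uc.comp_homeomorph (Homeomorph.smulOfNeZero (ε N) (hε0 N).ne')
    exact this.mul_right
  · intro N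
    apply closure_minimal _ ((isClosed_tsupport θ).preimage e.continuous)
    intro x hx
    by_contra h
    apply hx
    have : θ (e x) = 0 := image_eq_zero_of_notMem_tsupport h
    simp [hv, wv, this]
  · intro N r s x
    rw [formula]
    have e1 := hεn N
    have i0 : 0 ≤ S.indicator (1 : ℝ → ℝ) (e x) := Set.indicator_nonneg (by simp) _
    have v0 : ‖v x‖ ≤ c0 * S.indicator 1 (e x) := hc0 x
    have v1 : ∀ i, ‖pd i v x‖ ≤ c1 i * S.indicator 1 (e x) := fun i => by rw [pv]; exact hc1 i x
    have v2 : ‖pd r (pd s v) x‖ ≤ c2 r s * S.indicator 1 (e x) := by rw [pv2]; exact hc2 r s x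
    have m1 : ∀ {z w : ℂ} {A : ℝ}, ‖z‖ ≤ 1 → ‖w‖ ≤ A → ‖z * w‖ ≤ A := by
      intro z w A h1 h2
      rw [norm_mul]
      nlinarith [norm_nonneg w, norm_nonneg z]
    have m2 : ∀ {z w : ℂ} {A C : ℝ}, ‖z‖ ≤ A → ‖w‖ ≤ C * S.indicator 1 (e x) →
        ‖z * w‖ ≤ A * C * S.indicator 1 (e x) := by
      intro z w A C h1 h2
      rw [norm_mul, mul_assoc]
      exact mul_le_mul h1 h2 (norm_nonneg _) ((norm_nonneg _).trans h1)
    refine (norm_add_le _ _).trans ?_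
    refine (add_le_add (norm_add_le _ _) (norm_add_le _ _)).trans ?_
    rw [add_mul, add_mul, add_mul]
    exact add_le_add (add_le_add (m2 (m1 e1 (m1 e1 (hd2 r s _))) v0) (m2 (m1 e1 (hd1 s _)) (v1 r)))
      (add_le_add (m2 (m1 e1 (hd1 r _)) (v1 s)) (m2 (hd0 _) v2))
  · intro r s x
    simp_rw [formula]
    rw [← pv2]
    have hεc : Tendsto (fun N => (ε N : ℂ)) atTop (𝓝 0) := by
      have := (Complex.continuous_ofReal.tendsto 0).comp hεt
      simpa [Function.comp_def] using this
    have hx : Tendsto (fun N => ε N • x) atTop (𝓝 0) := by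
      simpa using hεt.smul_const x
    have l0 : Tendsto (fun N => u (ε N • x)) atTop (𝓝 1) := by
      rw [← u0]; exact (us.continuous.tendsto 0).comp hx
    have l1 : ∀ i, Tendsto (fun N => pd i u (ε N • x)) atTop (𝓝 (pd i u 0)) := fun i =>
      ((usi i).continuous.tendsto 0).comp hx
    have l2 : Tendsto (fun N => pd r (pd s u) (ε N • x)) atTop (𝓝 (pd r (pd s u) 0)) :=
      ((pd_contDiff r _ (usi s)).continuous.tendsto 0).comp hx
    have := (((hεc.mul (hεc.mul l2)).mul_const (v x)).add ((hεc.mul (l1 s)).mul_const (pd r v x))).add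
      (((hεc.mul (l1 r)).mul_const (pd s v x)).add (l0.mul_const (pd r (pd s v) x)))
    simpa using this

end WaveTest
section WeakKernel
open scoped FourierTransform
variable {m M : ℕ}

lemma kernel_bound (P : EuclideanSpace ℝ (Fin (m + 1 - 1)) → Matrix (Fin M) (Fin M) ℂ)
    (C : ℝ) (hC : 0 < C) (hP : ∀ x', ∀ α β : Fin M,
      ‖P x' α β‖ ≤ C * (1 + ‖x'‖ ^ 2) ^ (-((m + 1 : ℕ) : ℝ) / 2))
    (S : Set ℝ) (hS : IsCompact S) (hS0 : S ⊆ Set.Ioi 0) :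
    ∃ C' : ℝ, 0 ≤ C' ∧ ∀ t ∈ S, ∀ x', ∀ α β : Fin M,
      ‖matDil P t x' α β‖ ≤ C' * (1 + ‖x'‖ ^ 2) ^ (-((m + 1 : ℕ) : ℝ) / 2) := by
  obtain ⟨T0, hT0⟩ := hS.exists_bound_of_continuousOn (f := fun t : ℝ => t) continuousOn_id
  obtain ⟨D, hD⟩ := hS.exists_bound_of_continuousOn (f := fun t : ℝ => t ^ ((1 : ℤ) - ((m + 1 : ℕ) : ℤ)))
    (fun t ht => (continuousAt_zpow₀ t _ (Or.inl (hS0 ht).ne')).continuousWithinAt)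
  set T := max T0 1 with hT
  have hT1 : 1 ≤ T := le_max_right _ _
  have hTp : 0 < T := by linarith
  refine ⟨|D| * (C * (T⁻¹ ^ 2) ^ (-((m + 1 : ℕ) : ℝ) / 2)), by positivity, ?_⟩
  intro t ht x' α β
  have ht0 : 0 < t := hS0 ht
  have htT : t ≤ T := (le_abs_self t).trans ((hT0 t ht).trans (le_max_left _ _))
  have h1 : T⁻¹ ^ 2 * (1 + ‖x'‖ ^ 2) ≤ 1 + ‖t⁻¹ • x'‖ ^ 2 := by
    rw [norm_smul, Real.norm_of_nonneg (inv_pos.2 ht0).le, mul_pow, mul_add, mul_one]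
    have a1 : T⁻¹ ≤ t⁻¹ := inv_anti₀ ht0 htT
    have a2 : T⁻¹ ≤ 1 := inv_le_one_of_one_le₀ hT1
    have a3 : 0 < T⁻¹ := inv_pos.2 hTp
    have : T⁻¹ ^ 2 ≤ 1 := pow_le_one₀ a3.le a2
    have : T⁻¹ ^ 2 * ‖x'‖ ^ 2 ≤ t⁻¹ ^ 2 * ‖x'‖ ^ 2 := by gcongr
    linarith
  have h2 : (1 + ‖t⁻¹ • x'‖ ^ 2) ^ (-((m + 1 : ℕ) : ℝ) / 2) ≤
      (T⁻¹ ^ 2) ^ (-((m + 1 : ℕ) : ℝ) / 2) * (1 + ‖x'‖ ^ 2) ^ (-((m + 1 : ℕ) : ℝ) / 2) := by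
    rw [← Real.mul_rpow (by positivity) (by positivity)]
    apply Real.rpow_le_rpow_of_nonpos (by positivity) h1
    have : (0 : ℝ) ≤ ((m + 1 : ℕ) : ℝ) := Nat.cast_nonneg _
    linarith
  unfold matDil
  rw [Matrix.smul_apply, norm_smul, mul_assoc]
  refine mul_le_mul ((hD t ht).trans (le_abs_self D)) ?_ (norm_nonneg _) (abs_nonneg _)
  refine (hP _ α β).trans ?_
  rw [mul_assoc]
  exact mul_le_mul_of_nonneg_left h2 hC.le

lemma decay_integrable : Integrable (fun x' : EuclideanSpace ℝ (Fin (m + 1 - 1)) =>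
    (1 + ‖x'‖ ^ 2) ^ (-((m + 1 : ℕ) : ℝ) / 2)) := by
  apply integrable_rpow_neg_one_add_norm_sq
  simp

lemma matDil_measurable (P : EuclideanSpace ℝ (Fin (m + 1 - 1)) → Matrix (Fin M) (Fin M) ℂ)
    (hP : ∀ α β : Fin M, Measurable fun x' => P x' α β) (α β : Fin M) :
    Measurable (fun p : EuclideanSpace ℝ (Fin (m + 1 - 1)) × ℝ => matDil P p.2 p.1 α β) := by
  unfold matDil
  simp only [Matrix.smul_apply]
  have h1 : Measurable (fun p : EuclideanSpace ℝ (Fin (m + 1 - 1)) × ℝ =>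
      p.2 ^ ((1 : ℤ) - ((m + 1 : ℕ) : ℤ))) := measurable_snd.pow_const _
  have h2 : Measurable (fun p : EuclideanSpace ℝ (Fin (m + 1 - 1)) × ℝ =>
      P (p.2⁻¹ • p.1) α β) := (hP α β).comp (measurable_snd.inv.smul measurable_fst)
  exact h1.smul h2

/-- height functional -/
def hgt (m : ℕ) : EuclideanSpace ℝ (Fin (m + 1)) →L[ℝ] ℝ := EuclideanSpace.proj (Fin.last m)

/-- phase functional -/
def phs (ξ : EuclideanSpace ℝ (Fin (m + 1 - 1))) : EuclideanSpace ℝ (Fin (m + 1)) →L[ℝ] ℂ :=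
  ∑ i : Fin (m + 1 - 1), (EuclideanSpace.proj (finUp i) : EuclideanSpace ℝ (Fin (m + 1)) →L[ℝ] ℝ).smulRight
    (-(2 * π * Complex.I) * (ξ i : ℂ))

lemma hgt_eq (x : EuclideanSpace ℝ (Fin (m + 1))) : hgt m x = xlast x := by
  simp [hgt, xlast, Fin.last]

lemma phs_eq (ξ : EuclideanSpace ℝ (Fin (m + 1 - 1))) (x : EuclideanSpace ℝ (Fin (m + 1))) :
    phs ξ x = ((-2 * π * inner ℝ (xinit x) ξ : ℝ) : ℂ) * Complex.I := by
  simp only [phs, _root_.sum_apply, ContinuousLinearMap.smulRight_apply,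
    PiLp.inner_apply, xinit]
  push_cast
  rw [Finset.mul_sum, Finset.sum_mul]
  apply Finset.sum_congr rfl
  intro i _
  simp [finUp]
  ring

lemma phs_re (ξ : EuclideanSpace ℝ (Fin (m + 1 - 1))) (x : EuclideanSpace ℝ (Fin (m + 1))) :
    (phs ξ x).re = 0 := by
  rw [phs_eq, Complex.re_ofReal_mul]; simp

lemma dil_fourier (P : EuclideanSpace ℝ (Fin (m + 1 - 1)) → Matrix (Fin M) (Fin M) ℂ)
    (ξ : EuclideanSpace ℝ (Fin (m + 1 - 1))) (γ β : Fin M) (t : ℝ) (ht : 0 < t) :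
    ∫ x', matDil P t x' γ β * Complex.exp (((-2 * π * inner ℝ x' ξ : ℝ) : ℂ) * Complex.I) =
      𝓕 (fun y => P y γ β) (t • ξ) := by
  rw [Real.fourier_eq']
  have := Measure.integral_comp_inv_smul_of_nonneg (μ := (volume : Measure (EuclideanSpace ℝ (Fin (m + 1 - 1)))))
    (fun y => Complex.exp (((-2 * π * inner ℝ y (t • ξ) : ℝ) : ℂ) * Complex.I) • P y γ β)
    ht.le
  have h2 : ((t ^ Module.finrank ℝ (EuclideanSpace ℝ (Fin (m + 1 - 1))) : ℝ) : ℂ) ≠ 0 := by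
    exact_mod_cast (pow_pos ht _).ne'
  rw [Complex.real_smul] at this
  rw [← mul_right_inj' h2, ← this, ← integral_const_mul]
  congr 1
  funext x'
  unfold matDil
  rw [Matrix.smul_apply, inner_smul_right, inner_smul_left]
  have e1 : t * ((starRingEnd ℝ) t⁻¹ * inner ℝ x' ξ) = inner ℝ x' ξ := by
    simp [ht.ne']
  rw [e1]
  rw [Complex.real_smul, smul_eq_mul]
  have e2 : ((t ^ Module.finrank ℝ (EuclideanSpace ℝ (Fin (m + 1 - 1))) : ℝ) : ℂ) *
      ((t ^ ((1 : ℤ) - ((m + 1 : ℕ) : ℤ)) : ℝ) : ℂ) = 1 := by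
    have e3 : t ^ Module.finrank ℝ (EuclideanSpace ℝ (Fin (m + 1 - 1))) *
        t ^ ((1 : ℤ) - ((m + 1 : ℕ) : ℤ)) = 1 := by
      have e4 : ((m + 1 - 1 : ℕ) : ℤ) + ((1 : ℤ) - ((m + 1 : ℕ) : ℤ)) = 0 := by
        simp
      rw [finrank_euclideanSpace_fin, ← zpow_natCast, ← zpow_add₀ ht.ne', e4, zpow_zero]
    rw [← Complex.ofReal_mul, e3, Complex.ofReal_one]
  linear_combination (Complex.exp (((-2 * π * inner ℝ x' ξ : ℝ) : ℂ) * Complex.I) * P (t⁻¹ • x') γ β) * e2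

end WeakKernel
section WeakKernel2
open scoped FourierTransform
variable {m M : ℕ}

/-- The symbol of the system acting on the height profile. -/
def sym (A : Fin (m + 1) → Fin (m + 1) → Fin M → Fin M → ℂ)
    (ξ : EuclideanSpace ℝ (Fin (m + 1 - 1))) (α γ : Fin M) (θ : ℝ → ℂ) (t : ℝ) : ℂ :=
  ∑ r, ∑ s, A r s α γ * dv (phs ξ) (hgt m) r (dv (phs ξ) (hgt m) s θ) t

lemma weak_lim (A : Fin (m + 1) → Fin (m + 1) → Fin M → Fin M → ℂ)
    (P : EuclideanSpace ℝ (Fin (m + 1 - 1)) → Matrix (Fin M) (Fin M) ℂ)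
    (hP : IsPoissonKernelFor (m + 1) M A P) (ξ : EuclideanSpace ℝ (Fin (m + 1 - 1)))
    (α β : Fin M) (θ : ℝ → ℂ) (hθ : ContDiff ℝ (⊤ : ℕ∞) θ) (hθc : HasCompactSupport θ)
    (hθ0 : tsupport θ ⊆ Set.Ioi 0) :
    ∫ p in (Set.univ ×ˢ Set.Ioi (0 : ℝ) : Set (EuclideanSpace ℝ (Fin (m + 1 - 1)) × ℝ)),
      ∑ γ, matDil P p.2 p.1 γ β *
        Complex.exp (((-2 * π * inner ℝ p.1 ξ : ℝ) : ℂ) * Complex.I) * sym A ξ α γ θ p.2 = 0 := by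
  obtain ⟨hPm, ⟨C, hC, hPd⟩, -, hPw⟩ := hP
  obtain ⟨f, B, fs, fc, ft, fb, fl⟩ := wave_test (phs ξ) (hgt m) (phs_re ξ) θ hθ hθc
  obtain ⟨C', hC', hK⟩ := kernel_bound P C hC hPd _ hθc hθ0
  set S := tsupport θ with hS
  have z : ∀ N, ∫ p in (Set.univ ×ˢ Set.Ioi (0 : ℝ) : Set (EuclideanSpace ℝ (Fin (m + 1 - 1)) × ℝ)),
      ∑ γ, ∑ r, ∑ s, matDil P p.2 p.1 γ β * A r s α γ * pd r (pd s (f N)) (toUp p.1 p.2) = 0 := by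
    intro N
    have h1 := hPw (fun y => EuclideanSpace.single α (f N y)) ?_ ?_ ?_ β
    · rw [integral_upper] at h1
      rw [← h1]
      congr 1
      funext p
      simp only [xlast_toUp, xinit_toUp]
      apply Finset.sum_congr rfl
      intro γ _
      rw [Finset.sum_eq_single α]
      · simp
      · intro b _ hb
        have : (fun y => (EuclideanSpace.single α (f N y) : EuclideanSpace ℂ (Fin M)) b) =
            fun _ => 0 := by
          funext y; simp [hb]
        simp only [this, pd_zero]
        simp
      · simp
    · have e : (fun y => (EuclideanSpace.single α (f N y) : EuclideanSpace ℂ (Fin M))) =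
          fun y => f N y • (EuclideanSpace.single α (1 : ℂ) : EuclideanSpace ℂ (Fin M)) := by
        funext y
        ext i
        by_cases h : i = α <;> simp [h]
      rw [e]
      exact (fs N).smul contDiff_const
    · exact (fc N).comp_left (g := fun z => (EuclideanSpace.single α z : EuclideanSpace ℂ (Fin M)))
        (by simp)
    · refine ((closure_mono ?_).trans (ft N)).trans ?_
      · intro y hy h
        apply hy
        simp [h]
      · intro x hx
        have := hθ0 hx
        rw [hgt_eq] at this
        exact this
  have lim := tendsto_integral_of_dominated_convergence
    (μ := volume.restrict (Set.univ ×ˢ Set.Ioi (0 : ℝ) : Set (EuclideanSpace ℝ (Fin (m + 1 - 1)) × ℝ)))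
    (F := fun N p => ∑ γ, ∑ r, ∑ s, matDil P p.2 p.1 γ β * A r s α γ * pd r (pd s (f N)) (toUp p.1 p.2))
    (f := fun p => ∑ γ, matDil P p.2 p.1 γ β *
        Complex.exp (((-2 * π * inner ℝ p.1 ξ : ℝ) : ℂ) * Complex.I) * sym A ξ α γ θ p.2)
    (fun p => ∑ γ : Fin M, ∑ r, ∑ s, (C' * ‖A r s α γ‖ * B r s) *
      ((1 + ‖p.1‖ ^ 2) ^ (-((m + 1 : ℕ) : ℝ) / 2) * S.indicator 1 p.2)) ?_ ?_ ?_ ?_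
  · simp_rw [z] at lim
    exact (tendsto_nhds_unique lim tendsto_const_nhds)
  · intro N
    apply Measurable.aestronglyMeasurable
    refine Finset.measurable_sum _ fun γ _ => Finset.measurable_sum _ fun r _ =>
      Finset.measurable_sum _ fun s _ => ?_
    exact ((matDil_measurable P hPm γ β).mul_const _).mul
      ((pd_contDiff r _ (pd_contDiff s _ (fs N))).continuous.measurable.comp toUp_emb.measurable)
  · refine (integrable_finsetSum _ fun γ _ => integrable_finsetSum _ fun r _ =>
      integrable_finsetSum _ fun s _ => Integrable.const_mul ?_ _).integrableOn
    refine Integrable.mul_prod decay_integrable ?_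
    rw [integrable_indicator_iff (isClosed_tsupport θ).measurableSet]
    have : volume S < ∞ := hθc.measure_lt_top
    simp only [Pi.one_def]
    exact integrableOn_const this.ne
  · intro N
    refine Eventually.of_forall fun p => ?_
    refine norm_sum_le_of_le _ fun γ _ => norm_sum_le_of_le _ fun r _ =>
      norm_sum_le_of_le _ fun s _ => ?_
    have b := fb N r s (toUp p.1 p.2)
    rw [hgt_eq, xlast_toUp] at b
    by_cases h : p.2 ∈ S
    · rw [Set.indicator_of_mem h] at b ⊢
      have k := hK p.2 h p.1 γ β
      rw [norm_mul, norm_mul]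
      simp only [Pi.one_apply, mul_one] at b ⊢
      calc _ ≤ (C' * (1 + ‖p.1‖ ^ 2) ^ (-((m + 1 : ℕ) : ℝ) / 2)) * ‖A r s α γ‖ * B r s := by
            apply mul_le_mul _ b (norm_nonneg _) (by positivity)
            exact mul_le_mul_of_nonneg_right k (norm_nonneg _)
        _ = _ := by ring
    · rw [Set.indicator_of_notMem h] at b ⊢
      have b2 : pd r (pd s (f N)) (toUp p.1 p.2) = 0 := by
        rw [mul_zero] at b
        exact norm_le_zero_iff.1 b
      rw [b2]
      simp
  · refine Eventually.of_forall fun p => ?_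
    have e : ∀ γ, matDil P p.2 p.1 γ β *
        Complex.exp (((-2 * π * inner ℝ p.1 ξ : ℝ) : ℂ) * Complex.I) * sym A ξ α γ θ p.2 =
        ∑ r, ∑ s, matDil P p.2 p.1 γ β * A r s α γ *
          wv (phs ξ) (hgt m) (dv (phs ξ) (hgt m) r (dv (phs ξ) (hgt m) s θ)) (toUp p.1 p.2) := by
      intro γ
      unfold sym wv
      rw [Finset.mul_sum]
      apply Finset.sum_congr rfl
      intro r _
      rw [Finset.mul_sum]
      apply Finset.sum_congr rfl
      intro s _
      rw [phs_eq, xinit_toUp, hgt_eq, xlast_toUp]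
      ring
    simp_rw [e]
    exact tendsto_finsetSum _ fun γ _ => tendsto_finsetSum _ fun r _ =>
      tendsto_finsetSum _ fun s _ => (fl r s _).const_mul _

lemma sym_contDiff (A : Fin (m + 1) → Fin (m + 1) → Fin M → Fin M → ℂ)
    (ξ : EuclideanSpace ℝ (Fin (m + 1 - 1))) (α γ : Fin M) (θ : ℝ → ℂ)
    (hθ : ContDiff ℝ (⊤ : ℕ∞) θ) : ContDiff ℝ (⊤ : ℕ∞) (sym A ξ α γ θ) := by
  unfold sym
  refine ContDiff.sum fun r _ => ContDiff.sum fun s _ => contDiff_const.mul ?_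
  exact dv_contDiff _ _ _ _ (dv_contDiff _ _ _ _ hθ)

lemma sym_zero (A : Fin (m + 1) → Fin (m + 1) → Fin M → Fin M → ℂ)
    (ξ : EuclideanSpace ℝ (Fin (m + 1 - 1))) (α γ : Fin M) (θ : ℝ → ℂ) (t : ℝ)
    (ht : t ∉ tsupport θ) : sym A ξ α γ θ t = 0 := by
  unfold sym
  refine Finset.sum_eq_zero fun r _ => Finset.sum_eq_zero fun s _ => ?_
  rw [image_eq_zero_of_notMem_tsupport fun h => ht (dv_tsupport _ _ _ _ (dv_tsupport _ _ _ _ h)),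
    mul_zero]

lemma weak_kernel (A : Fin (m + 1) → Fin (m + 1) → Fin M → Fin M → ℂ)
    (P : EuclideanSpace ℝ (Fin (m + 1 - 1)) → Matrix (Fin M) (Fin M) ℂ)
    (hP : IsPoissonKernelFor (m + 1) M A P) (ξ : EuclideanSpace ℝ (Fin (m + 1 - 1)))
    (α β : Fin M) (θ : ℝ → ℂ) (hθ : ContDiff ℝ (⊤ : ℕ∞) θ) (hθc : HasCompactSupport θ)
    (hθ0 : tsupport θ ⊆ Set.Ioi 0) :
    ∑ γ, ∫ t, 𝓕 (fun y => P y γ β) (t • ξ) * sym A ξ α γ θ t = 0 := by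
  have h := weak_lim A P hP ξ α β θ hθ hθc hθ0
  obtain ⟨hPm, ⟨C, hC, hPd⟩, -, -⟩ := hP
  obtain ⟨C', hC', hK⟩ := kernel_bound P C hC hPd _ hθc hθ0
  set S := tsupport θ with hS
  have int : ∀ γ, Integrable (fun p : EuclideanSpace ℝ (Fin (m + 1 - 1)) × ℝ => matDil P p.2 p.1 γ β *
        Complex.exp (((-2 * π * inner ℝ p.1 ξ : ℝ) : ℂ) * Complex.I) * sym A ξ α γ θ p.2) := by
    intro γ
    have sc : HasCompactSupport (sym A ξ α γ θ) :=
      HasCompactSupport.intro hθc fun t ht => sym_zero A ξ α γ θ t ht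
    have si : Integrable (fun t => ‖sym A ξ α γ θ t‖) :=
      ((sym_contDiff A ξ α γ θ hθ).continuous.integrable_of_hasCompactSupport sc).norm
    refine Integrable.mono' ((decay_integrable (m := m)).mul_prod si |>.const_mul C') ?_ ?_
    · apply Measurable.aestronglyMeasurable
      have h1 : Measurable (fun p : EuclideanSpace ℝ (Fin (m + 1 - 1)) × ℝ =>
          Complex.exp (((-2 * π * inner ℝ p.1 ξ : ℝ) : ℂ) * Complex.I)) := by
        apply Continuous.measurable
        fun_prop
      exact ((matDil_measurable P hPm γ β).mul h1).mul
        ((sym_contDiff A ξ α γ θ hθ).continuous.measurable.comp measurable_snd)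
    · refine Eventually.of_forall fun p => ?_
      rw [norm_mul, norm_mul, Complex.norm_exp_ofReal_mul_I, mul_one, ← mul_assoc]
      by_cases ht : p.2 ∈ S
      · exact mul_le_mul_of_nonneg_right (hK p.2 ht p.1 γ β) (norm_nonneg _)
      · rw [sym_zero A ξ α γ θ p.2 ht]; simp
  rw [integral_finsetSum _ fun γ _ => (int γ).integrableOn] at h
  rw [← h]
  apply Finset.sum_congr rfl
  intro γ _
  have hi := (int γ).integrableOn (s := Set.univ ×ˢ Set.Ioi (0 : ℝ))
  unfold IntegrableOn at hi
  rw [Measure.volume_eq_prod, ← Measure.prod_restrict, Measure.restrict_univ] at hi ⊢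
  rw [integral_prod_symm _ hi]
  rw [← setIntegral_eq_integral_of_forall_compl_eq_zero (s := Set.Ioi (0 : ℝ))]
  · apply setIntegral_congr_fun measurableSet_Ioi
    intro t ht
    simp only
    rw [integral_mul_const, dil_fourier P ξ γ β t ht]
  · intro t ht
    rw [sym_zero A ξ α γ θ t fun h' => ht (hθ0 h'), mul_zero]

end WeakKernel2
section FourierFacts
open scoped FourierTransform SchwartzMap
variable {V : Type*} [NormedAddCommGroup V] [InnerProductSpace ℝ V] [FiniteDimensional ℝ V]
  [MeasurableSpace V] [BorelSpace V]

lemma fourier_inj (f : V → ℂ) (hf : Integrable f) (h : ∀ w, 𝓕 f w = 0) : ∀ᵐ x, f x = 0 := by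
  apply ae_eq_zero_of_integral_contDiff_smul_eq_zero hf.locallyIntegrable
  intro g hg hgc
  have gs : ContDiff ℝ (⊤ : ℕ∞) (fun x => (g x : ℂ)) := Complex.ofRealCLM.contDiff.comp hg
  have gc : HasCompactSupport (fun x => (g x : ℂ)) :=
    hgc.comp_left (g := fun r : ℝ => (r : ℂ)) (by simp)
  let G : 𝓢(V, ℂ) := gc.toSchwartzMap gs
  have hG : ∀ x, G x = (g x : ℂ) := fun x => rfl
  let F : 𝓢(V, ℂ) := 𝓕⁻ G
  have hF : 𝓕 F = G := FourierTransform.fourier_fourierInv_eq G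
  have key : ∫ ξ, 𝓕 f ξ * F ξ = ∫ x, f x * 𝓕 (F : V → ℂ) x := by
    simpa using! VectorFourier.integral_bilin_fourierIntegral_eq_flip (ContinuousLinearMap.mul ℂ ℂ)
      (L := innerₗ V) (μ := volume) (ν := volume)
      continuous_fourierChar continuous_inner hf F.integrable
  rw [← SchwartzMap.fourier_coe, hF] at key
  simp only [h, zero_mul, integral_zero, hG] at key
  rw [key]
  congr 1
  funext x
  rw [Complex.real_smul, mul_comm]

lemma fourier_cont (f : V → ℂ) (hf : Integrable f) : Continuous (fun w => 𝓕 f w) :=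
  VectorFourier.fourierIntegral_continuous continuous_fourierChar
    (by exact continuous_inner) hf

lemma fourier_bdd (f : V → ℂ) (w : V) : ‖𝓕 f w‖ ≤ ∫ x, ‖f x‖ :=
  VectorFourier.norm_fourierIntegral_le_integral_norm _ _ _ _ _

lemma fourier_sub_fun (f g : V → ℂ) (hf : Integrable f) (hg : Integrable g) (w : V) :
    𝓕 (fun x => f x - g x) w = 𝓕 f w - 𝓕 g w := by
  have h1 := (VectorFourier.fourierIntegral_convergent_iff (L := innerₗ V) (μ := volume)
    continuous_fourierChar continuous_inner w).2 hf
  have h2 := (VectorFourier.fourierIntegral_convergent_iff (L := innerₗ V) (μ := volume)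
    continuous_fourierChar continuous_inner w).2 hg
  rw [Real.fourier_eq, Real.fourier_eq, Real.fourier_eq]
  simp_rw [smul_sub]
  exact integral_sub h1 h2

lemma exp_holder (x : ℝ) : ‖Complex.exp ((x : ℂ) * Complex.I) - 1‖ ≤ 2 * |x| ^ (3 / 4 : ℝ) := by
  by_cases h : |x| ≤ 1
  · have h1 : ‖Complex.exp ((x : ℂ) * Complex.I) - 1‖ ≤ |x| := by
      rw [mul_comm]; exact Real.norm_exp_I_mul_ofReal_sub_one_le
    have h2 : |x| ≤ |x| ^ (3 / 4 : ℝ) := by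
      rcases (abs_nonneg x).eq_or_lt with h0 | h0
      · rw [← h0]; positivity
      · calc |x| = |x| ^ (1 : ℝ) := (Real.rpow_one _).symm
          _ ≤ _ := Real.rpow_le_rpow_of_exponent_ge h0 h (by norm_num)
    have : 0 ≤ |x| ^ (3 / 4 : ℝ) := by positivity
    linarith
  · have h1 : ‖Complex.exp ((x : ℂ) * Complex.I) - 1‖ ≤ 2 := by
      refine (norm_sub_le _ _).trans ?_
      rw [Complex.norm_exp_ofReal_mul_I]; norm_num
    have : 1 ≤ |x| ^ (3 / 4 : ℝ) := Real.one_le_rpow (by linarith) (by norm_num)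
    linarith

lemma fourier_holder (f : V → ℂ) (hfm : Measurable f) (C : ℝ) (hC : 0 ≤ C)
    (hf : ∀ x, ‖f x‖ ≤ C * (1 + ‖x‖ ^ 2) ^ (-((Module.finrank ℝ V + 1 : ℕ) : ℝ) / 2))
    (h0 : ∫ x, f x = 0) :
    ∃ D : ℝ, 0 ≤ D ∧ ∀ w, ‖𝓕 f w‖ ≤ D * ‖w‖ ^ (3 / 4 : ℝ) := by
  set d : ℝ := (Module.finrank ℝ V : ℝ) with hd
  have i1 : Integrable (fun x : V => (1 + ‖x‖ ^ 2) ^ (-((Module.finrank ℝ V + 1 : ℕ) : ℝ) / 2)) :=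
    integrable_rpow_neg_one_add_norm_sq (by push_cast; linarith)
  have i2 : Integrable (fun x : V => (1 + ‖x‖ ^ 2) ^ (-(d + 1 / 4) / 2)) :=
    integrable_rpow_neg_one_add_norm_sq (by linarith)
  have fi : Integrable f :=
    (i1.const_mul C).mono' hfm.aestronglyMeasurable (Eventually.of_forall hf)
  refine ⟨2 * (2 * π) ^ (3 / 4 : ℝ) * C * ∫ x : V, (1 + ‖x‖ ^ 2) ^ (-(d + 1 / 4) / 2),
    by
      have : 0 ≤ ∫ x : V, (1 + ‖x‖ ^ 2) ^ (-(d + 1 / 4) / 2) :=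
        integral_nonneg fun x => by positivity
      positivity, fun w => ?_⟩
  have e1 : 𝓕 f w = ∫ x, (Complex.exp (((-2 * π * inner ℝ x w : ℝ) : ℂ) * Complex.I) - 1) * f x := by
    have c1 : Integrable (fun x => Complex.exp (((-2 * π * inner ℝ x w : ℝ) : ℂ) * Complex.I) * f x) := by
      refine fi.norm.mono' ?_ ?_
      · refine AEStronglyMeasurable.mul ?_ hfm.aestronglyMeasurable
        apply Continuous.aestronglyMeasurable
        fun_prop
      · refine Eventually.of_forall fun x => ?_
        rw [norm_mul, Complex.norm_exp_ofReal_mul_I, one_mul]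
    simp_rw [sub_mul, one_mul]
    rw [integral_sub c1 fi, h0, sub_zero, Real.fourier_eq']
    simp only [smul_eq_mul]
  rw [e1]
  have bd : ∀ x, ‖(Complex.exp (((-2 * π * inner ℝ x w : ℝ) : ℂ) * Complex.I) - 1) * f x‖ ≤
      (2 * (2 * π) ^ (3 / 4 : ℝ) * C * ‖w‖ ^ (3 / 4 : ℝ)) * (1 + ‖x‖ ^ 2) ^ (-(d + 1 / 4) / 2) := by
    intro x
    rw [norm_mul]
    have a1 := exp_holder (-2 * π * inner ℝ x w)
    have a2 : |-2 * π * inner ℝ x w| ≤ 2 * π * ((1 + ‖x‖ ^ 2) ^ (1 / 2 : ℝ) * ‖w‖) := by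
      rw [abs_mul, abs_mul, abs_neg, abs_two, abs_of_pos Real.pi_pos]
      have := abs_real_inner_le_norm x w
      have hx : ‖x‖ ≤ (1 + ‖x‖ ^ 2) ^ (1 / 2 : ℝ) := by
        rw [← Real.sqrt_eq_rpow]
        apply Real.le_sqrt_of_sq_le
        linarith
      have : ‖x‖ * ‖w‖ ≤ (1 + ‖x‖ ^ 2) ^ (1 / 2 : ℝ) * ‖w‖ := by gcongr
      gcongr
      linarith
    have a3 : |-2 * π * inner ℝ x w| ^ (3 / 4 : ℝ) ≤
        (2 * π) ^ (3 / 4 : ℝ) * ((1 + ‖x‖ ^ 2) ^ (3 / 8 : ℝ) * ‖w‖ ^ (3 / 4 : ℝ)) := by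
      refine (Real.rpow_le_rpow (abs_nonneg _) a2 (by norm_num)).trans (le_of_eq ?_)
      rw [Real.mul_rpow (x := 2 * π) (by positivity) (by positivity),
        Real.mul_rpow (x := (1 + ‖x‖ ^ 2) ^ (1 / 2 : ℝ)) (by positivity) (by positivity),
        ← Real.rpow_mul (by positivity)]
      norm_num
    have a4 : (1 + ‖x‖ ^ 2) ^ (-(d + 1 / 4) / 2) = (1 + ‖x‖ ^ 2) ^ (3 / 8 : ℝ) *
        (1 + ‖x‖ ^ 2) ^ (-((Module.finrank ℝ V + 1 : ℕ) : ℝ) / 2) := by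
      rw [← Real.rpow_add (by positivity)]
      congr 1
      push_cast
      rw [← hd]
      ring
    rw [a4]
    calc _ ≤ (2 * ((2 * π) ^ (3 / 4 : ℝ) * ((1 + ‖x‖ ^ 2) ^ (3 / 8 : ℝ) * ‖w‖ ^ (3 / 4 : ℝ)))) *
          (C * (1 + ‖x‖ ^ 2) ^ (-((Module.finrank ℝ V + 1 : ℕ) : ℝ) / 2)) :=
        mul_le_mul (a1.trans (by linarith)) (hf x) (norm_nonneg _) (by positivity)
      _ = _ := by ring
  refine (norm_integral_le_of_norm_le (i2.const_mul _) (Eventually.of_forall bd)).trans (le_of_eq ?_)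
  rw [integral_const_mul]
  ring

end FourierFacts
section Assemble
open scoped FourierTransform
variable {m M : ℕ}

/-- directional coefficients -/
def eC (r : Fin (m + 1)) : ℂ := ((hgt m (EuclideanSpace.single r 1) : ℝ) : ℂ)

/-- directional coefficients -/
def lC (ξ : EuclideanSpace ℝ (Fin (m + 1 - 1))) (r : Fin (m + 1)) : ℂ :=
  phs ξ (EuclideanSpace.single r 1)

/-- second order matrix -/
def cA (A : Fin (m + 1) → Fin (m + 1) → Fin M → Fin M → ℂ) : Matrix (Fin M) (Fin M) ℂ :=
  fun α γ => ∑ r, ∑ s, A r s α γ * (eC r * eC s)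

/-- first order matrix -/
def cB (A : Fin (m + 1) → Fin (m + 1) → Fin M → Fin M → ℂ)
    (ξ : EuclideanSpace ℝ (Fin (m + 1 - 1))) : Matrix (Fin M) (Fin M) ℂ :=
  fun α γ => - ∑ r, ∑ s, A r s α γ * (eC r * lC ξ s + lC ξ r * eC s)

/-- zeroth order matrix -/
def cC (A : Fin (m + 1) → Fin (m + 1) → Fin M → Fin M → ℂ)
    (ξ : EuclideanSpace ℝ (Fin (m + 1 - 1))) : Matrix (Fin M) (Fin M) ℂ :=
  fun α γ => ∑ r, ∑ s, A r s α γ * (lC ξ r * lC ξ s)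

lemma deriv_ofReal_fun (ψ : ℝ → ℝ) (h : ContDiff ℝ (⊤ : ℕ∞) ψ) :
    deriv (fun t => (ψ t : ℂ)) = fun t => ((deriv ψ t : ℝ) : ℂ) := by
  funext t
  exact ((h.differentiable (by simp) t).hasDerivAt.ofReal_comp).deriv

lemma sym_eq (A : Fin (m + 1) → Fin (m + 1) → Fin M → Fin M → ℂ)
    (ξ : EuclideanSpace ℝ (Fin (m + 1 - 1))) (α γ : Fin M) (ψ : ℝ → ℝ)
    (hψ : ContDiff ℝ (⊤ : ℕ∞) ψ) (t : ℝ) :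
    sym A ξ α γ (fun t => (ψ t : ℂ)) t = ((deriv (deriv ψ) t : ℝ) : ℂ) * cA A α γ -
      ((deriv ψ t : ℝ) : ℂ) * cB A ξ α γ + (ψ t : ℂ) * cC A ξ α γ := by
  have hψ1 : ContDiff ℝ (⊤ : ℕ∞) (deriv ψ) := ((contDiff_infty_iff_deriv (𝕜 := ℝ)).1 hψ).2
  have d1 : ∀ s, dv (phs ξ) (hgt m) s (fun t => (ψ t : ℂ)) =
      fun t => eC s * ((deriv ψ t : ℝ) : ℂ) + lC ξ s * (ψ t : ℂ) := by
    intro s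
    unfold dv
    rw [deriv_ofReal_fun ψ hψ]
    rfl
  have c0 : Differentiable ℝ (fun t => (ψ t : ℂ)) := fun t =>
    ((hψ.differentiable (by simp) t).hasDerivAt.ofReal_comp).differentiableAt
  have c1 : Differentiable ℝ (fun t => ((deriv ψ t : ℝ) : ℂ)) := fun t =>
    ((hψ1.differentiable (by simp) t).hasDerivAt.ofReal_comp).differentiableAt
  have d2 : ∀ s, deriv (fun t => eC s * ((deriv ψ t : ℝ) : ℂ) + lC ξ s * (ψ t : ℂ)) t =
      eC s * ((deriv (deriv ψ) t : ℝ) : ℂ) + lC ξ s * ((deriv ψ t : ℝ) : ℂ) := by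
    intro s
    rw [deriv_fun_add ((c1 t).const_mul _) ((c0 t).const_mul _), deriv_const_mul _ (c1 t),
      deriv_const_mul _ (c0 t), deriv_ofReal_fun ψ hψ, deriv_ofReal_fun _ hψ1]
  have d3 : ∀ r s, dv (phs ξ) (hgt m) r (dv (phs ξ) (hgt m) s (fun t => (ψ t : ℂ))) t =
      eC r * (eC s * ((deriv (deriv ψ) t : ℝ) : ℂ) + lC ξ s * ((deriv ψ t : ℝ) : ℂ)) +
      lC ξ r * (eC s * ((deriv ψ t : ℝ) : ℂ) + lC ξ s * (ψ t : ℂ)) := by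
    intro r s
    rw [d1]
    conv_lhs => unfold dv
    rw [d2]
    rfl
  unfold sym cA cB cC
  simp_rw [d3]
  rw [mul_neg, sub_neg_eq_add, Finset.mul_sum, Finset.mul_sum, Finset.mul_sum,
    ← Finset.sum_add_distrib, ← Finset.sum_add_distrib]
  apply Finset.sum_congr rfl
  intro r _
  rw [Finset.mul_sum, Finset.mul_sum, Finset.mul_sum,
    ← Finset.sum_add_distrib, ← Finset.sum_add_distrib]
  apply Finset.sum_congr rfl
  intro s _
  ring

lemma lC_eC (ξ : EuclideanSpace ℝ (Fin (m + 1 - 1))) (τ : ℝ) (r : Fin (m + 1)) :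
    lC ξ r - (2 * π * Complex.I * τ) * eC r = -(2 * π * Complex.I) * ((toUp (n := m + 1) ξ τ r : ℝ) : ℂ) := by
  unfold lC eC
  rw [phs_eq, hgt_eq]
  simp only [PiLp.inner_apply]
  induction r using Fin.lastCases with
  | last =>
    have h1 : xlast (EuclideanSpace.single (Fin.last m) (1 : ℝ)) = 1 := by
      simp [xlast, Fin.last]
    have h2 : ∀ i, xinit (EuclideanSpace.single (Fin.last m) (1 : ℝ)) i = 0 := by
      intro i
      have := i.2
      simp [xinit, Fin.ext_iff]
      omega
    simp [h1, h2, toUp]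
  | cast j =>
    have h1 : xlast (EuclideanSpace.single (Fin.castSucc j) (1 : ℝ)) = 0 := by
      have := j.2
      simp [xlast, Fin.ext_iff]
      omega
    have h2 : ∀ i, xinit (EuclideanSpace.single (Fin.castSucc j) (1 : ℝ)) i = if i = j then 1 else 0 := by
      intro i
      simp [xinit, Fin.ext_iff]
    have h3 : toUp (n := m + 1) ξ τ (Fin.castSucc j) = ξ j := by
      simp [toUp]
    have h4 : ∑ i, inner ℝ (xinit (EuclideanSpace.single (Fin.castSucc j) (1 : ℝ)) i) (ξ i) = ξ j := by
      refine (Finset.sum_eq_single (show Fin (m + 1 - 1) from j) ?_ ?_).trans ?_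
      · intro b _ hb
        rw [h2, if_neg hb]
        simp
      · intro hb
        exact absurd (Finset.mem_univ _) hb
      · rw [h2, if_pos rfl]
        simp
    rw [h1, h3, h4]
    push_cast
    ring

lemma toUp_sum (ξ : EuclideanSpace ℝ (Fin (m + 1 - 1))) (τ : ℝ) :
    ∑ r, (toUp (n := m + 1) ξ τ r) ^ 2 = ‖ξ‖ ^ 2 + τ ^ 2 := by
  rw [Fin.sum_univ_castSucc, EuclideanSpace.norm_sq_eq]
  congr 1
  · apply Finset.sum_congr rfl
    intro i _
    simp [toUp]
  · simp [toUp]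

lemma ell (A : Fin (m + 1) → Fin (m + 1) → Fin M → Fin M → ℂ) (κ₀ : ℝ)
    (hA : ∀ (ξ : Fin (m + 1) → ℝ) (η : Fin M → ℂ),
    κ₀ * (∑ r, ξ r ^ 2) * (∑ a, ‖η a‖ ^ 2) ≤
      (∑ r, ∑ s, ∑ a, ∑ b, A r s a b * ξ r * ξ s * (starRingEnd ℂ) (η a) * η b).re)
    (ξ : EuclideanSpace ℝ (Fin (m + 1 - 1))) (τ : ℝ) (η : EuclideanSpace ℂ (Fin M)) :
    4 * π ^ 2 * (κ₀ * (‖ξ‖ ^ 2 + τ ^ 2) * ‖η‖ ^ 2) ≤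
      -(inner ℂ η (((2 * π * Complex.I * τ) * (2 * π * Complex.I * τ)) •
        Matrix.toEuclideanCLM (𝕜 := ℂ) (cA A) η +
        (2 * π * Complex.I * τ) • Matrix.toEuclideanCLM (𝕜 := ℂ) (cB A ξ) η +
          Matrix.toEuclideanCLM (𝕜 := ℂ) (cC A ξ) η)).re := by
  have h := hA (fun r => toUp (n := m + 1) ξ τ r) (fun a => η a)
  rw [toUp_sum, ← EuclideanSpace.norm_sq_eq] at h
  set z : ℂ := 2 * π * Complex.I * τ with hz
  have e1 : ∀ α γ, z * z * cA A α γ + z * cB A ξ α γ + cC A ξ α γ =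
      -(4 * π ^ 2) * ∑ r, ∑ s, A r s α γ * ((toUp (n := m + 1) ξ τ r : ℝ) : ℂ) *
        ((toUp (n := m + 1) ξ τ s : ℝ) : ℂ) := by
    intro α γ
    unfold cA cB cC
    rw [mul_neg, Finset.mul_sum, Finset.mul_sum, Finset.mul_sum, ← Finset.sum_neg_distrib,
      ← Finset.sum_add_distrib, ← Finset.sum_add_distrib]
    apply Finset.sum_congr rfl
    intro r _
    rw [Finset.mul_sum, Finset.mul_sum, Finset.mul_sum, ← Finset.sum_neg_distrib,
      ← Finset.sum_add_distrib, ← Finset.sum_add_distrib]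
    apply Finset.sum_congr rfl
    intro s _
    have hr := lC_eC ξ τ r
    have hs := lC_eC ξ τ s
    rw [← hz] at hr hs
    have : z * z * (A r s α γ * (eC r * eC s)) + -(z * (A r s α γ * (eC r * lC ξ s + lC ξ r * eC s))) +
        A r s α γ * (lC ξ r * lC ξ s) = A r s α γ * ((lC ξ r - z * eC r) * (lC ξ s - z * eC s)) := by
      ring
    rw [this, hr, hs]
    linear_combination (4 * π ^ 2 * A r s α γ * ((toUp (n := m + 1) ξ τ r : ℝ) : ℂ) *
        ((toUp (n := m + 1) ξ τ s : ℝ) : ℂ)) * Complex.I_mul_I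
  have e2 : inner ℂ η ((z * z) • Matrix.toEuclideanCLM (𝕜 := ℂ) (cA A) η +
        z • Matrix.toEuclideanCLM (𝕜 := ℂ) (cB A ξ) η +
          Matrix.toEuclideanCLM (𝕜 := ℂ) (cC A ξ) η) =
      (-(4 * π ^ 2 : ℝ) : ℂ) * ∑ r, ∑ s, ∑ a, ∑ b, A r s a b * ((toUp (n := m + 1) ξ τ r : ℝ) : ℂ) *
        ((toUp (n := m + 1) ξ τ s : ℝ) : ℂ) * (starRingEnd ℂ) (η a) * η b := by
    have s1 : inner ℂ η ((z * z) • Matrix.toEuclideanCLM (𝕜 := ℂ) (cA A) η +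
        z • Matrix.toEuclideanCLM (𝕜 := ℂ) (cB A ξ) η +
          Matrix.toEuclideanCLM (𝕜 := ℂ) (cC A ξ) η) =
        ∑ α, ∑ γ, (z * z * cA A α γ + z * cB A ξ α γ + cC A ξ α γ) * (starRingEnd ℂ) (η α) * η γ := by
      rw [PiLp.inner_apply]
      apply Finset.sum_congr rfl
      intro α _
      simp only [PiLp.add_apply, PiLp.smul_apply, Matrix.ofLp_toEuclideanCLM, Matrix.mulVec,
        dotProduct, RCLike.inner_apply, smul_eq_mul, Finset.mul_sum, Finset.sum_mul,
        ← Finset.sum_add_distrib]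
      apply Finset.sum_congr rfl
      intro γ _
      ring
    rw [s1]
    simp_rw [e1]
    have s2 : ∀ α γ, -(4 * π ^ 2 : ℂ) * (∑ r, ∑ s, A r s α γ * ((toUp (n := m + 1) ξ τ r : ℝ) : ℂ) *
        ((toUp (n := m + 1) ξ τ s : ℝ) : ℂ)) * (starRingEnd ℂ) (η α) * η γ =
        (-(4 * π ^ 2 : ℝ) : ℂ) * ∑ r, ∑ s, A r s α γ * ((toUp (n := m + 1) ξ τ r : ℝ) : ℂ) *
        ((toUp (n := m + 1) ξ τ s : ℝ) : ℂ) * (starRingEnd ℂ) (η α) * η γ := by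
      intro α γ
      push_cast
      simp only [Finset.mul_sum, Finset.sum_mul]
      refine Finset.sum_congr rfl fun r _ => Finset.sum_congr rfl fun s _ => by ring
    simp_rw [s2, ← Finset.mul_sum]
    congr 1
    simp_rw [Finset.sum_comm (γ := Fin M) (α := Fin (m + 1))]
  rw [e2]
  rw [show (-(4 * π ^ 2 : ℝ) : ℂ) = ((-(4 * π ^ 2) : ℝ) : ℂ) by push_cast; ring, Complex.re_ofReal_mul]
  have hp : 0 ≤ 4 * π ^ 2 := by positivity
  have := mul_le_mul_of_nonneg_left h hp
  linarith

end Assemble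
section Final
open scoped FourierTransform
variable {m M : ℕ}

lemma eucl_norm_le (x : EuclideanSpace ℂ (Fin M)) : ‖x‖ ≤ ∑ i, ‖x i‖ := by
  rw [EuclideanSpace.norm_eq]
  apply Real.sqrt_le_iff.2
  exact ⟨Finset.sum_nonneg fun i _ => norm_nonneg _,
    Finset.sum_sq_le_sq_sum_of_nonneg fun i _ => norm_nonneg _⟩

lemma kernel_integrable (P : EuclideanSpace ℝ (Fin (m + 1 - 1)) → Matrix (Fin M) (Fin M) ℂ)
    (A : Fin (m + 1) → Fin (m + 1) → Fin M → Fin M → ℂ)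
    (hP : IsPoissonKernelFor (m + 1) M A P) (γ β : Fin M) : Integrable (fun y => P y γ β) := by
  obtain ⟨hPm, ⟨C, hC, hPd⟩, -, -⟩ := hP
  exact (decay_integrable.const_mul C).mono' (hPm γ β).aestronglyMeasurable
    (Eventually.of_forall fun y => hPd y γ β)

lemma diff_weak (A : Fin (m + 1) → Fin (m + 1) → Fin M → Fin M → ℂ)
    (P Q : EuclideanSpace ℝ (Fin (m + 1 - 1)) → Matrix (Fin M) (Fin M) ℂ)
    (hP : IsPoissonKernelFor (m + 1) M A P) (hQ : IsPoissonKernelFor (m + 1) M A Q)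
    (ξ : EuclideanSpace ℝ (Fin (m + 1 - 1))) (β : Fin M) (g : ℝ → EuclideanSpace ℂ (Fin M))
    (hg : ∀ t γ, g t γ = 𝓕 (fun y => P y γ β - Q y γ β) (t • ξ)) (hgc : Continuous g)
    (ψ : ℝ → ℝ) (hψ : ContDiff ℝ (⊤ : ℕ∞) ψ) (hψc : HasCompactSupport ψ)
    (hψ0 : tsupport ψ ⊆ Set.Ioi 0) :
    ∫ t, (deriv (deriv ψ) t • Matrix.toEuclideanCLM (𝕜 := ℂ) (cA A) (g t) -
      deriv ψ t • Matrix.toEuclideanCLM (𝕜 := ℂ) (cB A ξ) (g t) +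
      ψ t • Matrix.toEuclideanCLM (𝕜 := ℂ) (cC A ξ) (g t)) = 0 := by
  set F : ℝ → EuclideanSpace ℂ (Fin M) := fun t =>
    (deriv (deriv ψ) t • Matrix.toEuclideanCLM (𝕜 := ℂ) (cA A) (g t) -
      deriv ψ t • Matrix.toEuclideanCLM (𝕜 := ℂ) (cB A ξ) (g t) +
      ψ t • Matrix.toEuclideanCLM (𝕜 := ℂ) (cC A ξ) (g t)) with hF
  have hψ1 : ContDiff ℝ (⊤ : ℕ∞) (deriv ψ) := ((contDiff_infty_iff_deriv (𝕜 := ℝ)).1 hψ).2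
  have hψ2 : ContDiff ℝ (⊤ : ℕ∞) (deriv (deriv ψ)) := ((contDiff_infty_iff_deriv (𝕜 := ℝ)).1 hψ1).2
  have Fc : Continuous F := by
    have := hψ.continuous
    have := hψ1.continuous
    have := hψ2.continuous
    rw [hF]
    fun_prop
  have Fs : HasCompactSupport F := by
    refine HasCompactSupport.intro hψc fun t ht => ?_
    have h1 : t ∉ tsupport (deriv ψ) := fun h => ht (closure_minimal support_deriv_subset
      (isClosed_tsupport ψ) h)
    have h2 : t ∉ tsupport (deriv (deriv ψ)) := fun h => h1 (closure_minimal support_deriv_subset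
      (isClosed_tsupport _) h)
    simp only [hF, image_eq_zero_of_notMem_tsupport ht, image_eq_zero_of_notMem_tsupport h1,
      image_eq_zero_of_notMem_tsupport h2]
    simp
  have Fi : Integrable F := Fc.integrable_of_hasCompactSupport Fs
  have θs : ContDiff ℝ (⊤ : ℕ∞) (fun t => (ψ t : ℂ)) := Complex.ofRealCLM.contDiff.comp hψ
  have θc : HasCompactSupport (fun t => (ψ t : ℂ)) :=
    hψc.comp_left (g := fun r : ℝ => (r : ℂ)) (by simp)
  have θt : tsupport (fun t => (ψ t : ℂ)) ⊆ Set.Ioi 0 := by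
    refine (closure_mono ?_).trans hψ0
    intro t ht h
    apply ht
    simp [h]
  ext α
  have e1 : (∫ t, F t) α = ∫ t, F t α := by
    exact ((EuclideanSpace.proj α : EuclideanSpace ℂ (Fin M) →L[ℂ] ℂ).integral_comp_comm Fi).symm
  have int : ∀ (K : EuclideanSpace ℝ (Fin (m + 1 - 1)) → Matrix (Fin M) (Fin M) ℂ),
      IsPoissonKernelFor (m + 1) M A K → ∀ γ, Integrable (fun t : ℝ => 𝓕 (fun y => K y γ β) (t • ξ) *
        sym A ξ α γ (fun t => (ψ t : ℂ)) t) := by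
    intro K hK γ
    have c1 : Continuous (fun t : ℝ => 𝓕 (fun y => K y γ β) (t • ξ)) :=
      (fourier_cont _ (kernel_integrable K A hK γ β)).comp (by fun_prop)
    apply Continuous.integrable_of_hasCompactSupport
    · exact c1.mul (sym_contDiff A ξ α γ _ θs).continuous
    · have : HasCompactSupport (sym A ξ α γ (fun t => (ψ t : ℂ))) :=
        HasCompactSupport.intro θc fun t ht => sym_zero A ξ α γ _ t ht
      exact this.mul_left
  have e2 : ∀ t, F t α = ∑ γ, (𝓕 (fun y => P y γ β) (t • ξ) * sym A ξ α γ (fun t => (ψ t : ℂ)) t -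
      𝓕 (fun y => Q y γ β) (t • ξ) * sym A ξ α γ (fun t => (ψ t : ℂ)) t) := by
    intro t
    simp only [hF, PiLp.add_apply, PiLp.sub_apply, PiLp.smul_apply, Matrix.ofLp_toEuclideanCLM,
      Matrix.mulVec, dotProduct, Complex.real_smul, Finset.mul_sum, ← Finset.sum_add_distrib,
      ← Finset.sum_sub_distrib]
    apply Finset.sum_congr rfl
    intro γ _
    rw [sym_eq A ξ α γ ψ hψ, hg, fourier_sub_fun _ _ (kernel_integrable P A hP γ β)
      (kernel_integrable Q A hQ γ β)]
    ring
  have int2 : ∀ γ, Integrable (fun t : ℝ =>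
      𝓕 (fun y => P y γ β) (t • ξ) * sym A ξ α γ (fun t => (ψ t : ℂ)) t -
      𝓕 (fun y => Q y γ β) (t • ξ) * sym A ξ α γ (fun t => (ψ t : ℂ)) t) :=
    fun γ => (int P hP γ).sub (int Q hQ γ)
  rw [e1]
  simp_rw [e2]
  rw [integral_finsetSum _ fun γ _ => int2 γ]
  have e3 : ∀ γ, ∫ t : ℝ, (𝓕 (fun y => P y γ β) (t • ξ) * sym A ξ α γ (fun t => (ψ t : ℂ)) t -
      𝓕 (fun y => Q y γ β) (t • ξ) * sym A ξ α γ (fun t => (ψ t : ℂ)) t) =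
      (∫ t : ℝ, 𝓕 (fun y => P y γ β) (t • ξ) * sym A ξ α γ (fun t => (ψ t : ℂ)) t) -
      ∫ t : ℝ, 𝓕 (fun y => Q y γ β) (t • ξ) * sym A ξ α γ (fun t => (ψ t : ℂ)) t := fun γ =>
    integral_sub (int P hP γ) (int Q hQ γ)
  simp_rw [e3]
  rw [Finset.sum_sub_distrib, weak_kernel A P hP ξ α β _ θs θc θt,
    weak_kernel A Q hQ ξ α β _ θs θc θt]
  simp

lemma diff_fourier_zero (A : Fin (m + 1) → Fin (m + 1) → Fin M → Fin M → ℂ)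
    (hA : LegendreHadamard A)
    (P Q : EuclideanSpace ℝ (Fin (m + 1 - 1)) → Matrix (Fin M) (Fin M) ℂ)
    (hP : IsPoissonKernelFor (m + 1) M A P) (hQ : IsPoissonKernelFor (m + 1) M A Q)
    (γ β : Fin M) (ξ : EuclideanSpace ℝ (Fin (m + 1 - 1))) :
    𝓕 (fun y => P y γ β - Q y γ β) ξ = 0 := by
  have hol : ∀ γ, ∃ D : ℝ, 0 ≤ D ∧ ∀ w, ‖𝓕 (fun y => P y γ β - Q y γ β) w‖ ≤
      D * ‖w‖ ^ (3 / 4 : ℝ) := by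
    intro γ
    have iP := kernel_integrable P A hP γ β
    have iQ := kernel_integrable Q A hQ γ β
    obtain ⟨hPm, ⟨C1, hC1, hPd⟩, hPn, -⟩ := hP
    obtain ⟨hQm, ⟨C2, hC2, hQd⟩, hQn, -⟩ := hQ
    apply fourier_holder (fun y => P y γ β - Q y γ β) ((hPm γ β).sub (hQm γ β)) (C1 + C2) (by linarith)
    · intro x
      have hfr : Module.finrank ℝ (EuclideanSpace ℝ (Fin (m + 1 - 1))) + 1 = m + 1 := by
        rw [finrank_euclideanSpace_fin]; rfl
      rw [hfr, add_mul]
      exact (norm_sub_le _ _).trans (add_le_add (hPd x γ β) (hQd x γ β))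
    · rw [integral_sub iP iQ, hPn, hQn, sub_self]
  by_cases hξ : ξ = 0
  · obtain ⟨D, -, hD⟩ := hol γ
    have := hD ξ
    rw [hξ, norm_zero, Real.zero_rpow (by norm_num), mul_zero] at this
    rw [hξ]
    exact norm_le_zero_iff.1 this
  obtain ⟨κ₀, hκ₀, hell⟩ := hA
  choose D hD0 hD using hol
  set g : ℝ → EuclideanSpace ℂ (Fin M) := fun t =>
    WithLp.toLp 2 (fun γ => 𝓕 (fun y => P y γ β - Q y γ β) (t • ξ)) with hg
  have hgγ : ∀ t γ, g t γ = 𝓕 (fun y => P y γ β - Q y γ β) (t • ξ) := fun t γ => rfl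
  have hgc : Continuous g := by
    refine (PiLp.continuous_toLp 2 _).comp (continuous_pi fun γ => ?_)
    exact (fourier_cont _ ((kernel_integrable P A hP γ β).sub (kernel_integrable Q A hQ γ β))).comp
      (by fun_prop)
  set D1 : ℝ := ∑ γ, ∫ y, ‖P y γ β - Q y γ β‖ with hD1
  set D2 : ℝ := ∑ γ, D γ * ‖ξ‖ ^ (3 / 4 : ℝ) with hD2
  have D10 : 0 ≤ D1 := Finset.sum_nonneg fun γ _ => integral_nonneg fun y => norm_nonneg _
  have D20 : 0 ≤ D2 := Finset.sum_nonneg fun γ _ => mul_nonneg (hD0 γ) (by positivity)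
  have hξn : 0 < ‖ξ‖ := norm_pos_iff.2 hξ
  have main := ode_unique (Matrix.toEuclideanCLM (𝕜 := ℂ) (cA A))
    (Matrix.toEuclideanCLM (𝕜 := ℂ) (cB A ξ)) (Matrix.toEuclideanCLM (𝕜 := ℂ) (cC A ξ))
    (κ₀ * min 1 (4 * π ^ 2 * ‖ξ‖ ^ 2)) (by positivity) ?_ g hgc (D1 + D2) (by linarith) ?_ ?_ ?_ 1
    one_pos
  · have := hgγ 1 γ
    rw [main, one_smul] at this
    exact this.symm
  · intro τ η
    refine le_trans ?_ (ell A κ₀ hell ξ τ η)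
    have m1 : min 1 (4 * π ^ 2 * ‖ξ‖ ^ 2) ≤ 1 := min_le_left _ _
    have m2 : min 1 (4 * π ^ 2 * ‖ξ‖ ^ 2) ≤ 4 * π ^ 2 * ‖ξ‖ ^ 2 := min_le_right _ _
    have m3 : min 1 (4 * π ^ 2 * ‖ξ‖ ^ 2) * (1 + 4 * π ^ 2 * τ ^ 2) ≤
        4 * π ^ 2 * (‖ξ‖ ^ 2 + τ ^ 2) := by
      have : min 1 (4 * π ^ 2 * ‖ξ‖ ^ 2) * (4 * π ^ 2 * τ ^ 2) ≤ 1 * (4 * π ^ 2 * τ ^ 2) :=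
        mul_le_mul_of_nonneg_right m1 (by positivity)
      linarith
    have m4 := mul_le_mul_of_nonneg_left m3 (show 0 ≤ κ₀ * ‖η‖ ^ 2 by positivity)
    linarith
  · intro t
    refine (eucl_norm_le _).trans ?_
    have : ∑ i, ‖g t i‖ ≤ D1 := Finset.sum_le_sum fun γ _ => fourier_bdd _ _
    linarith
  · intro t ht
    refine (eucl_norm_le _).trans ?_
    have h1 : ∑ i, ‖g t i‖ ≤ D2 * t ^ (3 / 4 : ℝ) := by
      rw [hD2, Finset.sum_mul]
      refine Finset.sum_le_sum fun γ _ => ?_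
      refine (hD γ (t • ξ)).trans (le_of_eq ?_)
      rw [norm_smul, Real.norm_of_nonneg ht, Real.mul_rpow ht (norm_nonneg _)]
      ring
    have : 0 ≤ t ^ (3 / 4 : ℝ) := by positivity
    nlinarith
  · intro ψ hψ hψc hψ0
    exact diff_weak A P Q hP hQ ξ β g hgγ hgc ψ hψ hψc hψ0

end Final

/-- Uniqueness of the Poisson kernel for an elliptic system
in the upper half space. -/
theorem statement4
    (n M : ℕ) (hn : 2 ≤ n) (hM : 1 ≤ M)
    (A : Fin n → Fin n → Fin M → Fin M → ℂ)
    (hA : LegendreHadamard A)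
    (P Q : EuclideanSpace ℝ (Fin (n - 1)) → Matrix (Fin M) (Fin M) ℂ)
    (hP : IsPoissonKernelFor n M A P) (hQ : IsPoissonKernelFor n M A Q) :
    ∀ᵐ x' : EuclideanSpace ℝ (Fin (n - 1)), P x' = Q x' := by
  obtain ⟨m, rfl⟩ : ∃ m, n = m + 1 := ⟨n - 1, by omega⟩
  have h : ∀ γ β, ∀ᵐ x' : EuclideanSpace ℝ (Fin (m + 1 - 1)), P x' γ β - Q x' γ β = 0 :=
    fun γ β => fourier_inj _ ((kernel_integrable P A hP γ β).sub (kernel_integrable Q A hQ γ β))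
      (diff_fourier_zero A hA P Q hP hQ γ β)
  have h2 : ∀ᵐ x' : EuclideanSpace ℝ (Fin (m + 1 - 1)), ∀ γ β, P x' γ β - Q x' γ β = 0 :=
    ae_all_iff.2 fun γ => ae_all_iff.2 fun β => h γ β
  filter_upwards [h2] with x' hx
  ext γ β
  exact sub_eq_zero.1 (hx γ β)

end
end

section
/- Let A ∈ ℂ^{2×2} be a symmetric matrix satisfying Re(⟨Aξ,ξ⟩) > 0 for every ξ ∈ ℝ²∖{0}, where ⟨w,z⟩ := w₁z₁ + w₂z₂. Then ∫_{S¹} ⟨Aξ,(ξ₂,-ξ₁)⟩ / ⟨Aξ,ξ⟩ dσ(ξ) = 0, where σ is the arc-length measure on the unit circle S¹ ⊂ ℝ². -/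
open MeasureTheory Filter Metric Real
open scoped ENNReal NNReal Topology

noncomputable section

/-- For a symmetric `2×2` complex matrix `A` whose quadratic form has
positive real part on `ℝ²∖{0}`, the arc-length integral over the unit circle (written via
its arc-length parametrization `ξ = (cos θ, sin θ)`, `θ ∈ [0, 2π]`) of
`⟨Aξ, (ξ₂, -ξ₁)⟩ / ⟨Aξ, ξ⟩` vanishes. -/
theorem statement6
    (A : Matrix (Fin 2) (Fin 2) ℂ) (hsym : ∀ r s, A r s = A s r)
    (hell : ∀ ξ : Fin 2 → ℝ, ξ ≠ 0 →
      0 < (∑ r, ∑ s, A r s * (ξ r : ℂ) * (ξ s : ℂ)).re) :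
    (∫ θ in (0 : ℝ)..(2 * π),
      ((A 0 0 * (Real.cos θ : ℂ) + A 0 1 * (Real.sin θ : ℂ)) * (Real.sin θ : ℂ)
          - (A 1 0 * (Real.cos θ : ℂ) + A 1 1 * (Real.sin θ : ℂ)) * (Real.cos θ : ℂ))
        / ((A 0 0 * (Real.cos θ : ℂ) + A 0 1 * (Real.sin θ : ℂ)) * (Real.cos θ : ℂ)
          + (A 1 0 * (Real.cos θ : ℂ) + A 1 1 * (Real.sin θ : ℂ)) * (Real.sin θ : ℂ)))
      = 0 := by
  have h10 : A 1 0 = A 0 1 := hsym 1 0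
  rw [h10]
  set q : ℝ → ℂ := fun θ =>
    ((A 0 0 * (Real.cos θ : ℂ) + A 0 1 * (Real.sin θ : ℂ)) * (Real.cos θ : ℂ)
          + (A 0 1 * (Real.cos θ : ℂ) + A 1 1 * (Real.sin θ : ℂ)) * (Real.sin θ : ℂ)) with hq
  have hpos : ∀ θ, 0 < (q θ).re := by
    intro θ
    have hne : (![Real.cos θ, Real.sin θ] : Fin 2 → ℝ) ≠ 0 := by
      intro h
      have h0 : Real.cos θ = 0 := by simpa using congrFun h 0
      have h1 : Real.sin θ = 0 := by simpa using congrFun h 1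
      have := Real.sin_sq_add_cos_sq θ
      rw [h0, h1] at this
      norm_num at this
    have h := hell _ hne
    have e : (∑ r, ∑ s, A r s * ((![Real.cos θ, Real.sin θ] r : ℝ) : ℂ)
        * ((![Real.cos θ, Real.sin θ] s : ℝ) : ℂ)) = q θ := by
      simp only [Fin.sum_univ_two, Matrix.cons_val_zero, Matrix.cons_val_one, h10, hq]
      ring
    rwa [e] at h
  have hne : ∀ θ, q θ ≠ 0 := fun θ h => by
    have := hpos θ
    rw [h] at this
    simp at this
  have hc : ∀ θ : ℝ, HasDerivAt (fun θ : ℝ => (Real.cos θ : ℂ)) (-(Real.sin θ : ℂ)) θ := by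
    intro θ
    simpa using (Real.hasDerivAt_cos θ).ofReal_comp
  have hs : ∀ θ : ℝ, HasDerivAt (fun θ : ℝ => (Real.sin θ : ℂ)) (Real.cos θ : ℂ) θ := by
    intro θ
    exact (Real.hasDerivAt_sin θ).ofReal_comp
  have hd : ∀ θ ∈ Set.uIcc (0 : ℝ) (2 * π), HasDerivAt (fun θ => (-1 / 2 : ℂ) * Complex.log (q θ))
      (((A 0 0 * (Real.cos θ : ℂ) + A 0 1 * (Real.sin θ : ℂ)) * (Real.sin θ : ℂ)
          - (A 0 1 * (Real.cos θ : ℂ) + A 1 1 * (Real.sin θ : ℂ)) * (Real.cos θ : ℂ))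
        / q θ) θ := by
    intro θ _
    have h1 := ((((hc θ).const_mul (A 0 0)).add ((hs θ).const_mul (A 0 1))).mul (hc θ)).add
      ((((hc θ).const_mul (A 0 1)).add ((hs θ).const_mul (A 1 1))).mul (hs θ))
    have h2 : HasDerivAt q _ θ := h1
    have h3 := (h2.clog_real (Or.inl (hpos θ))).const_mul (-1 / 2 : ℂ)
    refine h3.congr_deriv ?_
    rw [← mul_div_assoc]
    congr 1
    simp only [Pi.add_apply]
    ring
  have hcont : Continuous (fun θ : ℝ =>
      ((A 0 0 * (Real.cos θ : ℂ) + A 0 1 * (Real.sin θ : ℂ)) * (Real.sin θ : ℂ)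
          - (A 0 1 * (Real.cos θ : ℂ) + A 1 1 * (Real.sin θ : ℂ)) * (Real.cos θ : ℂ))
        / q θ) := by
    have hqc : Continuous q := by
      rw [hq]
      fun_prop
    exact Continuous.div (by fun_prop) hqc hne
  have := intervalIntegral.integral_eq_sub_of_hasDerivAt hd (hcont.intervalIntegrable _ _)
  refine this.trans ?_
  simp [hq]

end
end

section
/- Let n ≥ 3 and let A = (a_{rs}) ∈ ℂ^{n×n} satisfy Re(Σ_{r,s} a_{rs}ξ_rξ_s) > 0 for all ξ ∈ ℝⁿ∖{0}, and let A_sym := (A + Aᵀ)/2. Then A_sym is invertible, for every x ∈ ℝⁿ∖{0} the number ⟨A_sym^{-1}x, x⟩ lies in ℂ∖(-∞,0], and there exists d ∈ ℂ with d² = det(A_sym) such that the function E(x) := -((n-2)ω_{n-1}d)^{-1} ⟨A_sym^{-1}x,x⟩^{(2-n)/2} (principal branch power) is a fundamental solution of L = Σ_{r,s} a_{rs}∂_r∂_s with pole at the origin: for every φ ∈ C_c^∞(ℝⁿ;ℂ) one has ∫_{ℝⁿ} E(x) Σ_{r,s} a_{rs} (∂_r∂_s φ)(x) dx = φ(0).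 -/
open MeasureTheory Filter Metric Real
open scoped ENNReal NNReal Topology

noncomputable section

theorem s7_simdiag {n : ℕ} (R S : Matrix (Fin n) (Fin n) ℝ) (hR : R.PosDef) (hS : S.transpose = S) :
    ∃ (P : Matrix (Fin n) (Fin n) ℝ) (l : Fin n → ℝ), P.transpose * R * P = 1 ∧
      P.transpose * S * P = Matrix.diagonal l := by
  have key : ∀ H : Matrix (Fin n) (Fin n) ℝ, (h : H.IsHermitian) →
      ∃ U : Matrix (Fin n) (Fin n) ℝ, U.transpose * U = 1 ∧
        U.transpose * H * U = Matrix.diagonal h.eigenvalues := by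
    intro H h
    refine ⟨h.eigenvectorUnitary, ?_, ?_⟩
    · have := Unitary.coe_star_mul_self h.eigenvectorUnitary
      simpa [Matrix.star_eq_conjTranspose] using this
    · have := h.conjStarAlgAut_star_eigenvectorUnitary
      rw [Unitary.conjStarAlgAut_apply] at this
      simpa [Matrix.star_eq_conjTranspose] using this
  obtain ⟨U, hU, hUR⟩ := key R hR.1
  have hpos := hR.eigenvalues_pos
  set μ := hR.1.eigenvalues
  set D : Matrix (Fin n) (Fin n) ℝ := Matrix.diagonal fun i => (√(μ i))⁻¹ with hD
  have hH : ((U * D).transpose * S * (U * D)).IsHermitian := by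
    rw [Matrix.IsHermitian, Matrix.conjTranspose_eq_transpose_of_trivial]
    simp only [Matrix.transpose_mul, Matrix.transpose_transpose, hS, Matrix.mul_assoc]
  obtain ⟨V, hV, hVS⟩ := key _ hH
  refine ⟨U * D * V, hH.eigenvalues, ?_, ?_⟩
  · have e1 : D * (U.transpose * R * U) * D = 1 := by
      rw [hUR, hD, Matrix.diagonal_mul_diagonal, Matrix.diagonal_mul_diagonal, ← Matrix.diagonal_one]
      congr 1; ext i
      have := Real.mul_self_sqrt (hpos i).le
      have h2 := (Real.sqrt_pos.2 (hpos i)).ne'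
      field_simp
      linarith
    calc _ = V.transpose * (D * (U.transpose * R * U) * D) * V := by
            simp only [Matrix.transpose_mul, Matrix.mul_assoc, hD, Matrix.diagonal_transpose]
      _ = 1 := by rw [e1, Matrix.mul_one, hV]
  · rw [← hVS]
    simp only [Matrix.transpose_mul, Matrix.mul_assoc]

theorem s7_gauss_det {n : ℕ} (C : Matrix (Fin n) (Fin n) ℂ) (hC : C.transpose = C)
    (hpos : ∀ x : Fin n → ℝ, x ≠ 0 → 0 < (∑ r, ∑ s, C r s * (x r : ℂ) * (x s : ℂ)).re) :
    (∫ x : Fin n → ℝ, Complex.exp (-∑ r, ∑ s, C r s * (x r : ℂ) * (x s : ℂ))) ^ 2 * C.det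
      = (π : ℂ) ^ n := by
  have hsym : ∀ r s, C r s = C s r := fun r s => by
    conv_lhs => rw [← hC]
    rfl
  obtain ⟨P, l, hP1, hP2⟩ := s7_simdiag (C.map Complex.re) (C.map Complex.im) (by
    refine Matrix.PosDef.of_dotProduct_mulVec_pos ?_ ?_
    · ext i j; simp [hsym i j]
    · intro x hx
      have := hpos x hx
      simp only [Complex.re_sum, Complex.re_mul_ofReal] at this
      simp only [dotProduct, Matrix.mulVec, Matrix.map_apply, Finset.mul_sum, star_trivial]
      refine this.trans_eq ?_
      refine Finset.sum_congr rfl fun r _ => Finset.sum_congr rfl fun s _ => by ring) (by ext i j; simp [hsym i j])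
  set Pc := P.map (Complex.ofRealHom) with hPc
  set b : Fin n → ℂ := fun i => 1 + l i * Complex.I with hb
  have hCd : Pc.transpose * C * Pc = Matrix.diagonal b := by
    have e : C = (C.map Complex.re).map Complex.ofRealHom
        + Complex.I • (C.map Complex.im).map Complex.ofRealHom := by
      ext i j; simp [mul_comm Complex.I, Complex.re_add_im]
    rw [e, Matrix.mul_add, Matrix.add_mul, Matrix.mul_smul, Matrix.smul_mul, hPc,
      ← Matrix.transpose_map, ← Matrix.map_mul, ← Matrix.map_mul, ← Matrix.map_mul,
      ← Matrix.map_mul, hP1, hP2]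
    ext i j
    by_cases h : i = j
    · subst h; simp [hb, mul_comm]
    · simp [h]
  have hdet : (P.det : ℂ) ^ 2 * C.det = ∏ i, b i := by
    have := congrArg Matrix.det hCd
    rw [Matrix.det_diagonal, Matrix.det_mul, Matrix.det_mul, Matrix.det_transpose] at this
    rw [← this]
    have : Pc.det = (P.det : ℂ) := by
      rw [hPc]; exact (RingHom.map_det Complex.ofRealHom P).symm
    rw [this]; ring
  have hPdet : P.det ≠ 0 := by
    intro h
    have := congrArg Matrix.det hP1
    simp [h] at this
  have hq : ∀ x : Fin n → ℝ, ∑ r, ∑ s, C r s * ((Matrix.toLin' P x) r : ℂ) * ((Matrix.toLin' P x) s : ℂ)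
      = ∑ i, b i * (x i : ℂ) ^ 2 := by
    intro x
    have e1 : ∀ y : Fin n → ℂ, ∑ r, ∑ s, C r s * y r * y s = y ⬝ᵥ (C.mulVec y) := by
      intro y
      simp only [dotProduct, Matrix.mulVec, Finset.mul_sum]
      refine Finset.sum_congr rfl fun r _ => Finset.sum_congr rfl fun s _ => by ring
    have e2 : (fun r => ((Matrix.toLin' P x) r : ℂ)) = Pc.mulVec (fun i => (x i : ℂ)) := by
      ext r; simp [Matrix.mulVec, dotProduct, hPc]
    rw [e1 (fun r => ((Matrix.toLin' P x) r : ℂ)), e2, Matrix.mulVec_mulVec, Matrix.dotProduct_mulVec,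
      ← Matrix.vecMul_transpose, Matrix.vecMul_vecMul, ← Matrix.mul_assoc, hCd,
      ← Matrix.dotProduct_mulVec]
    simp only [Matrix.mulVec_diagonal, dotProduct]
    refine Finset.sum_congr rfl fun r _ => by ring
  have hmap := Real.map_matrix_volume_pi_eq_smul_volume_pi hPdet
  have hint : ∫ x : Fin n → ℝ, Complex.exp (-∑ i, b i * (x i : ℂ) ^ 2)
      = (|P.det|⁻¹ : ℝ) • ∫ x : Fin n → ℝ, Complex.exp (-∑ r, ∑ s, C r s * (x r : ℂ) * (x s : ℂ)) := by
    have h1 : ∫ y, Complex.exp (-∑ r, ∑ s, C r s * (y r : ℂ) * (y s : ℂ))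
        ∂(Measure.map (Matrix.toLin' P) volume) =
        ∫ x : Fin n → ℝ, Complex.exp (-∑ i, b i * (x i : ℂ) ^ 2) := by
      rw [integral_map]
      · simp_rw [hq]
      · exact (LinearMap.continuous_of_finiteDimensional _).measurable.aemeasurable
      · apply Continuous.aestronglyMeasurable
        fun_prop
    rw [← h1, hmap, integral_smul_measure, ENNReal.toReal_ofReal (abs_nonneg _), abs_inv]
  have hg := GaussianFourier.integral_cexp_neg_sum_mul_add (b := b) (by simp [hb]) 0
  simp only [Pi.zero_apply, zero_mul, Finset.sum_const_zero, add_zero, ne_eq, OfNat.ofNat_ne_zero,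
    not_false_eq_true, zero_pow, zero_div, Complex.exp_zero, mul_one] at hg
  rw [hg] at hint
  set J := ∫ x : Fin n → ℝ, Complex.exp (-∑ r, ∑ s, C r s * (x r : ℂ) * (x s : ℂ))
  have hb0 : ∀ i, b i ≠ 0 := fun i h => by
    have := congrArg Complex.re h
    simp [hb] at this
  have h2 := congrArg (· ^ 2) hint
  simp only [← Finset.prod_pow] at h2
  have h3 : ∀ i, ((π / b i) ^ (1 / 2 : ℂ)) ^ 2 = π / b i := by
    intro i
    rw [← Complex.cpow_nat_mul]; simp
  simp only [h3, Finset.prod_div_distrib, Finset.prod_const, Finset.card_univ, Fintype.card_fin] at h2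
  rw [← hdet, Complex.real_smul, mul_pow, ← Complex.ofReal_pow |P.det|⁻¹, inv_pow, sq_abs] at h2
  have hPd : (P.det : ℂ) ≠ 0 := by exact_mod_cast hPdet
  have hCdet : C.det ≠ 0 := by
    intro h; rw [h, mul_zero] at hdet
    exact (Finset.prod_ne_zero_iff.2 fun i _ => hb0 i) hdet.symm
  push_cast at h2
  field_simp at h2
  rw [h2, mul_comm]

theorem s7_gamma {a : ℝ} (ha : 0 < a) {z : ℂ} (hz : 0 < z.re) :
    ∫ t in Set.Ioi (0:ℝ), ((t ^ (a - 1) : ℝ) : ℂ) * Complex.exp (-(t * z)) =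
      Complex.Gamma a * z ^ (-a : ℂ) := by
  have hU : IsOpen {z : ℂ | 0 < z.re} := isOpen_lt continuous_const Complex.continuous_re
  have hI : ∀ s b : ℝ, -1 < s → 0 < b →
      Integrable (fun t : ℝ => t ^ s * rexp (-b * t)) (volume.restrict (Set.Ioi 0)) := by
    intro s b hs hb
    have := integrableOn_rpow_mul_exp_neg_mul_rpow (p := 1) hs one_pos hb
    simp only [rpow_one] at this
    exact this
  have hm : ∀ (s : ℝ) (z : ℂ), AEStronglyMeasurable
      (fun t : ℝ => ((t ^ s : ℝ) : ℂ) * Complex.exp (-(t * z))) (volume.restrict (Set.Ioi 0)) := by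
    intro s z
    apply Measurable.aestronglyMeasurable
    fun_prop
  have hn : ∀ (s : ℝ) (z : ℂ) (t : ℝ), 0 < t → ‖((t ^ s : ℝ) : ℂ) * Complex.exp (-(t * z))‖
      = t ^ s * rexp (-z.re * t) := by
    intro s z t ht
    rw [norm_mul, Complex.norm_exp, Complex.norm_real, Real.norm_of_nonneg (rpow_nonneg ht.le _)]
    simp [mul_comm]
  have hint : ∀ (s : ℝ) (z : ℂ), -1 < s → 0 < z.re → Integrable
      (fun t : ℝ => ((t ^ s : ℝ) : ℂ) * Complex.exp (-(t * z))) (volume.restrict (Set.Ioi 0)) := by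
    intro s z hs hz
    refine (hI s z.re hs hz).mono' (hm s z) ?_
    filter_upwards [ae_restrict_mem measurableSet_Ioi] with t ht
    rw [hn s z t ht]
  have hd1 : DifferentiableOn ℂ (fun z : ℂ => ∫ t in Set.Ioi (0:ℝ),
      ((t ^ (a - 1) : ℝ) : ℂ) * Complex.exp (-(t * z))) {z : ℂ | 0 < z.re} := by
    intro z hz
    have hz' : 0 < z.re := hz
    refine DifferentiableAt.differentiableWithinAt ?_
    have := hasDerivAt_integral_of_dominated_loc_of_deriv_le (𝕜 := ℂ)
      (μ := volume.restrict (Set.Ioi (0:ℝ)))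
      (F := fun z t => ((t ^ (a - 1) : ℝ) : ℂ) * Complex.exp (-(t * z)))
      (F' := fun z t => -(((t ^ a : ℝ) : ℂ) * Complex.exp (-(t * z))))
      (x₀ := z) (s := {w : ℂ | z.re / 2 < w.re})
      (bound := fun t => t ^ a * rexp (-(z.re / 2) * t))
      ((isOpen_lt continuous_const Complex.continuous_re).mem_nhds (by
        show z.re / 2 < z.re
        linarith))
      (Eventually.of_forall fun w => hm _ w) (hint _ _ (by linarith) hz') (hm _ _).neg ?_
      (hI _ _ (by linarith) (by linarith)) ?_
    · exact this.2.differentiableAt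
    · filter_upwards [ae_restrict_mem measurableSet_Ioi] with t ht w hw
      have ht' : 0 < t := ht
      rw [norm_neg, hn _ _ _ ht]
      have : z.re / 2 < w.re := hw
      gcongr
    · filter_upwards [ae_restrict_mem measurableSet_Ioi] with t ht w hw
      have ht' : 0 < t := ht
      have h1 : HasDerivAt (fun w : ℂ => -((t:ℂ) * w)) (-(t:ℂ)) w := by
        have := ((hasDerivAt_id w).const_mul (t:ℂ)).neg
        rw [mul_one] at this
        exact this
      convert! h1.cexp.const_mul (((t ^ (a - 1) : ℝ) : ℂ)) using 1
      rw [show t ^ a = t ^ (a - 1) * t by rw [← rpow_add_one ht'.ne']; simp]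
      push_cast
      ring
  have hd2 : DifferentiableOn ℂ (fun z : ℂ => Complex.Gamma a * z ^ (-a : ℂ)) {z : ℂ | 0 < z.re} := by
    intro z hz
    refine DifferentiableAt.differentiableWithinAt ?_
    have : z ∈ Complex.slitPlane := Or.inl hz
    exact (differentiableAt_id.cpow_const this).const_mul _
  refine AnalyticOnNhd.eqOn_of_preconnected_of_frequently_eq (z₀ := 1) (hd1.analyticOnNhd hU) (hd2.analyticOnNhd hU)
    (convex_halfSpace_re_gt 0).isPreconnected (by simp) ?_ hz
  have ht : Tendsto (fun x : ℝ => (x : ℂ)) (𝓝[>] 1) (𝓝[≠] 1) := by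
    refine tendsto_nhdsWithin_iff.2 ⟨?_, ?_⟩
    · exact (Complex.continuous_ofReal.tendsto' 1 1 (by simp)).mono_left nhdsWithin_le_nhds
    · filter_upwards [self_mem_nhdsWithin] with x hx
      have : (1:ℝ) < x := hx
      simp only [Set.mem_compl_iff, Set.mem_singleton_iff]
      exact_mod_cast this.ne'
  refine ht.frequently (Eventually.frequently ?_)
  filter_upwards [self_mem_nhdsWithin] with x hx
  have hx1 : (1:ℝ) < x := hx
  have hx0 : 0 < x := by linarith
  have := Complex.integral_cpow_mul_exp_neg_mul_Ioi (a := a) (r := x) (by simpa) hx0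
  rw [one_div, Complex.inv_cpow _ _ (by rw [Complex.arg_ofReal_of_nonneg hx0.le]; exact pi_pos.ne),
    ← Complex.cpow_neg, mul_comm] at this
  rw [← this]
  refine setIntegral_congr_fun measurableSet_Ioi fun t ht => ?_
  have ht' : 0 < t := ht
  rw [Complex.ofReal_cpow ht'.le, mul_comm (t:ℂ)]
  push_cast; rfl

theorem s7_pos_star {n : ℕ} (B : Matrix (Fin n) (Fin n) ℂ) (hB : B.transpose = B)
    (hpos : ∀ x : Fin n → ℝ, x ≠ 0 → 0 < (∑ r, ∑ s, B r s * (x r : ℂ) * (x s : ℂ)).re)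
    (y : Fin n → ℂ) (hy : y ≠ 0) : 0 < (star y ⬝ᵥ B.mulVec y).re := by
  have hsym : ∀ r s, B r s = B s r := fun r s => by
    conv_lhs => rw [← hB]
    rfl
  set u : Fin n → ℝ := fun i => (y i).re with hu
  set v : Fin n → ℝ := fun i => (y i).im with hv
  have e : star y ⬝ᵥ B.mulVec y = (∑ r, ∑ s, B r s * (u r : ℂ) * (u s : ℂ))
      + (∑ r, ∑ s, B r s * (v r : ℂ) * (v s : ℂ)) := by
    have h0 : ∑ r, ∑ s, B r s * (u r : ℂ) * (v s : ℂ) = ∑ r, ∑ s, B r s * (v r : ℂ) * (u s : ℂ) := by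
      rw [Finset.sum_comm]
      refine Finset.sum_congr rfl fun r _ => Finset.sum_congr rfl fun s _ => ?_
      rw [hsym]; ring
    have h1 : star y ⬝ᵥ B.mulVec y = (∑ r, ∑ s, B r s * (u r : ℂ) * (u s : ℂ))
      + (∑ r, ∑ s, B r s * (v r : ℂ) * (v s : ℂ)) + Complex.I *
        ((∑ r, ∑ s, B r s * (u r : ℂ) * (v s : ℂ)) - ∑ r, ∑ s, B r s * (v r : ℂ) * (u s : ℂ)) := by
      simp only [dotProduct, Matrix.mulVec, Finset.mul_sum, ← Finset.sum_add_distrib,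
        ← Finset.sum_sub_distrib]
      refine Finset.sum_congr rfl fun r _ => Finset.sum_congr rfl fun s _ => ?_
      have h2 : y s = u s + v s * Complex.I := (Complex.re_add_im _).symm
      have h3 : star y r = u r - v r * Complex.I := by
        apply Complex.ext <;> simp [hu, hv]
      rw [h2, h3]
      linear_combination (-B r s * v r * v s) * Complex.I_sq
    rw [h1, h0]; ring
  have hn : ∀ x : Fin n → ℝ, 0 ≤ (∑ r, ∑ s, B r s * (x r : ℂ) * (x s : ℂ)).re := by
    intro x
    by_cases h : x = 0
    · simp [h]
    · exact (hpos x h).le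
  rw [e, Complex.add_re]
  by_cases h : u = 0
  · have : v ≠ 0 := by
      intro h'
      apply hy
      ext i
      exact Complex.ext (congrFun h i) (congrFun h' i)
    exact add_pos_of_nonneg_of_pos (hn u) (hpos v this)
  · exact add_pos_of_pos_of_nonneg (hpos u h) (hn v)

theorem s7_isUnit {n : ℕ} (B : Matrix (Fin n) (Fin n) ℂ) (hB : B.transpose = B)
    (hpos : ∀ x : Fin n → ℝ, x ≠ 0 → 0 < (∑ r, ∑ s, B r s * (x r : ℂ) * (x s : ℂ)).re) :
    IsUnit B := by
  rw [Matrix.isUnit_iff_isUnit_det, isUnit_iff_ne_zero]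
  intro h
  obtain ⟨v, hv, hv0⟩ := Matrix.exists_mulVec_eq_zero_iff.2 h
  have := s7_pos_star B hB hpos v hv
  simp [hv0] at this

theorem s7_inv_pos {n : ℕ} (B : Matrix (Fin n) (Fin n) ℂ) (hB : B.transpose = B)
    (hpos : ∀ x : Fin n → ℝ, x ≠ 0 → 0 < (∑ r, ∑ s, B r s * (x r : ℂ) * (x s : ℂ)).re)
    (x : Fin n → ℝ) (hx : x ≠ 0) : 0 < (∑ r, ∑ s, B⁻¹ r s * (x r : ℂ) * (x s : ℂ)).re := by
  have hu := (Matrix.isUnit_iff_isUnit_det _).1 (s7_isUnit B hB hpos)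
  set xc : Fin n → ℂ := fun i => (x i : ℂ) with hxc
  have h1 : B.mulVec (B⁻¹.mulVec xc) = xc := by
    rw [Matrix.mulVec_mulVec, Matrix.mul_nonsing_inv _ hu, Matrix.one_mulVec]
  have hy : B⁻¹.mulVec xc ≠ 0 := by
    intro h
    rw [h, Matrix.mulVec_zero] at h1
    apply hx
    ext i
    have := congrFun h1 i
    simpa [hxc] using this.symm
  have h2 := s7_pos_star B hB hpos _ hy
  rw [h1] at h2
  refine h2.trans_eq ?_
  rw [← Complex.conj_re]
  congr 1
  simp only [dotProduct, Matrix.mulVec, map_sum, map_mul, Pi.star_apply, hxc, Complex.conj_ofReal,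
    RCLike.star_def, Complex.conj_conj, Finset.sum_mul]
  refine Finset.sum_congr rfl fun r _ => Finset.sum_congr rfl fun s _ => ?_
  ring

def s7q {n : ℕ} (C : Matrix (Fin n) (Fin n) ℂ) (x : EuclideanSpace ℝ (Fin n)) : ℂ :=
  ∑ r, ∑ s, C r s * (x r : ℂ) * (x s : ℂ)

def s7y {n : ℕ} (C : Matrix (Fin n) (Fin n) ℂ) (r : Fin n) (x : EuclideanSpace ℝ (Fin n)) : ℂ :=
  ∑ s, C r s * (x s : ℂ)

theorem s7_contDiff_coord {n : ℕ} (r : Fin n) :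
    ContDiff ℝ (⊤ : ℕ∞) (fun x : EuclideanSpace ℝ (Fin n) => (x r : ℂ)) :=
  (Complex.ofRealCLM.comp (EuclideanSpace.proj r : EuclideanSpace ℝ (Fin n) →L[ℝ] ℝ)).contDiff

theorem s7_contDiff_q {n : ℕ} (C : Matrix (Fin n) (Fin n) ℂ) : ContDiff ℝ (⊤ : ℕ∞) (s7q C) := by
  unfold s7q
  refine ContDiff.sum fun r _ => ContDiff.sum fun s _ => ?_
  exact (contDiff_const.mul (s7_contDiff_coord r)).mul (s7_contDiff_coord s)

theorem s7_contDiff_y {n : ℕ} (C : Matrix (Fin n) (Fin n) ℂ) (r : Fin n) :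
    ContDiff ℝ (⊤ : ℕ∞) (s7y C r) := by
  unfold s7y
  refine ContDiff.sum fun s _ => ?_
  exact contDiff_const.mul (s7_contDiff_coord s)

theorem s7_hasFDerivAt_coord {n : ℕ} (r : Fin n) (x : EuclideanSpace ℝ (Fin n)) :
    HasFDerivAt (fun x : EuclideanSpace ℝ (Fin n) => (x r : ℂ))
      (Complex.ofRealCLM.comp (EuclideanSpace.proj r : EuclideanSpace ℝ (Fin n) →L[ℝ] ℝ)) x :=
  (Complex.ofRealCLM.comp (EuclideanSpace.proj r : EuclideanSpace ℝ (Fin n) →L[ℝ] ℝ)).hasFDerivAt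

theorem s7_pd_y {n : ℕ} (C : Matrix (Fin n) (Fin n) ℂ) (r s : Fin n) (x : EuclideanSpace ℝ (Fin n)) :
    pd s (s7y C r) x = C r s := by
  have h : HasFDerivAt (s7y C r) _ x :=
    HasFDerivAt.fun_sum (u := Finset.univ) fun k _ => (s7_hasFDerivAt_coord k x).const_mul (C r k)
  rw [pd, h.fderiv]
  simp [apply_ite]

theorem s7_pd_q {n : ℕ} (C : Matrix (Fin n) (Fin n) ℂ) (hC : C.transpose = C)
    (s : Fin n) (x : EuclideanSpace ℝ (Fin n)) :
    pd s (s7q C) x = 2 * s7y C s x := by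
  have hsym : ∀ r s, C r s = C s r := fun r s => by
    conv_lhs => rw [← hC]
    rfl
  have h : HasFDerivAt (s7q C) _ x :=
    HasFDerivAt.fun_sum (u := Finset.univ) fun k _ => HasFDerivAt.fun_sum (u := Finset.univ) fun l _ =>
      ((s7_hasFDerivAt_coord k x).const_mul (C k l)).mul (s7_hasFDerivAt_coord l x)
  rw [pd, h.fderiv]
  simp [apply_ite, Finset.sum_add_distrib, s7y]
  rw [two_mul]
  congr 1
  · refine Finset.sum_congr rfl fun k _ => ?_
    rw [hsym]
  · refine Finset.sum_congr rfl fun k _ => ?_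
    ring

theorem s7_pd_exp {n : ℕ} (C : Matrix (Fin n) (Fin n) ℂ) (hC : C.transpose = C) (t : ℝ)
    (s : Fin n) (x : EuclideanSpace ℝ (Fin n)) :
    pd s (fun x => Complex.exp (-(t * s7q C x))) x
      = -2 * t * s7y C s x * Complex.exp (-(t * s7q C x)) := by
  have hd : DifferentiableAt ℝ (s7q C) x := (s7_contDiff_q C).differentiable (by simp) x
  have h := ((hd.hasFDerivAt.const_mul (t:ℂ)).neg).cexp
  have hq := s7_pd_q C hC s x
  rw [pd] at hq
  rw [pd]
  erw [h.fderiv]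
  simp [hq]
  ring

theorem s7_pd_mul {n : ℕ} (r : Fin n) (f g : EuclideanSpace ℝ (Fin n) → ℂ)
    (x : EuclideanSpace ℝ (Fin n)) (hf : DifferentiableAt ℝ f x) (hg : DifferentiableAt ℝ g x) :
    pd r (fun x => f x * g x) x = pd r f x * g x + f x * pd r g x := by
  have := (hf.hasFDerivAt.mul hg.hasFDerivAt)
  rw [pd]
  erw [this.fderiv]
  simp [pd]
  ring

theorem s7_contDiff_exp {n : ℕ} (C : Matrix (Fin n) (Fin n) ℂ) (t : ℝ) :
    ContDiff ℝ (⊤ : ℕ∞) (fun x => Complex.exp (-(t * s7q C x))) :=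
  ((contDiff_const.mul (s7_contDiff_q C)).neg).cexp

theorem s7_pd2_exp {n : ℕ} (C : Matrix (Fin n) (Fin n) ℂ) (hC : C.transpose = C) (t : ℝ)
    (r s : Fin n) (x : EuclideanSpace ℝ (Fin n)) :
    pd s (pd r (fun x => Complex.exp (-(t * s7q C x)))) x
      = (4 * t ^ 2 * s7y C r x * s7y C s x - 2 * t * C r s) * Complex.exp (-(t * s7q C x)) := by
  have h1 : pd r (fun x => Complex.exp (-(t * s7q C x)))
      = fun x => (fun x => (-2 * t : ℂ) * s7y C r x) x * (fun x => Complex.exp (-(t * s7q C x))) x := by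
    ext x; exact s7_pd_exp C hC t r x
  have hy : DifferentiableAt ℝ (s7y C r) x := (s7_contDiff_y C r).differentiable (by simp) x
  rw [h1, s7_pd_mul, s7_pd_exp C hC]
  · have : pd s (fun x => (-2 * t : ℂ) * s7y C r x) x = -2 * t * C r s := by
      have hc := s7_pd_mul s (fun _ => (-2 * t : ℂ)) (s7y C r) x (differentiableAt_const _) hy
      rw [hc, s7_pd_y]
      simp [pd]
    rw [this]; ring
  · exact hy.const_mul _
  · exact (s7_contDiff_exp C t).differentiable (by simp) x

theorem s7_contDiff_pd {n : ℕ} {f : EuclideanSpace ℝ (Fin n) → ℂ} (hf : ContDiff ℝ (⊤ : ℕ∞) f)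
    (r : Fin n) : ContDiff ℝ (⊤ : ℕ∞) (pd r f) := by
  unfold pd
  exact (hf.fderiv_right (m := (⊤ : ℕ∞)) (by simp)).clm_apply contDiff_const

theorem s7_supp_pd {n : ℕ} {f : EuclideanSpace ℝ (Fin n) → ℂ} (hf : HasCompactSupport f)
    (r : Fin n) : HasCompactSupport (pd r f) := by
  unfold pd
  exact hf.fderiv_apply ℝ _

theorem s7_ibp1 {n : ℕ} {g f : EuclideanSpace ℝ (Fin n) → ℂ} (hg : ContDiff ℝ (⊤ : ℕ∞) g)
    (hf : ContDiff ℝ (⊤ : ℕ∞) f) (hs : HasCompactSupport f) (r : Fin n) :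
    ∫ x, g x * pd r f x = - ∫ x, pd r g x * f x := by
  have I : ∀ {a b : EuclideanSpace ℝ (Fin n) → ℂ}, Continuous a → Continuous b →
      HasCompactSupport b → Integrable (fun x => a x * b x) := fun ha hb h =>
    (ha.mul hb).integrable_of_hasCompactSupport h.mul_left
  exact integral_mul_fderiv_eq_neg_fderiv_mul_of_integrable
    (I (s7_contDiff_pd hg r).continuous hf.continuous hs)
    (I hg.continuous (s7_contDiff_pd hf r).continuous (s7_supp_pd hs r))
    (I hg.continuous hf.continuous hs)
    (fun x _ => hg.differentiable (by simp) x) (fun x _ => hf.differentiable (by simp) x)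

theorem s7_ibp2 {n : ℕ} {g f : EuclideanSpace ℝ (Fin n) → ℂ} (hg : ContDiff ℝ (⊤ : ℕ∞) g)
    (hf : ContDiff ℝ (⊤ : ℕ∞) f) (hs : HasCompactSupport f) (r s : Fin n) :
    ∫ x, g x * pd r (pd s f) x = ∫ x, pd s (pd r g) x * f x := by
  rw [s7_ibp1 hg (s7_contDiff_pd hf s) (s7_supp_pd hs s), s7_ibp1 (s7_contDiff_pd hg r) hf hs, neg_neg]

theorem s7_L {n : ℕ} (A B : Matrix (Fin n) (Fin n) ℂ) (hB : B = ((1 : ℂ) / 2) • (A + A.transpose))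
    (C : Matrix (Fin n) (Fin n) ℂ) (hC : C.transpose = C) (hBC : B * C = 1) (t : ℝ)
    {f : EuclideanSpace ℝ (Fin n) → ℂ}
    (hf : ContDiff ℝ (⊤ : ℕ∞) f) (hs : HasCompactSupport f) :
    ∫ x, Complex.exp (-(t * s7q C x)) * (∑ r, ∑ s, A r s * pd r (pd s f) x)
      = ∫ x, (4 * t ^ 2 * s7q C x - 2 * t * n) * Complex.exp (-(t * s7q C x)) * f x := by
  have hsym : ∀ r s, C r s = C s r := fun r s => by
    conv_lhs => rw [← hC]
    rfl
  have hAB : ∀ M : Fin n → Fin n → ℂ, (∀ r s, M r s = M s r) →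
      ∑ r, ∑ s, A r s * M r s = ∑ r, ∑ s, B r s * M r s := by
    intro M hM
    have h1 : ∑ r, ∑ s, A r s * M r s = ∑ r, ∑ s, A s r * M r s := by
      rw [Finset.sum_comm]
      refine Finset.sum_congr rfl fun r _ => Finset.sum_congr rfl fun s _ => by rw [hM]
    have h2 : ∑ r, ∑ s, B r s * M r s = (1/2) * (∑ r, ∑ s, A r s * M r s + ∑ r, ∑ s, A s r * M r s) := by
      simp only [hB, Finset.mul_sum, ← Finset.sum_add_distrib]
      refine Finset.sum_congr rfl fun r _ => Finset.sum_congr rfl fun s _ => ?_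
      simp; ring
    rw [h2, ← h1]; ring
  have hBCe : ∀ r k, ∑ s, B r s * C s k = if r = k then 1 else 0 := by
    intro r k
    have := congrFun (congrFun hBC r) k
    rw [Matrix.mul_apply, Matrix.one_apply] at this
    exact this
  have e1 : ∀ x, ∑ r, ∑ s, A r s * (s7y C r x * s7y C s x) = s7q C x := by
    intro x
    rw [hAB _ (fun r s => mul_comm _ _)]
    have : ∀ r, ∑ s, B r s * s7y C s x = (x r : ℂ) := by
      intro r
      simp only [s7y, Finset.mul_sum]
      rw [Finset.sum_comm]
      simp only [← mul_assoc, ← Finset.sum_mul, hBCe]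
      simp
    calc _ = ∑ r, s7y C r x * ∑ s, B r s * s7y C s x := by
          simp only [Finset.mul_sum]
          refine Finset.sum_congr rfl fun r _ => Finset.sum_congr rfl fun s _ => by ring
      _ = _ := by
          simp only [this]
          simp only [s7q, s7y, Finset.sum_mul]
          refine Finset.sum_congr rfl fun r _ => Finset.sum_congr rfl fun s _ => by ring
  have e2 : ∑ r, ∑ s, A r s * C r s = n := by
    rw [hAB _ hsym]
    have : ∀ r, ∑ s, B r s * C r s = 1 := by
      intro r
      have := hBCe r r
      simp only [if_true] at this
      rw [← this]
      refine Finset.sum_congr rfl fun s _ => by rw [hsym]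
    simp [this]
  have hg := s7_contDiff_exp C t
  have I1 : ∀ r s, Integrable (fun x => A r s * (Complex.exp (-(t * s7q C x)) * pd r (pd s f) x)) := by
    intro r s
    refine Integrable.const_mul ?_ _
    exact (hg.continuous.mul (s7_contDiff_pd (s7_contDiff_pd hf s) r).continuous).integrable_of_hasCompactSupport
      (s7_supp_pd (s7_supp_pd hs s) r).mul_left
  have I2 : ∀ r s, Integrable (fun x => A r s *
      (pd s (pd r fun x => Complex.exp (-(t * s7q C x))) x * f x)) := by
    intro r s
    refine Integrable.const_mul ?_ _
    exact ((s7_contDiff_pd (s7_contDiff_pd hg r) s).continuous.mul hf.continuous).integrable_of_hasCompactSupport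
      hs.mul_left
  calc _ = ∫ x, ∑ r, ∑ s, A r s * (Complex.exp (-(t * s7q C x)) * pd r (pd s f) x) := by
        congr 1; ext x
        simp only [Finset.mul_sum]
        refine Finset.sum_congr rfl fun r _ => Finset.sum_congr rfl fun s _ => by ring
    _ = ∑ r, ∑ s, A r s * ∫ x, Complex.exp (-(t * s7q C x)) * pd r (pd s f) x := by
        rw [integral_finsetSum _ fun r _ => integrable_finsetSum _ fun s _ => I1 r s]
        refine Finset.sum_congr rfl fun r _ => ?_
        rw [integral_finsetSum _ fun s _ => I1 r s]
        refine Finset.sum_congr rfl fun s _ => ?_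
        rw [integral_const_mul]
    _ = ∑ r, ∑ s, A r s * ∫ x, pd s (pd r fun x => Complex.exp (-(t * s7q C x))) x * f x := by
        simp only [s7_ibp2 hg hf hs]
    _ = ∫ x, ∑ r, ∑ s, A r s * (pd s (pd r fun x => Complex.exp (-(t * s7q C x))) x * f x) := by
        rw [integral_finsetSum _ fun r _ => integrable_finsetSum _ fun s _ => I2 r s]
        refine Finset.sum_congr rfl fun r _ => ?_
        rw [integral_finsetSum _ fun s _ => I2 r s]
        refine Finset.sum_congr rfl fun s _ => ?_
        rw [integral_const_mul]
    _ = _ := by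
        congr 1; ext x
        simp only [s7_pd2_exp C hC]
        rw [← e1 x, ← e2]
        simp only [Finset.mul_sum, Finset.sum_mul, ← Finset.sum_sub_distrib]
        refine Finset.sum_congr rfl fun r _ => Finset.sum_congr rfl fun s _ => by ring

theorem s7_q_smul {n : ℕ} (C : Matrix (Fin n) (Fin n) ℂ) (a : ℝ) (x : EuclideanSpace ℝ (Fin n)) :
    s7q C (a • x) = (a : ℂ) ^ 2 * s7q C x := by
  simp only [s7q, Finset.mul_sum]
  refine Finset.sum_congr rfl fun r _ => Finset.sum_congr rfl fun s _ => ?_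
  simp; ring

theorem s7_coercive {n : ℕ} (hn : 3 ≤ n) (C : Matrix (Fin n) (Fin n) ℂ)
    (hpos : ∀ x : EuclideanSpace ℝ (Fin n), x ≠ 0 → 0 < (s7q C x).re) :
    ∃ c : ℝ, 0 < c ∧ ∀ x, c * ‖x‖ ^ 2 ≤ (s7q C x).re := by
  have hc : Continuous fun x => (s7q C x).re :=
    Complex.continuous_re.comp (s7_contDiff_q C).continuous
  have : Nonempty (Fin n) := ⟨⟨0, by omega⟩⟩
  obtain ⟨x0, hx0, hmin⟩ := (isCompact_sphere (0 : EuclideanSpace ℝ (Fin n)) 1).exists_isMinOn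
    (NormedSpace.sphere_nonempty.2 zero_le_one) hc.continuousOn
  have hx0' : x0 ≠ 0 := by
    rintro rfl; simp at hx0
  refine ⟨(s7q C x0).re, hpos _ hx0', fun x => ?_⟩
  by_cases hx : x = 0
  · simp [hx, s7q]
  have hx' : ‖x‖ ≠ 0 := norm_ne_zero_iff.2 hx
  have h1 : (s7q C x0).re ≤ (s7q C ((‖x‖⁻¹ : ℝ) • x)).re := hmin (by simp [norm_smul, hx'])
  have h2 : s7q C x = ((‖x‖ : ℝ) : ℂ) ^ 2 * s7q C ((‖x‖⁻¹ : ℝ) • x) := by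
    rw [← s7_q_smul, smul_smul, mul_inv_cancel₀ hx', one_smul]
  rw [h2, ← Complex.ofReal_pow, Complex.re_ofReal_mul, mul_comm]
  gcongr

theorem s7_gauss_int {n : ℕ} {c : ℝ} (hc : 0 < c) :
    Integrable (fun x : EuclideanSpace ℝ (Fin n) => rexp (-c * ‖x‖ ^ 2)) := by
  have := (GaussianFourier.integrable_cexp_neg_mul_sq_norm_add (V := EuclideanSpace ℝ (Fin n))
    (b := (c:ℂ)) (by simpa) 0 0).norm
  refine this.congr (Eventually.of_forall fun x => ?_)
  simp only [Complex.norm_exp]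
  congr 1
  simp [← Complex.ofReal_pow]

theorem s7_norm_exp {n : ℕ} (C : Matrix (Fin n) (Fin n) ℂ) (t : ℝ) (x : EuclideanSpace ℝ (Fin n)) :
    ‖Complex.exp (-(t * s7q C x))‖ = rexp (-(t * (s7q C x).re)) := by
  rw [Complex.norm_exp]; simp

theorem s7_fubini_int {n : ℕ} (hn : 3 ≤ n) (C : Matrix (Fin n) (Fin n) ℂ) {c : ℝ} (hc : 0 < c)
    (hco : ∀ x, c * ‖x‖ ^ 2 ≤ (s7q C x).re) {ψ : EuclideanSpace ℝ (Fin n) → ℂ}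
    (hψ : Continuous ψ) (hs : HasCompactSupport ψ) :
    Integrable (fun p : EuclideanSpace ℝ (Fin n) × ℝ =>
      ((p.2 ^ ((n:ℝ) / 2 - 2) : ℝ) : ℂ) * Complex.exp (-(p.2 * s7q C p.1)) * ψ p.1)
      (volume.prod (volume.restrict (Set.Ioi 0))) := by
  have hn' : (3:ℝ) ≤ n := by exact_mod_cast hn
  have hqc := (s7_contDiff_q C).continuous
  have hm : Measurable (fun p : EuclideanSpace ℝ (Fin n) × ℝ =>
      ((p.2 ^ ((n:ℝ) / 2 - 2) : ℝ) : ℂ) * Complex.exp (-(p.2 * s7q C p.1)) * ψ p.1) := by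
    have := hqc.measurable
    have := hψ.measurable
    fun_prop
  have hψi : Integrable ψ := hψ.integrable_of_hasCompactSupport hs
  obtain ⟨M, hM⟩ := hs.exists_bound_of_continuous hψ
  have hM0 : 0 ≤ M := (norm_nonneg _).trans (hM 0)
  have hnorm : ∀ (x : EuclideanSpace ℝ (Fin n)) (t : ℝ), 0 < t →
      ‖((t ^ ((n:ℝ) / 2 - 2) : ℝ) : ℂ) * Complex.exp (-(t * s7q C x)) * ψ x‖
       = t ^ ((n:ℝ) / 2 - 2) * rexp (-(t * (s7q C x).re)) * ‖ψ x‖ := by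
    intro x t ht
    rw [norm_mul, norm_mul, s7_norm_exp, Complex.norm_real, Real.norm_of_nonneg (by positivity)]
  rw [integrable_prod_iff' hm.aestronglyMeasurable]
  constructor
  · refine Eventually.of_forall fun t => ?_
    refine Continuous.integrable_of_hasCompactSupport ?_ hs.mul_left
    simp only
    generalize t ^ ((n:ℝ) / 2 - 2) = w
    fun_prop
  · have hmm : StronglyMeasurable (fun t : ℝ => ∫ x,
      ‖((t ^ ((n:ℝ) / 2 - 2) : ℝ) : ℂ) * Complex.exp (-(t * s7q C x)) * ψ x‖) :=
      hm.norm.stronglyMeasurable.integral_prod_left'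
    rw [← IntegrableOn, ← Set.Ioc_union_Ioi_eq_Ioi (zero_le_one (α := ℝ))]
    refine IntegrableOn.union ?_ ?_
    · have hI : IntegrableOn (fun t : ℝ => t ^ ((n:ℝ) / 2 - 2) * ∫ x, ‖ψ x‖) (Set.Ioc 0 1) := by
        refine Integrable.mul_const ?_ _
        rw [← IntegrableOn, ← intervalIntegrable_iff_integrableOn_Ioc_of_le zero_le_one]
        exact intervalIntegral.intervalIntegrable_rpow' (by linarith)
      refine Integrable.mono' hI hmm.aestronglyMeasurable ?_
      filter_upwards [ae_restrict_mem measurableSet_Ioc] with t ht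
      rw [Real.norm_of_nonneg (integral_nonneg fun _ => norm_nonneg _), ← integral_const_mul]
      refine integral_mono_of_nonneg (Eventually.of_forall fun _ => norm_nonneg _)
        (hψi.norm.const_mul _) (Eventually.of_forall fun x => ?_)
      have h0 : 0 ≤ (s7q C x).re := le_trans (by positivity) (hco x)
      have ht0 : 0 < t := ht.1
      simp only
      rw [hnorm x t ht.1]
      gcongr
      refine mul_le_of_le_one_right (by positivity) ?_
      rw [Real.exp_le_one_iff]
      have := mul_nonneg ht0.le h0
      linarith
    · have hI : IntegrableOn (fun t : ℝ => (M * (π / c) ^ ((n:ℝ) / 2)) * t ^ (-2 : ℝ)) (Set.Ioi 1) :=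
        (integrableOn_Ioi_rpow_of_lt (by norm_num) one_pos).const_mul _
      refine Integrable.mono' hI hmm.aestronglyMeasurable ?_
      filter_upwards [ae_restrict_mem measurableSet_Ioi] with t ht
      have ht1 : 1 < t := ht
      have ht0 : 0 < t := by linarith
      have hct : 0 < t * c := by positivity
      rw [Real.norm_of_nonneg (integral_nonneg fun _ => norm_nonneg _)]
      have hg := GaussianFourier.integral_rexp_neg_mul_sq_norm (V := EuclideanSpace ℝ (Fin n)) hct
      rw [finrank_euclideanSpace, Fintype.card_fin] at hg
      have : (M * (π / c) ^ ((n:ℝ) / 2)) * t ^ (-2 : ℝ)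
          = ∫ x : EuclideanSpace ℝ (Fin n), (t ^ ((n:ℝ) / 2 - 2) * M) * rexp (-(t * c) * ‖x‖ ^ 2) := by
        rw [integral_const_mul, hg, mul_comm t c, ← div_div, div_rpow (by positivity) ht0.le,
          sub_eq_add_neg, rpow_add ht0]
        have : t ^ ((n:ℝ)/2) ≠ 0 := by positivity
        field_simp
      rw [this]
      refine integral_mono_of_nonneg (Eventually.of_forall fun _ => norm_nonneg _)
        ((s7_gauss_int hct).const_mul _) (Eventually.of_forall fun x => ?_)
      simp only
      rw [hnorm x t ht0, mul_assoc, mul_assoc, mul_comm M]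
      gcongr ?_ * (rexp ?_ * ?_)
      · have := mul_le_mul_of_nonneg_left (hco x) ht0.le
        linarith
      · exact hM x

theorem s7_main {n : ℕ} (hn : 3 ≤ n) (C : Matrix (Fin n) (Fin n) ℂ) {c : ℝ} (hc : 0 < c)
    (hco : ∀ x, c * ‖x‖ ^ 2 ≤ (s7q C x).re) {ψ φ : EuclideanSpace ℝ (Fin n) → ℂ}
    (hψ : Continuous ψ) (hψs : HasCompactSupport ψ) (hφ : Continuous φ) (hφs : HasCompactSupport φ)
    (hL : ∀ t : ℝ, ∫ x, Complex.exp (-(t * s7q C x)) * ψ x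
      = ∫ x, (4 * t ^ 2 * s7q C x - 2 * t * n) * Complex.exp (-(t * s7q C x)) * φ x) :
    ∫ x, (∫ t in Set.Ioi (0:ℝ), ((t ^ ((n:ℝ) / 2 - 2) : ℝ) : ℂ) * Complex.exp (-(t * s7q C x))) * ψ x
      = -4 * φ 0 * ∫ x, Complex.exp (-s7q C x) := by
  have hn' : (3:ℝ) ≤ n := by exact_mod_cast hn
  have hqc := (s7_contDiff_q C).continuous
  have hq0 : ∀ x, 0 ≤ (s7q C x).re := fun x => le_trans (by positivity) (hco x)
  have hfi := s7_fubini_int hn C hc hco hψ hψs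
  obtain ⟨M, hM⟩ := hφs.exists_bound_of_continuous hφ
  have hM0 : 0 ≤ M := (norm_nonneg _).trans (hM 0)
  have hφi : Integrable φ := hφ.integrable_of_hasCompactSupport hφs
  have hexpi : ∀ t : ℝ, Integrable (fun x => Complex.exp (-(t * s7q C x)) * φ x) := by
    intro t
    refine Continuous.integrable_of_hasCompactSupport ?_ hφs.mul_left
    fun_prop
  have hqexpi : ∀ t : ℝ, Integrable (fun x => s7q C x * Complex.exp (-(t * s7q C x)) * φ x) := by
    intro t
    refine Continuous.integrable_of_hasCompactSupport ?_ hφs.mul_left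
    fun_prop
  simp_rw [← integral_mul_const]
  rw [integral_integral_swap (f := fun x t => ((t ^ ((n:ℝ) / 2 - 2) : ℝ) : ℂ) *
    Complex.exp (-(t * s7q C x)) * ψ x) hfi]
  have hFi := hfi.integral_prod_right
  simp only at hFi
  set K : ℝ → ℂ := fun t => ∫ x, Complex.exp (-(t * s7q C x)) * φ x with hK
  have hKd : ∀ t : ℝ, 0 < t → HasDerivAt K (-∫ x, s7q C x * Complex.exp (-(t * s7q C x)) * φ x) t := by
    intro t ht
    have := hasDerivAt_integral_of_dominated_loc_of_deriv_le (𝕜 := ℝ)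
      (μ := (volume : Measure (EuclideanSpace ℝ (Fin n))))
      (F := fun t x => Complex.exp (-(t * s7q C x)) * φ x)
      (F' := fun t x => -(s7q C x * Complex.exp (-(t * s7q C x)) * φ x))
      (x₀ := t) (s := Set.Ioi 0)
      (bound := fun x => ‖s7q C x * φ x‖)
      (Ioi_mem_nhds ht)
      (Eventually.of_forall fun w => (hexpi w).1) (hexpi t) (hqexpi t).1.neg ?_ ?_ ?_
    · rw [← integral_neg]
      exact this.2
    · refine Eventually.of_forall fun x s hs => ?_
      have hs0 : 0 < s := hs
      rw [norm_neg, norm_mul, norm_mul, norm_mul, s7_norm_exp]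
      gcongr
      refine mul_le_of_le_one_right (by positivity) ?_
      rw [Real.exp_le_one_iff]
      have := mul_nonneg hs0.le (hq0 x)
      linarith
    · refine Integrable.norm ?_
      exact (hqc.mul hφ).integrable_of_hasCompactSupport hφs.mul_left
    · refine Eventually.of_forall fun x s hs => ?_
      have h1 : HasDerivAt (fun w : ℝ => -((w:ℂ) * s7q C x)) (-(s7q C x)) s := by
        have := ((Complex.ofRealCLM.hasDerivAt (x := s)).mul_const (s7q C x)).neg
        simp only [Complex.ofRealCLM_apply, Complex.ofReal_one, one_mul] at this
        exact this
      convert! (h1.cexp).mul_const (φ x) using 1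
      ring
  set G : ℝ → ℂ := fun t => -4 * ((t ^ ((n:ℝ) / 2) : ℝ) : ℂ) * K t with hG
  have hGd : ∀ t ∈ Set.Ioi (0:ℝ), HasDerivAt G (∫ x, ((t ^ ((n:ℝ) / 2 - 2) : ℝ) : ℂ) *
    Complex.exp (-(t * s7q C x)) * ψ x) t := by
    intro t ht
    have ht0 : 0 < t := ht
    have h1 : HasDerivAt (fun t : ℝ => ((t ^ ((n:ℝ) / 2) : ℝ) : ℂ))
        (((n:ℝ) / 2 * t ^ ((n:ℝ) / 2 - 1) : ℝ) : ℂ) t :=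
      (Real.hasDerivAt_rpow_const (Or.inl ht0.ne')).ofReal_comp
    have h2 := (h1.const_mul (-4)).mul (hKd t ht0)
    convert! h2 using 1
    have e1 : ∫ x, ((t ^ ((n:ℝ) / 2 - 2) : ℝ) : ℂ) * Complex.exp (-(t * s7q C x)) * ψ x
        = ((t ^ ((n:ℝ) / 2 - 2) : ℝ) : ℂ) * (4 * t ^ 2 * (∫ x, s7q C x * Complex.exp (-(t * s7q C x)) * φ x)
          - 2 * t * n * K t) := by
      simp_rw [mul_assoc ((t ^ ((n:ℝ) / 2 - 2) : ℝ) : ℂ)]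
      rw [integral_const_mul, hL t]
      simp only [hK]
      rw [← integral_const_mul (4 * (t:ℂ) ^ 2), ← integral_const_mul (2 * (t:ℂ) * n), ← integral_sub]
      · congr 2; ext x; ring
      · exact (hqexpi t).const_mul _
      · exact (hexpi t).const_mul _
    have e2 : t ^ ((n:ℝ) / 2) = t ^ ((n:ℝ) / 2 - 2) * t ^ 2 := by
      rw [← rpow_add_natCast ht0.ne']; congr 1; push_cast; ring
    have e3 : t ^ ((n:ℝ) / 2 - 1) = t ^ ((n:ℝ) / 2 - 2) * t := by
      rw [← rpow_add_one ht0.ne']; congr 1; ring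
    rw [e1, e2, e3]
    push_cast
    ring
  have hKb : ∀ t : ℝ, 0 ≤ t → ‖K t‖ ≤ ∫ x, ‖φ x‖ := by
    intro t ht
    refine norm_integral_le_of_norm_le hφi.norm (Eventually.of_forall fun x => ?_)
    rw [norm_mul, s7_norm_exp]
    refine mul_le_of_le_one_left (norm_nonneg _) ?_
    rw [Real.exp_le_one_iff]
    have := mul_nonneg ht (hq0 x)
    linarith
  have hG0 : G 0 = 0 := by
    simp only [hG]
    rw [zero_rpow (by positivity)]
    simp
  have hcont : ContinuousWithinAt G (Set.Ici 0) 0 := by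
    rw [ContinuousWithinAt, hG0]
    have hb : Tendsto (fun t : ℝ => 4 * t ^ ((n:ℝ)/2) * ∫ x, ‖φ x‖) (𝓝[≥] 0) (𝓝 0) := by
      have : ContinuousAt (fun t : ℝ => 4 * t ^ ((n:ℝ)/2) * ∫ x, ‖φ x‖) 0 :=
        ((Real.continuousAt_rpow_const 0 _ (Or.inr (by positivity))).const_mul 4).mul_const _
      have h := this.tendsto
      rw [zero_rpow (by positivity)] at h
      simp only [mul_zero, zero_mul] at h
      exact h.mono_left nhdsWithin_le_nhds
    refine squeeze_zero_norm' ?_ hb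
    filter_upwards [self_mem_nhdsWithin] with t ht
    have ht0 : 0 ≤ t := ht
    simp only [hG]
    rw [norm_mul, norm_mul, Complex.norm_real, Real.norm_of_nonneg (by positivity), norm_neg]
    have := hKb t ht0
    have h4 : ‖(4:ℂ)‖ = 4 := by simp
    rw [h4]
    gcongr
  have hlim : Tendsto G atTop (𝓝 (-4 * φ 0 * ∫ x, Complex.exp (-s7q C x))) := by
    have hGe : (fun t : ℝ => -4 * ∫ y, Complex.exp (-s7q C y) * φ ((√t)⁻¹ • y)) =ᶠ[atTop] G := by
      filter_upwards [eventually_gt_atTop 0] with t ht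
      have hst : 0 < √t := Real.sqrt_pos.2 ht
      have h1 := Measure.integral_comp_smul (volume : Measure (EuclideanSpace ℝ (Fin n)))
        (fun y => Complex.exp (-s7q C y) * φ ((√t)⁻¹ • y)) (√t)
      simp only [smul_smul, inv_mul_cancel₀ hst.ne', one_smul, s7_q_smul, ← Complex.ofReal_pow,
        Real.sq_sqrt ht.le, finrank_euclideanSpace, Fintype.card_fin] at h1
      have h2 : √t ^ n = t ^ ((n:ℝ)/2) := by
        rw [Real.sqrt_eq_rpow, ← rpow_mul_natCast ht.le]; congr 1; ring
      have h3 : 0 < t ^ ((n:ℝ)/2) := by positivity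
      rw [h2, abs_of_pos (by positivity), Complex.real_smul] at h1
      have h3' : ((t ^ ((n:ℝ)/2) : ℝ) : ℂ) ≠ 0 := by exact_mod_cast h3.ne'
      simp only [hG, hK]
      rw [h1]
      push_cast at h3' ⊢
      field_simp
    refine Tendsto.congr' hGe ?_
    rw [mul_assoc, ← integral_const_mul]
    refine Tendsto.const_mul _ ?_
    refine tendsto_integral_filter_of_dominated_convergence
      (fun x => rexp (-c * ‖x‖ ^ 2) * M) ?_ ?_ ((s7_gauss_int hc).mul_const _) ?_
    · refine Eventually.of_forall fun t => Continuous.aestronglyMeasurable ?_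
      fun_prop
    · refine Eventually.of_forall fun t => Eventually.of_forall fun x => ?_
      rw [norm_mul, Complex.norm_exp]
      gcongr
      · have := hco x
        simp only [Complex.neg_re]; linarith
      · exact hM _
    · refine Eventually.of_forall fun x => ?_
      rw [mul_comm (φ 0)]
      refine Tendsto.const_mul _ ?_
      have : Tendsto (fun t : ℝ => (√t)⁻¹ • x) atTop (𝓝 ((0:ℝ) • x)) :=
        (tendsto_inv_atTop_zero.comp Real.tendsto_sqrt_atTop).smul_const x
      rw [zero_smul] at this
      exact (hφ.tendsto 0).comp this
  have := integral_Ioi_of_hasDerivAt_of_tendsto hcont hGd hFi hlim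
  rw [this, hG0, sub_zero]

theorem s7_area {n : ℕ} (hn : 3 ≤ n) :
    ((n:ℝ) - 2) * sphereArea n * Real.Gamma ((n:ℝ)/2 - 1) = 4 * √π ^ n := by
  have hn' : (3:ℝ) ≤ n := by exact_mod_cast hn
  have : Nonempty (Fin n) := ⟨⟨0, by omega⟩⟩
  have hG : 0 < Real.Gamma ((n:ℝ)/2 - 1) := Real.Gamma_pos_of_pos (by linarith)
  have h1 : Real.Gamma ((n:ℝ)/2 + 1) = (n:ℝ)/2 * (((n:ℝ)/2 - 1) * Real.Gamma ((n:ℝ)/2 - 1)) := by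
    have hne : (n:ℝ)/2 - 1 ≠ 0 := ne_of_gt (by linarith)
    have h0 := Real.Gamma_add_one hne
    rw [sub_add_cancel] at h0
    rw [Real.Gamma_add_one (by positivity), h0]
  have h2 : 0 < (n:ℝ)/2 - 1 := by linarith
  have h3 : (n:ℝ) - 2 = 2 * ((n:ℝ)/2 - 1) := by ring
  have h4 : 0 < Real.Gamma ((n:ℝ)/2 + 1) := Real.Gamma_pos_of_pos (by positivity)
  rw [sphereArea, EuclideanSpace.volume_ball, Fintype.card_fin]
  simp only [ENNReal.ofReal_one, one_pow, one_mul]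
  rw [ENNReal.toReal_ofReal (by positivity), h1, h3]
  have hn0 : (n:ℝ) ≠ 0 := ne_of_gt (by linarith)
  have ha0 := h2.ne'
  have hg0 := hG.ne'
  generalize Real.Gamma ((n:ℝ)/2 - 1) = g at hg0 ⊢
  generalize (n:ℝ)/2 - 1 = a at ha0 ⊢
  field_simp
  try ring

/-- For `n ≥ 3` and a scalar elliptic operator `L = Σ a_{rs} ∂_r∂_s`
with complex coefficients, the symmetric part `A_sym` is invertible, the bilinear form
`⟨A_sym⁻¹ x, x⟩` takes values in the slit plane `ℂ∖(-∞,0]` on `ℝⁿ∖{0}`, and for a suitable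
square root `d` of `det A_sym`, the function
`E(x) = -((n-2) ω_{n-1} d)⁻¹ ⟨A_sym⁻¹ x, x⟩^{(2-n)/2}` is a fundamental solution of `L`
with pole at the origin. -/
theorem statement7
    (n : ℕ) (hn : 3 ≤ n)
    (A : Matrix (Fin n) (Fin n) ℂ)
    (hell : ∀ ξ : EuclideanSpace ℝ (Fin n), ξ ≠ 0 →
      0 < (∑ r, ∑ s, A r s * (ξ r : ℂ) * (ξ s : ℂ)).re)
    (Asym : Matrix (Fin n) (Fin n) ℂ) (hAsym : Asym = ((1 : ℂ) / 2) • (A + A.transpose)) :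
    IsUnit Asym ∧
    (∀ x : EuclideanSpace ℝ (Fin n), x ≠ 0 →
      (∑ r, ∑ s, Asym⁻¹ r s * (x r : ℂ) * (x s : ℂ)) ∈ Complex.slitPlane) ∧
    (∃ d : ℂ, d ^ 2 = Asym.det ∧
      ∀ φ : EuclideanSpace ℝ (Fin n) → ℂ, ContDiff ℝ (⊤ : ℕ∞) φ → HasCompactSupport φ →
        (∫ x : EuclideanSpace ℝ (Fin n),
            (-((((n : ℂ) - 2) * (sphereArea n : ℂ) * d)⁻¹) *
                (∑ r, ∑ s, Asym⁻¹ r s * (x r : ℂ) * (x s : ℂ)) ^ (((2 : ℂ) - (n : ℂ)) / 2))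
              * (∑ r, ∑ s, A r s * pd r (pd s φ) x))
          = φ 0) := by
  have hn' : (3:ℝ) ≤ n := by exact_mod_cast hn
  have : Nonempty (Fin n) := ⟨⟨0, by omega⟩⟩
  have hBt : Asym.transpose = Asym := by
    rw [hAsym]; simp [add_comm]
  have hpos : ∀ x : Fin n → ℝ, x ≠ 0 → 0 < (∑ r, ∑ s, Asym r s * (x r : ℂ) * (x s : ℂ)).re := by
    intro x hx
    have h := hell (WithLp.toLp 2 x) (by simpa using hx)
    refine h.trans_eq ?_
    congr 1
    have h1 : ∑ r, ∑ s, A r s * (x r : ℂ) * (x s : ℂ) = ∑ r, ∑ s, A s r * (x r : ℂ) * (x s : ℂ) := by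
      rw [Finset.sum_comm]
      refine Finset.sum_congr rfl fun r _ => Finset.sum_congr rfl fun s _ => by ring
    have h2 : ∑ r, ∑ s, Asym r s * (x r : ℂ) * (x s : ℂ)
        = (1/2) * (∑ r, ∑ s, A r s * (x r : ℂ) * (x s : ℂ) + ∑ r, ∑ s, A s r * (x r : ℂ) * (x s : ℂ)) := by
      simp only [hAsym, Finset.mul_sum, ← Finset.sum_add_distrib]
      refine Finset.sum_congr rfl fun r _ => Finset.sum_congr rfl fun s _ => ?_
      simp; ring
    rw [h2, ← h1]
    simp only
    ring
  have hU := s7_isUnit Asym hBt hpos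
  have hUd := (Matrix.isUnit_iff_isUnit_det _).1 hU
  set C := Asym⁻¹ with hCdef
  have hCt : C.transpose = C := by rw [hCdef, Matrix.transpose_nonsing_inv, hBt]
  have hCpos := s7_inv_pos Asym hBt hpos
  have hqpos : ∀ x : EuclideanSpace ℝ (Fin n), x ≠ 0 → 0 < (s7q C x).re := by
    intro x hx
    exact hCpos (fun i => x i) (fun h => hx (by ext i; exact congrFun h i))
  refine ⟨hU, fun x hx => Or.inl (hqpos x hx), ?_⟩
  obtain ⟨c, hc, hco⟩ := s7_coercive hn C hqpos
  set J := ∫ x, Complex.exp (-s7q C x) with hJ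
  have hJdet : J ^ 2 * C.det = (π : ℂ) ^ n := by
    have := s7_gauss_det C hCt hCpos
    rw [← this, hJ, ← (PiLp.volume_preserving_toLp (Fin n)).integral_comp
      (MeasurableEquiv.toLp 2 _).measurableEmbedding]
    rfl
  have hdd : Asym.det * C.det = 1 := by
    rw [← Matrix.det_mul, hCdef, Matrix.mul_nonsing_inv _ hUd, Matrix.det_one]
  have hpi : (π : ℂ) ≠ 0 := by exact_mod_cast pi_ne_zero
  have hJ0 : J ≠ 0 := by
    intro h
    rw [h] at hJdet
    simp at hJdet
    exact pow_ne_zero n hpi hJdet.symm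
  set w : ℂ := ((√π ^ n : ℝ) : ℂ) with hw
  have hw0 : w ≠ 0 := by
    rw [hw]; exact_mod_cast (pow_pos (Real.sqrt_pos.2 pi_pos) n).ne'
  have hw2 : w ^ 2 = (π : ℂ) ^ n := by
    rw [hw, ← Complex.ofReal_pow, ← pow_mul, mul_comm, pow_mul, Real.sq_sqrt pi_pos.le]; push_cast; rfl
  refine ⟨J / w, ?_, ?_⟩
  · rw [div_pow, hw2, ← hJdet]
    have hCd0 : C.det ≠ 0 := right_ne_zero_of_mul_eq_one hdd
    field_simp
    rw [mul_comm, hdd]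
  intro φ hφ hφs
  have ha : 0 < (n:ℝ)/2 - 1 := by linarith
  have hΓ0 : (Real.Gamma ((n:ℝ)/2 - 1) : ℂ) ≠ 0 := by
    exact_mod_cast (Real.Gamma_pos_of_pos ha).ne'
  set ψ : EuclideanSpace ℝ (Fin n) → ℂ := fun x => ∑ r, ∑ s, A r s * pd r (pd s φ) x with hψ
  have hψc : Continuous ψ := by
    refine continuous_finsetSum _ fun r _ => continuous_finsetSum _ fun s _ => ?_
    exact continuous_const.mul (s7_contDiff_pd (s7_contDiff_pd hφ s) r).continuous
  have hψs : HasCompactSupport ψ := by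
    refine HasCompactSupport.intro hφs fun x hx => ?_
    simp only [hψ]
    refine Finset.sum_eq_zero fun r _ => Finset.sum_eq_zero fun s _ => ?_
    have h1 : pd r (pd s φ) x = 0 := by
      have hsub : tsupport (pd s φ) ⊆ tsupport φ := by
        unfold pd; exact tsupport_fderiv_apply_subset ℝ _
      have hsub2 : tsupport (pd r (pd s φ)) ⊆ tsupport (pd s φ) := by
        conv_lhs => unfold pd
        exact tsupport_fderiv_apply_subset ℝ _
      exact image_eq_zero_of_notMem_tsupport fun h => hx (hsub (hsub2 h))
    rw [h1, mul_zero]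
  have hmain := s7_main hn C hc hco hψc hψs hφ.continuous hφs (fun t =>
    s7_L A Asym hAsym C hCt (by rw [hCdef, Matrix.mul_nonsing_inv _ hUd]) t hφ hφs)
  have harea := s7_area hn
  have harea' : ((n:ℂ) - 2) * (sphereArea n : ℂ) * (Real.Gamma ((n:ℝ)/2 - 1) : ℂ) = 4 * w := by
    rw [hw]; exact_mod_cast harea
  have hae : ∀ᵐ x : EuclideanSpace ℝ (Fin n), x ≠ 0 := compl_mem_ae_iff.2 (measure_singleton 0)
  set κ : ℂ := ((n:ℂ) - 2) * (sphereArea n : ℂ) with hκ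
  have hκ0 : κ ≠ 0 := by
    intro h
    rw [h, zero_mul] at harea'
    exact hw0 (by simpa using harea'.symm)
  calc _ = ∫ x, (-((κ * (J / w))⁻¹) * (Real.Gamma ((n:ℝ)/2 - 1) : ℂ)⁻¹) *
        ((∫ t in Set.Ioi (0:ℝ), ((t ^ ((n:ℝ) / 2 - 2) : ℝ) : ℂ) * Complex.exp (-(t * s7q C x))) * ψ x) := by
        refine integral_congr_ae ?_
        filter_upwards [hae] with x hx
        have hg := s7_gamma ha (hqpos x hx)
        rw [show (n:ℝ)/2 - 1 - 1 = (n:ℝ)/2 - 2 by ring, Complex.Gamma_ofReal] at hg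
        rw [hg]
        have he : (2 - (n:ℂ)) / 2 = -(((n:ℝ)/2 - 1 : ℝ) : ℂ) := by push_cast; ring
        rw [he]
        change -((κ * (J / w))⁻¹) * s7q C x ^ _ * ψ x = _
        generalize s7q C x ^ (-(((n:ℝ)/2 - 1 : ℝ) : ℂ)) = p
        have hi := inv_mul_cancel₀ hΓ0
        linear_combination ((κ * (J / w))⁻¹ * p * ψ x) * hi
    _ = φ 0 := by
        rw [integral_const_mul, hmain]
        have : (Real.Gamma ((n:ℝ)/2 - 1) : ℂ) = 4 * w / κ := by
          rw [← harea']; field_simp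
        rw [this, ← hJ]
        field_simp

end
end
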